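/- arXiv:1611.01313 — 2 statements merged into one kernel-verified Lean document; each statement's English description precedes it below -/
import Mathlib

section
/- Let F be a free group and R, S, T normal subgroups of F with R ⊆ S and R ⊆ T, and let 𝐫, 𝐬, 𝐭 be the two-sided ideals of ℤ[F] generated by the augmentation ideals of R, S, T. If a ∈ D(F, 𝐫𝐬𝐬𝐭 + 𝐭𝐬𝐬𝐫), then a² ∈ D(F, 𝐫𝐬𝐬𝐬 + 𝐬𝐬𝐬𝐫 + 𝐭𝐬𝐬𝐬 + 𝐬𝐬𝐬𝐭 + Δ([S,S])𝐬) and a⁶ ∈ [S, S, S, RT], where Δ([S,S])𝐬 denotes the additive span of products (c−1)·α with c ∈ [S,S] and α ∈ 𝐬, [S,S,S,RT] = [[[S,S],S],RT], and RT is the subgroup generated by R and T. -/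
/-! Group-ring preliminaries: for a subgroup `N` of `F`, `aug N` is the additive
subgroup `Δ(N)` of `ℤ[F]` generated by `{n - 1 : n ∈ N}`, and `augI N = Δ(N)ℤ[F]`
is the corresponding (for normal `N` two-sided) ideal of `ℤ[F]`.  Products of
submodules are additive spans of products, as in the paper. -/

/-- the augmentation ideal `Δ(N)` of a subgroup `N ≤ F`, inside `ℤ[F]` -/
noncomputable def aug {F : Type} [Group F] (N : Subgroup F) :
    Submodule ℤ (MonoidAlgebra ℤ F) :=
  Submodule.span ℤ {x | ∃ n ∈ N, x = (MonoidAlgebra.of ℤ F n) - 1}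

/-- the ideal `𝐧 = Δ(N)ℤ[F]` of `ℤ[F]` -/
noncomputable def augI {F : Type} [Group F] (N : Subgroup F) :
    Submodule ℤ (MonoidAlgebra ℤ F) :=
  aug N * ⊤

section Helpers

set_option linter.all false

open scoped commutatorElement

/-! ## Linear functionals on the group ring -/

/-- the divisible coefficient group `ℚ/ℤ` -/
abbrev QZ : Type := AddCircle (1 : ℚ)

/-- functionals on the integral group ring with values in `ℚ/ℤ` -/
abbrev Du (F : Type) [Group F] : Type := MonoidAlgebra ℤ F →ₗ[ℤ] QZ

/-- group element in the group ring -/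
noncomputable abbrev oo {F : Type} [Group F] (f : F) : MonoidAlgebra ℤ F :=
  MonoidAlgebra.of ℤ F f

theorem oo_span {F : Type} [Group F] :
    Submodule.span ℤ (Set.range (oo (F := F))) = ⊤ := by
  rw [eq_top_iff]
  intro x _
  induction x using MonoidAlgebra.induction_linear with
  | zero => exact Submodule.zero_mem _
  | add x y hx hy => exact Submodule.add_mem _ (hx trivial) (hy trivial)
  | single m r =>
    have : MonoidAlgebra.single m r = r • oo m := by
      simp [oo, MonoidAlgebra.of_apply, MonoidAlgebra.smul_single]
    rw [this]
    exact Submodule.smul_mem _ _ (Submodule.subset_span ⟨m, rfl⟩)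

/-- linear extension of a function on the group -/
theorem exists_Lx {F : Type} [Group F] {M : Type} [AddCommGroup M] (g : F → M) :
    ∃ G : MonoidAlgebra ℤ F →ₗ[ℤ] M, ∀ f, G (oo f) = g f := by
  refine ⟨(Finsupp.lsum ℤ (fun f => (LinearMap.toSpanSingleton ℤ M (g f)))).comp
    (MonoidAlgebra.coeffLinearEquiv ℤ).toLinearMap, fun f => ?_⟩
  simp [oo, MonoidAlgebra.of_apply]

/-- linear extension of a function on the group -/
noncomputable def Lx {F : Type} [Group F] {M : Type} [AddCommGroup M] (g : F → M) :
    MonoidAlgebra ℤ F →ₗ[ℤ] M := (exists_Lx g).choose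

theorem Lx_oo {F : Type} [Group F] {M : Type} [AddCommGroup M] (g : F → M) (f : F) :
    Lx g (oo f) = g f := (exists_Lx g).choose_spec f

theorem Lx_one {F : Type} [Group F] {M : Type} [AddCommGroup M] (g : F → M) :
    Lx g 1 = g 1 := by
  rw [← Lx_oo g 1, oo, map_one (MonoidAlgebra.of ℤ F)]

theorem du_ext {F : Type} [Group F] {M : Type} [AddCommGroup M]
    {G H : MonoidAlgebra ℤ F →ₗ[ℤ] M}
    (h : ∀ f, G (oo f) = H (oo f)) : G = H := by
  apply LinearMap.ext_on_range (v := oo) oo_span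
  exact h

/-- a linear identity may be checked on group elements -/
theorem du_ext_mul {F : Type} [Group F] {M : Type} [AddCommGroup M]
    (G H : MonoidAlgebra ℤ F →ₗ[ℤ] M)
    (k k' : MonoidAlgebra ℤ F) (h : ∀ f, G (k * oo f) = H (k' * oo f)) (x : MonoidAlgebra ℤ F) :
    G (k * x) = H (k' * x) := by
  have : G.comp (LinearMap.mulLeft ℤ k) = H.comp (LinearMap.mulLeft ℤ k') :=
    du_ext (fun f => h f)
  exact congrArg (fun φ => φ x) this

theorem du_ext_zero {F : Type} [Group F] {M : Type} [AddCommGroup M]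
    (G : MonoidAlgebra ℤ F →ₗ[ℤ] M)
    (k : MonoidAlgebra ℤ F) (h : ∀ f, G (k * oo f) = 0) (x : MonoidAlgebra ℤ F) :
    G (k * x) = 0 :=
  du_ext_mul G 0 k k (fun f => by rw [h f]; rfl) x

theorem oo_mul {F : Type} [Group F] (f g : F) : oo (f * g) = oo f * oo g := map_mul _ _ _

theorem oo_one {F : Type} [Group F] : oo (1 : F) = 1 := map_one _

/-! ## Cocycles -/

/-- representatives of cosets of a subgroup, from the left -/
theorem exists_rep {F : Type} [Group F] (K : Subgroup F) :
    ∃ rep : F → F, (∀ f, (rep f)⁻¹ * f ∈ K) ∧ (∀ f, ∀ k ∈ K, rep (f * k) = rep f) := by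
  refine ⟨fun f => (QuotientGroup.mk f : F ⧸ K).out, fun f => ?_, fun f k hk => ?_⟩
  · rw [← QuotientGroup.eq]
    exact Quotient.out_eq _
  · have : (QuotientGroup.mk (f * k) : F ⧸ K) = QuotientGroup.mk f := by
      rw [QuotientGroup.eq]
      simpa [mul_assoc] using K.inv_mem hk
    simp only [this]

/-- Lemma Psi: integrate a cocycle to a functional. -/
theorem exists_Psi {F : Type} [Group F] (T : Subgroup F) (D : F → Du F)
    (hD : ∀ t ∈ T, ∀ t' ∈ T, ∀ x, D (t * t') x = D t x + D t' (x * oo t)) :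
    ∃ Ψ : Du F, ∀ t ∈ T, ∀ x, Ψ (x * (oo t - 1)) = D t x := by
  obtain ⟨rep, h1, h2⟩ := exists_rep T
  refine ⟨Lx (fun f => D ((rep f)⁻¹ * f) (oo (rep f))), fun t ht x => ?_⟩
  have key : (Lx (fun f => D ((rep f)⁻¹ * f) (oo (rep f)))).comp
      (LinearMap.mulRight ℤ (oo t - 1)) = D t := by
    refine du_ext (fun f => ?_)
    simp only [LinearMap.comp_apply, LinearMap.mulRight_apply, mul_sub, mul_one, map_sub,
      ← oo_mul, Lx_oo]
    rw [h2 f t ht, ← mul_assoc, hD _ (h1 f) _ ht, ← oo_mul]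
    simp
  exact congrArg (fun φ => φ x) key

theorem free_closure {G : Type} [Group G] [IsFreeGroup G] :
    Subgroup.closure (Set.range (IsFreeGroup.of (G := G))) = ⊤ := by
  rw [eq_top_iff]
  intro x _
  let E := Subgroup.closure (Set.range (IsFreeGroup.of (G := G)))
  let r : G →* E := IsFreeGroup.lift (fun i => ⟨IsFreeGroup.of i, Subgroup.subset_closure ⟨i, rfl⟩⟩)
  have : E.subtype.comp r = MonoidHom.id G := by
    apply IsFreeGroup.ext_hom
    intro i
    simp [r]
  have h2 := congrArg (fun φ => φ x) this
  simp only [MonoidHom.comp_apply, MonoidHom.id_apply] at h2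
  rw [← h2]
  exact (r x).2

/-- Lemma FL: cocycles on a free subgroup satisfying prescribed constraints. -/
theorem exists_cocycle {F : Type} [Group F] (T : Subgroup F) [IsFreeGroup T]
    (Con : MonoidAlgebra ℤ F → (F → QZ) → Prop)
    (h1 : ∀ k c, Con k c → c 1 = 0)
    (hact : ∀ k c, Con k c → ∀ t ∈ T, ∃ c', Con (k * oo t) c' ∧
      ∀ t' ∈ T, c (t * t') = c t + c' t')
    (hne : ∀ t ∈ T, ∃ g : Du F, ∀ k c, Con k c → g k = c t) :
    ∃ D : F → Du F, (∀ t ∈ T, ∀ t' ∈ T, ∀ x, D (t * t') x = D t x + D t' (x * oo t)) ∧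
      ∀ t ∈ T, ∀ k c, Con k c → D t k = c t := by
  classical
  -- affine permutations of the dual
  let aff : Du F → F → Equiv.Perm (Du F) := fun d t =>
    { toFun := fun m => d + m.comp (LinearMap.mulRight ℤ (oo t))
      invFun := fun m => (m - d).comp (LinearMap.mulRight ℤ (oo t⁻¹))
      left_inv := fun m => by
        refine du_ext (fun f => ?_)
        simp [mul_assoc]
      right_inv := fun m => by
        refine du_ext (fun f => ?_)
        simp [mul_assoc] }
  choose! g hg using hne
  let φ : T →* Equiv.Perm (Du F) :=
    IsFreeGroup.lift (fun i => aff (g (IsFreeGroup.of (G := T) i)) (IsFreeGroup.of (G := T) i))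
  have hφ : ∀ t : T, ∃ d : Du F, (∀ m, φ t m = d + m.comp (LinearMap.mulRight ℤ (oo (t : F)))) ∧
      ∀ k c, Con k c → d k = c t := by
    intro t
    let E : Subgroup T :=
      { carrier := {t | ∃ d : Du F, (∀ m, φ t m = d + m.comp (LinearMap.mulRight ℤ (oo (t : F)))) ∧
          ∀ k c, Con k c → d k = c t}
        one_mem' := ⟨0, fun m => by
          refine du_ext (fun f => ?_)
          simp [oo], fun k c hc => by simp [h1 k c hc]⟩
        mul_mem' := by
          rintro s t ⟨d, hd1, hd2⟩ ⟨e, he1, he2⟩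
          refine ⟨d + e.comp (LinearMap.mulRight ℤ (oo (s : F))), fun m => ?_, fun k c hc => ?_⟩
          · rw [map_mul, Equiv.Perm.mul_apply, he1, hd1]
            refine du_ext (fun f => ?_)
            simp [mul_assoc, add_assoc]
          · obtain ⟨c', hc', hcc⟩ := hact k c hc s s.2
            simp only [LinearMap.add_apply, LinearMap.comp_apply, LinearMap.mulRight_apply]
            rw [hd2 k c hc, he2 _ _ hc', Subgroup.coe_mul, hcc t t.2]
        inv_mem' := by
          rintro s ⟨d, hd1, hd2⟩
          refine ⟨- d.comp (LinearMap.mulRight ℤ (oo (s : F)⁻¹)), fun m => ?_, fun k c hc => ?_⟩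
          · rw [map_inv, Equiv.Perm.inv_eq_iff_eq, hd1]
            refine du_ext (fun f => ?_)
            simp [mul_assoc]
          · obtain ⟨c', hc', hcc⟩ := hact k c hc (s : F)⁻¹ (T.inv_mem s.2)
            simp only [LinearMap.neg_apply, LinearMap.comp_apply, LinearMap.mulRight_apply]
            rw [hd2 _ _ hc', Subgroup.coe_inv]
            have := hcc s s.2
            rw [inv_mul_cancel, h1 k c hc] at this
            rw [eq_comm, eq_neg_iff_add_eq_zero, ← this] }
    have hE : E = ⊤ := by
      rw [eq_top_iff]
      have hcl : Subgroup.closure (Set.range (IsFreeGroup.of (G := T))) = ⊤ :=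
        free_closure
      rw [← hcl, Subgroup.closure_le]
      rintro _ ⟨i, rfl⟩
      refine ⟨g (IsFreeGroup.of (G := T) i), fun m => ?_, fun k c hc => hg _ (IsFreeGroup.of (G := T) i).2 k c hc⟩
      simp only [φ, IsFreeGroup.lift_of]
      rfl
    have : t ∈ E := hE ▸ Subgroup.mem_top t
    exact this
  choose d hd1 hd2 using hφ
  refine ⟨fun f => if hf : f ∈ T then d ⟨f, hf⟩ else 0, fun t ht t' ht' x => ?_, fun t ht k c hc => ?_⟩
  · have e1 : d (⟨t, ht⟩ * ⟨t', ht'⟩) = φ (⟨t, ht⟩ * ⟨t', ht'⟩) 0 := by rw [hd1]; ext; simp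
    have e2 : φ (⟨t, ht⟩ * ⟨t', ht'⟩) 0 = d ⟨t, ht⟩ + (d ⟨t', ht'⟩).comp (LinearMap.mulRight ℤ (oo t)) := by
      rw [map_mul, Equiv.Perm.mul_apply, hd1, hd1]
      refine du_ext (fun f => ?_)
      simp
    have e3 := e1.trans e2
    have hm := T.mul_mem ht ht'
    simp only [dif_pos ht, dif_pos ht', dif_pos hm]
    exact congrArg (fun φ => φ x) e3
  · simp only [dif_pos ht]
    exact hd2 ⟨t, ht⟩ k c hc

/-! ## Subgroups of free abelian groups are free -/

theorem free_submodule_finsupp {ι : Type} (N : Submodule ℤ (ι →₀ ℤ)) : Module.Free ℤ N := by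
  classical
  letI : LinearOrder ι := WellOrderingRel.isWellOrder.linearOrder
  haveI : WellFoundedLT ι := (WellOrderingRel.isWellOrder (α := ι)).toIsWellFounded
  let Ni : ι → Submodule ℤ (ι →₀ ℤ) := fun i => N ⊓ Finsupp.supported ℤ ℤ (Set.Iic i)
  let I : ι → Submodule ℤ ℤ := fun i => (Ni i).map (Finsupp.lapply i)
  have hgen : ∀ i, ∃ y ∈ Ni i, ∀ x ∈ Ni i, ∃ c : ℤ, x i = c * y i := by
    intro i
    obtain ⟨d, hd⟩ := (IsPrincipalIdealRing.principal (I i)).principal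
    have hdI : d ∈ I i := by rw [hd]; exact Submodule.mem_span_singleton_self d
    obtain ⟨y, hy, hyd⟩ := hdI
    refine ⟨y, hy, fun x hx => ?_⟩
    have : x i ∈ I i := ⟨x, hx, rfl⟩
    rw [hd, Submodule.mem_span_singleton] at this
    obtain ⟨c, hc⟩ := this
    refine ⟨c, ?_⟩
    rw [← hc, ← hyd]
    rfl
  choose y hyN hy using hgen
  have hmem : ∀ i j, i < j → y i j = 0 := by
    intro i j hij
    by_contra h
    have h1 := (Finsupp.mem_supported ℤ _).1 (hyN i).2
    have h2 : j ∈ Set.Iic i := h1 (by simpa using h)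
    exact absurd hij (not_lt.2 h2)
  let v : {i // y i i ≠ 0} → N := fun i => ⟨y i, (hyN i).1⟩
  have hli : LinearIndependent ℤ v := by
    rw [linearIndependent_iff]
    intro c hc
    by_contra hne
    have hs : c.support.Nonempty := Finsupp.support_nonempty_iff.2 hne
    let j := c.support.max' hs
    have hj : j ∈ c.support := Finset.max'_mem _ _
    have h1 := congrArg (fun x : N => (x : ι →₀ ℤ) j) hc
    simp only [Finsupp.linearCombination_apply, Finsupp.sum, Submodule.coe_sum, Finsupp.finsetSum_apply,
      ZeroMemClass.coe_zero, Finsupp.coe_zero, Pi.zero_apply] at h1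
    rw [Finset.sum_eq_single j] at h1
    · simp only [v, SetLike.val_smul, Finsupp.smul_apply, smul_eq_mul, mul_eq_zero] at h1
      rcases h1 with h1 | h1
      · exact (Finsupp.mem_support_iff.1 hj) h1
      · exact j.2 h1
    · intro k hk hkj
      have : k < j := lt_of_le_of_ne (Finset.le_max' _ _ hk) hkj
      simp [v, hmem k j this]
    · intro h; exact absurd hj h
  have hsp : ∀ i, ∀ x (hx : x ∈ Ni i), (⟨x, hx.1⟩ : N) ∈ Submodule.span ℤ (Set.range v) := by
    intro i
    induction i using WellFoundedLT.induction with
    | ind i ih =>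
      intro x hx
      have hred : ∃ z ∈ Submodule.span ℤ (Set.range v), (x - (z : ι →₀ ℤ)) ∈ Ni i ∧
          (x - (z : ι →₀ ℤ)) i = 0 := by
        obtain ⟨c, hc⟩ := hy i x hx
        by_cases h0 : y i i = 0
        · exact ⟨0, Submodule.zero_mem _, by simpa using hx, by simp [hc, h0]⟩
        · refine ⟨c • v ⟨i, h0⟩, Submodule.smul_mem _ _ (Submodule.subset_span ⟨_, rfl⟩), ?_, ?_⟩
          · exact Submodule.sub_mem _ hx (Submodule.smul_mem _ _ (hyN i))
          · simp [v, hc]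
      obtain ⟨z, hz, h1, h2⟩ := hred
      have hw : (⟨x - z, h1.1⟩ : N) ∈ Submodule.span ℤ (Set.range v) := by
        by_cases h0 : x - (z : ι →₀ ℤ) = 0
        · have : (⟨x - z, h1.1⟩ : N) = 0 := Subtype.ext h0
          rw [this]; exact Submodule.zero_mem _
        · have hs : (x - (z : ι →₀ ℤ)).support.Nonempty := Finsupp.support_nonempty_iff.2 h0
          let j := (x - (z : ι →₀ ℤ)).support.max' hs
          have hj : j ∈ (x - (z : ι →₀ ℤ)).support := Finset.max'_mem _ _
          have hji : j ≤ i := (Finsupp.mem_supported ℤ _).1 h1.2 hj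
          have hlt : j < i := lt_of_le_of_ne hji (fun h => by
            rw [h] at hj
            exact Finsupp.mem_support_iff.1 hj h2)
          refine ih j hlt (x - z) ⟨h1.1, ?_⟩
          rw [SetLike.mem_coe, Finsupp.mem_supported]
          intro k hk
          exact Finset.le_max' _ _ hk
      have : (⟨x, hx.1⟩ : N) = ⟨x - z, h1.1⟩ + z := Subtype.ext (by simp)
      rw [this]
      exact Submodule.add_mem _ hw hz
  have hsp' : ⊤ ≤ Submodule.span ℤ (Set.range v) := by
    intro x _
    by_cases h0 : (x : ι →₀ ℤ) = 0
    · have : x = 0 := Subtype.ext h0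
      rw [this]; exact Submodule.zero_mem _
    · have hs : (x : ι →₀ ℤ).support.Nonempty := Finsupp.support_nonempty_iff.2 h0
      refine hsp ((x : ι →₀ ℤ).support.max' hs) x ⟨x.2, ?_⟩
      rw [SetLike.mem_coe, Finsupp.mem_supported]
      intro k hk
      exact Finset.le_max' _ _ hk
  exact Module.Free.of_basis (Module.Basis.mk hli hsp')

theorem free_submodule {V : Type} [AddCommGroup V] [Module.Free ℤ V] (N : Submodule ℤ V) :
    Module.Free ℤ N := by
  let b := Module.Free.chooseBasis ℤ V
  haveI := free_submodule_finsupp (N.map b.repr.toLinearMap)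
  exact Module.Free.of_equiv (b.repr.submoduleMap N).symm

theorem free_abelianization (S : Type) [Group S] [IsFreeGroup S] :
    Module.Free ℤ (Additive (Abelianization S)) := by
  let e1 : Additive (Abelianization S) ≃+ Additive (Abelianization (FreeGroup (IsFreeGroup.Generators S))) :=
    MulEquiv.toAdditive (MulEquiv.abelianizationCongr (IsFreeGroup.toFreeGroup S))
  let e2 : Additive (Abelianization (FreeGroup (IsFreeGroup.Generators S))) ≃+
    (IsFreeGroup.Generators S →₀ ℤ) := FreeAbelianGroup.equivFinsupp _
  exact Module.Free.of_equiv (e1.trans e2).symm.toIntLinearEquiv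

/-! ## Bilinear algebra over `ℤ` with values in `ℚ/ℤ` -/

abbrev Bil (X Y : Type) [AddCommGroup X] [AddCommGroup Y] : Type := X →ₗ[ℤ] Y →ₗ[ℤ] QZ

theorem exists_bil {X Y : Type} [AddCommGroup X] [AddCommGroup Y] (f : X → Y → QZ)
    (h1 : ∀ x x' y, f (x + x') y = f x y + f x' y)
    (h2 : ∀ x y y', f x (y + y') = f x y + f x y') :
    ∃ b : Bil X Y, ∀ x y, b x y = f x y := by
  let g : X → (Y →ₗ[ℤ] QZ) := fun x => (AddMonoidHom.mk' (f x) (h2 x)).toIntLinearMap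
  refine ⟨(AddMonoidHom.mk' g (fun x x' => ?_)).toIntLinearMap, fun x y => rfl⟩
  ext y
  exact h1 x x' y

theorem alt_split {V : Type} [AddCommGroup V] [Module.Free ℤ V] (e : Bil V V)
    (he : ∀ v, e v v = 0) : ∃ b : Bil V V, ∀ x y, b x y - b y x = e x y := by
  classical
  let B := Module.Free.chooseBasis ℤ V
  letI : LinearOrder (Module.Free.ChooseBasisIndex ℤ V) :=
    WellOrderingRel.isWellOrder.linearOrder
  have hanti : ∀ x y, e x y = - e y x := by
    intro x y
    have h := he (x + y)
    simp only [map_add, LinearMap.add_apply, he, zero_add, add_zero] at h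
    exact eq_neg_of_add_eq_zero_right h
  let b : Bil V V := B.constr ℤ (fun i => B.constr ℤ (fun j => if i < j then e (B i) (B j) else 0))
  have key : b - b.flip = e := by
    refine LinearMap.ext_basis B B (fun i j => ?_)
    simp only [LinearMap.sub_apply, LinearMap.flip_apply, b, Module.Basis.constr_basis]
    rcases lt_trichotomy i j with h | h | h
    · simp [h, not_lt.2 h.le]
    · subst h; simp [he]
    · simp only [not_lt.2 h.le, h, if_true, if_false, zero_sub]
      rw [hanti (B i)]
  exact ⟨b, fun x y => by rw [← key]; rfl⟩

theorem QZ_half (c : QZ) : ∃ d : QZ, d + d = c := by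
  induction c using QuotientAddGroup.induction_on with
  | H q => exact ⟨((q / 2 : ℚ) : QZ), by rw [← AddCircle.coe_add]; congr 1; ring⟩

theorem sym_split {V : Type} [AddCommGroup V] [Module.Free ℤ V] (s : Bil V V)
    (hs : ∀ x y, s x y = s y x) : ∃ l : Bil V V, ∀ x y, l x y + l y x = s x y := by
  classical
  let B := Module.Free.chooseBasis ℤ V
  letI : LinearOrder (Module.Free.ChooseBasisIndex ℤ V) :=
    WellOrderingRel.isWellOrder.linearOrder
  choose hf hhf using QZ_half
  let b : Bil V V := B.constr ℤ (fun i => B.constr ℤ (fun j =>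
    if i < j then s (B i) (B j) else if i = j then hf (s (B i) (B j)) else 0))
  have key : b + b.flip = s := by
    refine LinearMap.ext_basis B B (fun i j => ?_)
    simp only [LinearMap.add_apply, LinearMap.flip_apply, b, Module.Basis.constr_basis]
    rcases lt_trichotomy i j with h | h | h
    · simp [h, not_lt.2 h.le, h.ne']
    · subst h; simp [hhf]
    · simp only [not_lt.2 h.le, h, if_true, if_false, h.ne', zero_add]
      rw [hs (B i)]
  exact ⟨b, fun x y => by rw [← key]; rfl⟩

theorem lin_factor {X Y : Type} [AddCommGroup X] [AddCommGroup Y] (f : X →ₗ[ℤ] Y)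
    (g : X →ₗ[ℤ] QZ) (h : ∀ x, f x = 0 → g x = 0) :
    ∃ k : Y →ₗ[ℤ] QZ, ∀ x, k (f x) = g x := by
  let i : (X ⧸ LinearMap.ker f) →ₗ[ℤ] Y := (LinearMap.ker f).liftQ f le_rfl
  have hi : Function.Injective i := by
    rw [← LinearMap.ker_eq_bot]
    exact Submodule.ker_liftQ_eq_bot _ _ _ le_rfl
  let q : (X ⧸ LinearMap.ker f) →ₗ[ℤ] QZ := (LinearMap.ker f).liftQ g (fun x hx => h x hx)
  obtain ⟨k, hk⟩ := CharacterModule.dual_surjective_of_injective i hi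
    (q.toAddMonoidHom : CharacterModule (X ⧸ LinearMap.ker f))
  refine ⟨AddMonoidHom.toIntLinearMap k, fun x => ?_⟩
  have := congrArg (fun (c : CharacterModule (X ⧸ LinearMap.ker f)) => c (Submodule.Quotient.mk x)) hk
  exact this

theorem bil_extend_right {Z Y V : Type} [AddCommGroup Z] [AddCommGroup Y] [AddCommGroup V]
    [Module.Free ℤ Z] (ι : Y →ₗ[ℤ] V) (hι : Function.Injective ι) (l : Bil Z Y) :
    ∃ L : Bil Z V, ∀ z y, L z (ι y) = l z y := by
  let r : (V →ₗ[ℤ] QZ) →ₗ[ℤ] (Y →ₗ[ℤ] QZ) := LinearMap.lcomp ℤ QZ ι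
  have hr : Function.Surjective r := by
    intro g
    obtain ⟨k, hk⟩ := lin_factor ι g (fun x hx => by
      have : x = 0 := hι (by rw [hx, map_zero])
      rw [this, map_zero])
    exact ⟨k, LinearMap.ext hk⟩
  obtain ⟨L, hL⟩ := Module.projective_lifting_property r l hr
  refine ⟨L, fun z y => ?_⟩
  have := congrArg (fun φ => φ z y) hL
  exact this

/-- Lemma L1 -/
theorem bil_L1 {Y V : Type} [AddCommGroup Y] [AddCommGroup V]
    [Module.Free ℤ Y] [Module.Free ℤ V] (ι : Y →ₗ[ℤ] V) (hι : Function.Injective ι)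
    (e : Bil V V) (he : ∀ v, e v v = 0) (ψ : Bil Y Y)
    (hψ : ∀ x y, ψ x y - ψ y x = e (ι x) (ι y)) :
    ∃ b : Bil V V, (∀ x y, b x y - b y x = e x y) ∧ ∀ x y, b (ι x) (ι y) = ψ x y := by
  obtain ⟨b1, hb1⟩ := alt_split e he
  let s : Bil Y Y := ψ - (b1.comp ι).compl₂ ι
  have hs1 : ∀ x y, s x y = ψ x y - b1 (ι x) (ι y) := fun x y => rfl
  have hs : ∀ x y, s x y = s y x := by
    intro x y
    rw [hs1, hs1, sub_eq_sub_iff_sub_eq_sub, hψ, hb1]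
  obtain ⟨l, hl⟩ := sym_split s hs
  obtain ⟨l1, hl1⟩ := bil_extend_right ι hι l
  obtain ⟨l2, hl2⟩ := bil_extend_right ι hι l1.flip
  refine ⟨b1 + l2 + l2.flip, fun x y => ?_, fun x y => ?_⟩
  · rw [← hb1]
    simp only [LinearMap.add_apply, LinearMap.flip_apply]
    abel
  · simp only [LinearMap.add_apply, LinearMap.flip_apply, hl2, hl1]
    have := hl x y
    rw [hs1] at this
    rw [add_assoc, add_comm (l y x), this]
    abel

/-- Lemma for step 3 -/
theorem bil_I4 {X Y : Type} [AddCommGroup X] [AddCommGroup Y] [Module.Free ℤ Y]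
    (π : X →ₗ[ℤ] Y) (hπ : Function.Surjective π) (z : Bil X X) (hz : ∀ x, z x x = 0)
    (hz2 : ∀ x y, π x = 0 → π y = 0 → z x y = 0) :
    ∃ l : Bil Y X, ∀ u v, l (π u) v - l (π v) u = z u v := by
  obtain ⟨σ, hσ⟩ := Module.projective_lifting_property π LinearMap.id hπ
  have hσ' : ∀ y, π (σ y) = y := fun y => congrArg (fun φ => φ y) hσ
  have hanti : ∀ x y, z x y = - z y x := by
    intro x y
    have h := hz (x + y)
    simp only [map_add, LinearMap.add_apply, hz, zero_add, add_zero] at h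
    exact eq_neg_of_add_eq_zero_right h
  let e : Bil Y Y := (z.comp σ).compl₂ σ
  obtain ⟨lσ, hlσ⟩ := alt_split e (fun v => hz (σ v))
  have he : ∀ x y, e x y = z (σ x) (σ y) := fun x y => rfl
  refine ⟨z.comp σ - (z.comp σ).compl₂ (σ.comp π) + lσ.compl₂ π, fun u v => ?_⟩
  simp only [LinearMap.add_apply, LinearMap.sub_apply, LinearMap.comp_apply, LinearMap.compl₂_apply]
  have h1 := hlσ (π u) (π v)
  rw [he] at h1
  have h2 := hz2 (u - σ (π u)) (v - σ (π v)) (by rw [map_sub, hσ', sub_self])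
    (by rw [map_sub, hσ', sub_self])
  simp only [map_sub, LinearMap.sub_apply] at h2
  have h3 := hanti (σ (π v)) u
  have h4 := hanti (σ (π v)) (σ (π u))
  rw [h3, h4]
  have h5 : lσ (π u) (π v) = z (σ (π u)) (σ (π v)) + lσ (π v) (π u) := by rw [← h1]; abel
  rw [h5]
  have h6 : z u v = z u (σ (π v)) + (z (σ (π u)) v - z (σ (π u)) (σ (π v))) := by
    rw [← sub_eq_zero, ← h2]; abel
  rw [h6]
  abel

/-! ## Homomorphisms and bilinear maps on subgroups -/

/-- `h` is additive on the subgroup `A` -/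
def HomOn {F : Type} [Group F] (A : Subgroup F) (h : F → QZ) : Prop :=
  ∀ x ∈ A, ∀ y ∈ A, h (x * y) = h x + h y

/-- `b` is biadditive on `A × B` -/
def BiOn {F : Type} [Group F] (A B : Subgroup F) (b : F → F → QZ) : Prop :=
  (∀ z ∈ B, HomOn A (fun x => b x z)) ∧ (∀ z ∈ A, HomOn B (b z))

namespace HomOn

variable {F : Type} [Group F] {A : Subgroup F} {h : F → QZ}

theorem mono {B : Subgroup F} (H : HomOn A h) (hB : B ≤ A) : HomOn B h :=
  fun x hx y hy => H x (hB hx) y (hB hy)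

theorem one (H : HomOn A h) : h 1 = 0 := by
  have := H 1 A.one_mem 1 A.one_mem
  simpa using this

theorem inv (H : HomOn A h) {x : F} (hx : x ∈ A) : h x⁻¹ = - h x := by
  have := H x hx x⁻¹ (A.inv_mem hx)
  rw [mul_inv_cancel, H.one] at this
  exact (neg_eq_of_add_eq_zero_right this.symm).symm

theorem conj (H : HomOn A h) {x y : F} (hx : x ∈ A) (hy : y ∈ A) : h (y * x * y⁻¹) = h x := by
  rw [H _ (A.mul_mem hy hx) _ (A.inv_mem hy), H _ hy _ hx, H.inv hy]
  abel

theorem comm (H : HomOn A h) {x y : F} (hx : x ∈ A) (hy : y ∈ A) : h ⁅x, y⁆ = 0 := by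
  rw [commutatorElement_def, H _ (A.mul_mem (A.mul_mem hx hy) (A.inv_mem hx)) _ (A.inv_mem hy),
    H.conj hy hx, H.inv hy]
  abel

theorem pow (H : HomOn A h) {x : F} (hx : x ∈ A) (n : ℕ) : h (x ^ n) = n • h x := by
  induction n with
  | zero => simp [H.one]
  | succ n ih => rw [pow_succ, H _ (A.pow_mem hx n) _ hx, ih, succ_nsmul]

/-- two additive functions agreeing on generators agree -/
theorem eq_closure {h' : F → QZ} (H : HomOn A h) (H' : HomOn A h') (s : Set F)
    (hs : ∀ x ∈ s, x ∈ A ∧ h x = h' x) {x : F} (hx : x ∈ Subgroup.closure s) : h x = h' x := by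
  let E : Subgroup F :=
    { carrier := {x | x ∈ A ∧ h x = h' x}
      one_mem' := ⟨A.one_mem, by rw [H.one, H'.one]⟩
      mul_mem' := by
        rintro x y ⟨hx, hx'⟩ ⟨hy, hy'⟩
        exact ⟨A.mul_mem hx hy, by rw [H x hx y hy, H' x hx y hy, hx', hy']⟩
      inv_mem' := by
        rintro x ⟨hx, hx'⟩
        exact ⟨A.inv_mem hx, by rw [H.inv hx, H'.inv hx, hx']⟩ }
  have : Subgroup.closure s ≤ E := by
    rw [Subgroup.closure_le]
    exact hs
  exact (this hx).2

theorem eq_commutator {B B' : Subgroup F} {h' : F → QZ} (H : HomOn A h) (H' : HomOn A h')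
    (hA : ⁅B, B'⁆ ≤ A)
    (hs : ∀ x ∈ B, ∀ y ∈ B', h ⁅x, y⁆ = h' ⁅x, y⁆) {x : F} (hx : x ∈ ⁅B, B'⁆) : h x = h' x := by
  rw [Subgroup.commutator_def] at hx
  refine H.eq_closure H' _ ?_ hx
  rintro _ ⟨p, hp, q, hq, rfl⟩
  exact ⟨hA (Subgroup.commutator_mem_commutator hp hq), hs p hp q hq⟩

theorem zero_on : HomOn A (fun _ => (0 : QZ)) := fun _ _ _ _ => by simp

theorem zero_commutator (H : HomOn A h) {x : F} (hx : x ∈ ⁅A, A⁆) : h x = 0 :=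
  H.eq_commutator zero_on (Subgroup.commutator_le_self A)
    (fun _ hx _ hy => H.comm hx hy) hx

theorem add {h' : F → QZ} (H : HomOn A h) (H' : HomOn A h') : HomOn A (fun x => h x + h' x) := by
  intro x hx y hy
  simp only [H x hx y hy, H' x hx y hy]
  abel

theorem smul (n : ℤ) (H : HomOn A h) : HomOn A (fun x => n • h x) := by
  intro x hx y hy
  simp only [H x hx y hy, smul_add]

theorem sub {h' : F → QZ} (H : HomOn A h) (H' : HomOn A h') : HomOn A (fun x => h x - h' x) := by
  intro x hx y hy
  simp only [H x hx y hy, H' x hx y hy]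
  abel

/-- pull back along an endomorphism -/
theorem comp_hom {B : Subgroup F} (H : HomOn A h) (ρ : F →* F) (hρ : ∀ x ∈ B, ρ x ∈ A) :
    HomOn B (fun x => h (ρ x)) := by
  intro x hx y hy
  simp only [map_mul, H _ (hρ x hx) _ (hρ y hy)]

end HomOn

/-- the additive abelianization map -/
def abA {F : Type} [Group F] (S : Subgroup F) (x : S) : Additive (Abelianization S) :=
  Additive.ofMul (Abelianization.of x)

theorem abA_mul {F : Type} [Group F] (S : Subgroup F) (x y : S) :
    abA S (x * y) = abA S x + abA S y := by
  simp [abA]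

theorem abA_surj {F : Type} [Group F] (S : Subgroup F) : Function.Surjective (abA S) := by
  intro v
  obtain ⟨x, hx⟩ := QuotientGroup.mk_surjective (s := commutator S) (Additive.toMul v)
  exact ⟨x, congrArg Additive.ofMul hx⟩

theorem abA_zero {F : Type} [Group F] (S : Subgroup F) (x : S) :
    abA S x = 0 ↔ (x : F) ∈ ⁅S, S⁆ := by
  have h1 : abA S x = 0 ↔ x ∈ commutator S := by
    rw [← Abelianization.ker_of, MonoidHom.mem_ker]
    exact Iff.rfl
  rw [h1, ← Subgroup.map_subtype_commutator]
  simp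

theorem desc_bil {G H X Y : Type} [Group G] [Group H] [AddCommGroup X] [AddCommGroup Y]
    (π : G → X) (hπ : ∀ g g', π (g * g') = π g + π g') (sπ : Function.Surjective π)
    (τ : H → Y) (hτ : ∀ g g', τ (g * g') = τ g + τ g') (sτ : Function.Surjective τ)
    (f : G → H → QZ) (f1 : ∀ g g' h, f (g * g') h = f g h + f g' h)
    (f2 : ∀ g h h', f g (h * h') = f g h + f g h')
    (k1 : ∀ g h, π g = 0 → f g h = 0) (k2 : ∀ g h, τ h = 0 → f g h = 0) :
    ∃ b : Bil X Y, ∀ g h, b (π g) (τ h) = f g h := by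
  have e1 : ∀ g g' h, π g = π g' → f g h = f g' h := by
    intro g g' h hg
    have h0 : π (g * g'⁻¹) = 0 := by
      have h1 : π (g * g'⁻¹ * g') = π g := by simp
      rw [hπ, hg] at h1
      simpa using h1
    have h2 : f (g * g'⁻¹ * g') h = f g h := by simp
    rw [f1, k1 _ _ h0, zero_add] at h2
    exact h2.symm
  have e2 : ∀ g h h', τ h = τ h' → f g h = f g h' := by
    intro g h h' hh
    have h0 : τ (h * h'⁻¹) = 0 := by
      have h1 : τ (h * h'⁻¹ * h') = τ h := by simp
      rw [hτ, hh] at h1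
      simpa using h1
    have h2 : f g (h * h'⁻¹ * h') = f g h := by simp
    rw [f2, k2 _ _ h0, zero_add] at h2
    exact h2.symm
  obtain ⟨b, hb⟩ := exists_bil (fun x y => f (Function.surjInv sπ x) (Function.surjInv sτ y))
    (fun x x' y => by
      rw [← f1]
      apply e1
      rw [hπ]
      simp only [Function.surjInv_eq])
    (fun x y y' => by
      rw [← f2]
      apply e2
      rw [hτ]
      simp only [Function.surjInv_eq])
  refine ⟨b, fun g h => ?_⟩
  rw [hb, e1 _ g _ (Function.surjInv_eq sπ _), e2 _ _ h (Function.surjInv_eq sτ _)]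

section

variable {F : Type} [Group F]

/-- extension of homomorphisms to the divisible group `ℚ/ℤ` -/
theorem hom_ext_on (A M B : Subgroup F) (hA : A ≤ B) (hM : M ≤ B) (hBM : ⁅B, B⁆ ≤ M)
    (h : F → QZ) (H : HomOn A h) (h0 : ∀ x ∈ A, x ∈ M → h x = 0) :
    ∃ h' : F → QZ, HomOn B h' ∧ (∀ x ∈ A, h' x = h x) ∧ ∀ x ∈ M, h' x = 0 := by
  classical
  let XA := Additive (Abelianization A)
  let XM := Additive (Abelianization M)
  let Y := Additive (Abelianization B)
  let fA : XA →ₗ[ℤ] Y := (MonoidHom.toAdditive (Abelianization.map (Subgroup.inclusion hA))).toIntLinearMap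
  let fM : XM →ₗ[ℤ] Y := (MonoidHom.toAdditive (Abelianization.map (Subgroup.inclusion hM))).toIntLinearMap
  let gA0 : A →* Multiplicative QZ := MonoidHom.mk' (fun x => Multiplicative.ofAdd (h x))
    (fun x y => by rw [← ofAdd_add, ← H x x.2 y y.2]; rfl)
  let gA : XA →ₗ[ℤ] QZ := (MonoidHom.toAdditiveLeft (Abelianization.lift gA0)).toIntLinearMap
  have hfA : ∀ x : A, fA (abA A x) = abA B (Subgroup.inclusion hA x) := fun x => rfl
  have hfM : ∀ x : M, fM (abA M x) = abA B (Subgroup.inclusion hM x) := fun x => rfl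
  have hgA : ∀ x : A, gA (abA A x) = h x := fun x => rfl
  obtain ⟨k, hk⟩ := lin_factor (fA.coprod fM) (gA.comp (LinearMap.fst ℤ XA XM)) (by
    rintro ⟨x, y⟩ hxy
    obtain ⟨x, rfl⟩ := abA_surj A x
    obtain ⟨y, rfl⟩ := abA_surj M y
    simp only [LinearMap.coprod_apply, hfA, hfM] at hxy
    have hxy := (abA_zero B _).1 ((abA_mul B _ _).trans hxy)
    have h1 : (x : F) * y ∈ M := hBM hxy
    have h2 : (x : F) ∈ M := (Subgroup.mul_mem_cancel_right M y.2).1 h1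
    exact h0 x x.2 h2)
  refine ⟨fun x => if hx : x ∈ B then k (abA B ⟨x, hx⟩) else 0, ?_, ?_, ?_⟩
  · intro x hx y hy
    simp only [dif_pos hx, dif_pos hy, dif_pos (B.mul_mem hx hy)]
    rw [← map_add, ← abA_mul]
    rfl
  · intro x hx
    simp only [dif_pos (hA hx)]
    have := hk (abA A ⟨x, hx⟩, 0)
    simp only [LinearMap.coprod_apply, map_zero, add_zero] at this
    exact this
  · intro x hx
    simp only [dif_pos (hM hx)]
    have := hk (0, abA M ⟨x, hx⟩)
    simp only [LinearMap.coprod_apply, map_zero, zero_add] at this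
    exact this.trans (map_zero gA)

/-- separation of points by homomorphisms -/
theorem hom_sep (M B : Subgroup F) (hM : M ≤ B) (hBM : ⁅B, B⁆ ≤ M) (x : F) (hx : x ∈ B)
    (hs : ∀ h : F → QZ, HomOn B h → (∀ y ∈ M, h y = 0) → h x = 0) : x ∈ M := by
  classical
  let XM := Additive (Abelianization M)
  let Y := Additive (Abelianization B)
  let fM : XM →ₗ[ℤ] Y := (MonoidHom.toAdditive (Abelianization.map (Subgroup.inclusion hM))).toIntLinearMap
  have hfM : ∀ x : M, fM (abA M x) = abA B (Subgroup.inclusion hM x) := fun x => rfl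
  let Q := Y ⧸ LinearMap.range fM
  have hq : ((LinearMap.range fM).mkQ (abA B ⟨x, hx⟩)) = 0 := by
    apply CharacterModule.eq_zero_of_character_apply
    intro c
    have := hs (fun x => if hx : x ∈ B then c ((LinearMap.range fM).mkQ (abA B ⟨x, hx⟩)) else 0)
      (fun x hx y hy => by
        simp only [dif_pos hx, dif_pos hy, dif_pos (B.mul_mem hx hy)]
        rw [← map_add, ← map_add, ← abA_mul]
        rfl)
      (fun y hy => by
        simp only [dif_pos (hM hy)]
        have : (LinearMap.range fM).mkQ (abA B ⟨y, hM hy⟩) = 0 := by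
          rw [Submodule.mkQ_apply, Submodule.Quotient.mk_eq_zero]
          exact ⟨abA M ⟨y, hy⟩, hfM _⟩
        rw [this, map_zero])
    simpa only [dif_pos hx] using this
  rw [Submodule.mkQ_apply, Submodule.Quotient.mk_eq_zero] at hq
  obtain ⟨v, hv⟩ := hq
  obtain ⟨y, rfl⟩ := abA_surj M v
  rw [hfM] at hv
  have h1 : abA B ((Subgroup.inclusion hM y)⁻¹ * ⟨x, hx⟩) = 0 := by
    have h2 : abA B ((Subgroup.inclusion hM y) * ((Subgroup.inclusion hM y)⁻¹ * ⟨x, hx⟩)) =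
      abA B ⟨x, hx⟩ := by rw [mul_inv_cancel_left]
    rw [abA_mul, hv] at h2
    simpa using h2
  rw [abA_zero] at h1
  exact (Subgroup.mul_mem_cancel_left M (M.inv_mem y.2)).1 (hBM h1)

end

theorem mem_comm_ker {F : Type} [Group F] (S A : Subgroup F) (hA : A ≤ S) (x : A) :
    abA S (Subgroup.inclusion hA x) = 0 ↔ (x : F) ∈ ⁅S, S⁆ := abA_zero S _

section

variable {F : Type} [Group F]

/-- the image of `A ≤ S` in the abelianization of `S`, as a submodule -/
theorem exists_image (S A : Subgroup F) [IsFreeGroup S] (hA : A ≤ S) :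
    ∃ (Y : Submodule ℤ (Additive (Abelianization S))) (π : A → Y),
      Module.Free ℤ Y ∧ Function.Surjective π ∧ (∀ x y, π (x * y) = π x + π y) ∧
      ∀ x, (π x : Additive (Abelianization S)) = abA S (Subgroup.inclusion hA x) := by
  have := free_abelianization S
  let f : Additive (Abelianization A) →ₗ[ℤ] Additive (Abelianization S) :=
    (MonoidHom.toAdditive (Abelianization.map (Subgroup.inclusion hA))).toIntLinearMap
  have hf : ∀ x : A, f (abA A x) = abA S (Subgroup.inclusion hA x) := fun x => rfl
  refine ⟨LinearMap.range f, fun x => ⟨abA S (Subgroup.inclusion hA x), ⟨abA A x, hf x⟩⟩,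
    free_submodule _, ?_, ?_, fun x => rfl⟩
  · rintro ⟨_, v, rfl⟩
    obtain ⟨x, rfl⟩ := abA_surj A v
    exact ⟨x, Subtype.ext (hf x).symm⟩
  · intro x y
    apply Subtype.ext
    simp only [map_mul, abA_mul, Submodule.coe_add]

/-- Lemma L1 for groups -/
theorem bi_ext (S A : Subgroup F) [IsFreeGroup S] (hA : A ≤ S) (e ψ : F → F → QZ)
    (he : BiOn S S e) (he0 : ∀ s ∈ S, e s s = 0) (hψ : BiOn A A ψ)
    (hψ1 : ∀ x ∈ A, ∀ y ∈ A, x ∈ ⁅S, S⁆ → ψ x y = 0)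
    (hψ2 : ∀ x ∈ A, ∀ y ∈ A, y ∈ ⁅S, S⁆ → ψ x y = 0)
    (hψe : ∀ x ∈ A, ∀ y ∈ A, ψ x y - ψ y x = e x y) :
    ∃ b : F → F → QZ, BiOn S S b ∧ (∀ x ∈ S, ∀ y ∈ S, b x y - b y x = e x y) ∧
      (∀ x ∈ A, ∀ y ∈ A, b x y = ψ x y) := by
  classical
  have := free_abelianization S
  obtain ⟨Y, π, hY, sπ, aπ, cπ⟩ := exists_image S A hA
  have zπ : ∀ x, π x = 0 ↔ (x : F) ∈ ⁅S, S⁆ := by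
    intro x
    rw [← mem_comm_ker S A hA x, ← cπ, Submodule.coe_eq_zero]
  obtain ⟨e', he'⟩ := desc_bil (abA S) (abA_mul S) (abA_surj S) (abA S) (abA_mul S) (abA_surj S)
    (fun x y => e x y) (fun g g' h => he.1 h h.2 g g.2 g' g'.2)
    (fun g h h' => he.2 g g.2 h h.2 h' h'.2)
    (fun g h hg => (he.1 h h.2).zero_commutator ((abA_zero S g).1 hg))
    (fun g h hh => (he.2 g g.2).zero_commutator ((abA_zero S h).1 hh))
  obtain ⟨ψ', hψ'⟩ := desc_bil π aπ sπ π aπ sπ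
    (fun x y => ψ x y) (fun g g' h => hψ.1 h h.2 g g.2 g' g'.2)
    (fun g h h' => hψ.2 g g.2 h h.2 h' h'.2)
    (fun g h hg => hψ1 g g.2 h h.2 ((zπ g).1 hg))
    (fun g h hh => hψ2 g g.2 h h.2 ((zπ h).1 hh))
  obtain ⟨b, hb1, hb2⟩ := bil_L1 Y.subtype Y.subtype_injective e' (fun v => by
    obtain ⟨s, rfl⟩ := abA_surj S v
    rw [he']; exact he0 s s.2) ψ' (fun x y => by
    obtain ⟨x, rfl⟩ := sπ x
    obtain ⟨y, rfl⟩ := sπ y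
    rw [hψ', hψ', Submodule.subtype_apply, Submodule.subtype_apply, cπ, cπ, he']
    exact hψe x x.2 y y.2)
  refine ⟨fun x y => if hx : x ∈ S then (if hy : y ∈ S then b (abA S ⟨x, hx⟩) (abA S ⟨y, hy⟩) else 0) else 0,
    ⟨fun z hz x hx y hy => ?_, fun z hz x hx y hy => ?_⟩, fun x hx y hy => ?_, fun x hx y hy => ?_⟩
  · simp only [dif_pos hx, dif_pos hy, dif_pos hz, dif_pos (S.mul_mem hx hy)]
    rw [← LinearMap.add_apply, ← map_add, ← abA_mul]
    rfl
  · simp only [dif_pos hx, dif_pos hy, dif_pos hz, dif_pos (S.mul_mem hx hy)]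
    rw [← map_add, ← abA_mul]
    rfl
  · simp only [dif_pos hx, dif_pos hy]
    rw [hb1, he']
  · simp only [dif_pos (hA hx), dif_pos (hA hy)]
    have := hb2 (π ⟨x, hx⟩) (π ⟨y, hy⟩)
    rw [hψ', Submodule.subtype_apply, Submodule.subtype_apply, cπ, cπ] at this
    exact this

/-- Lemma I4 for groups -/
theorem bi_I4 (S U : Subgroup F) [IsFreeGroup S] (hU : U ≤ S) (z : F → F → QZ)
    (hz : BiOn U U z) (hz0 : ∀ u ∈ U, z u u = 0)
    (hz2 : ∀ u ∈ U, ∀ v ∈ U, u ∈ ⁅S, S⁆ → v ∈ ⁅S, S⁆ → z u v = 0) :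
    ∃ l : F → F → QZ, BiOn U U l ∧ (∀ u ∈ U, ∀ v ∈ U, u ∈ ⁅S, S⁆ → l u v = 0) ∧
      (∀ u ∈ U, ∀ v ∈ U, l u v - l v u = z u v) := by
  classical
  have := free_abelianization S
  obtain ⟨Y, π, hY, sπ, aπ, cπ⟩ := exists_image S U hU
  have zπ : ∀ x, π x = 0 ↔ (x : F) ∈ ⁅S, S⁆ := by
    intro x
    rw [← mem_comm_ker S U hU x, ← cπ, Submodule.coe_eq_zero]
  let f : Additive (Abelianization U) →ₗ[ℤ] Additive (Abelianization S) :=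
    (MonoidHom.toAdditive (Abelianization.map (Subgroup.inclusion hU))).toIntLinearMap
  have hf : ∀ x : U, f (abA U x) = abA S (Subgroup.inclusion hU x) := fun x => rfl
  let q : Additive (Abelianization U) →ₗ[ℤ] Y := f.codRestrict Y (fun v => by
    obtain ⟨x, rfl⟩ := abA_surj U v
    rw [hf, ← cπ]
    exact (π x).2)
  have hq : ∀ x : U, q (abA U x) = π x := fun x => Subtype.ext ((hf x).trans (cπ x).symm)
  have sq : Function.Surjective q := by
    intro y
    obtain ⟨x, rfl⟩ := sπ y
    exact ⟨_, hq x⟩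
  obtain ⟨z', hz'⟩ := desc_bil (abA U) (abA_mul U) (abA_surj U) (abA U) (abA_mul U) (abA_surj U)
    (fun x y => z x y) (fun g g' h => hz.1 h h.2 g g.2 g' g'.2)
    (fun g h h' => hz.2 g g.2 h h.2 h' h'.2)
    (fun g h hg => (hz.1 h h.2).zero_commutator ((abA_zero U g).1 hg))
    (fun g h hh => (hz.2 g g.2).zero_commutator ((abA_zero U h).1 hh))
  obtain ⟨l, hl⟩ := bil_I4 q sq z' (fun v => by
    obtain ⟨s, rfl⟩ := abA_surj U v
    rw [hz']; exact hz0 s s.2) (fun x y hx hy => by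
    obtain ⟨x, rfl⟩ := abA_surj U x
    obtain ⟨y, rfl⟩ := abA_surj U y
    rw [hq, zπ] at hx hy
    rw [hz']; exact hz2 x x.2 y y.2 hx hy)
  refine ⟨fun x y => if hx : x ∈ U then (if hy : y ∈ U then l (π ⟨x, hx⟩) (abA U ⟨y, hy⟩) else 0) else 0,
    ⟨fun z hz x hx y hy => ?_, fun z hz x hx y hy => ?_⟩, fun x hx y hy hxs => ?_, fun x hx y hy => ?_⟩
  · simp only [dif_pos hx, dif_pos hy, dif_pos hz, dif_pos (U.mul_mem hx hy)]
    rw [← LinearMap.add_apply, ← map_add, ← aπ]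
    rfl
  · simp only [dif_pos hx, dif_pos hy, dif_pos hz, dif_pos (U.mul_mem hx hy)]
    rw [← map_add, ← abA_mul]
    rfl
  · simp only [dif_pos hx, dif_pos hy]
    rw [(zπ ⟨x, hx⟩).2 hxs]
    simp
  · simp only [dif_pos hx, dif_pos hy]
    have := hl (abA U ⟨x, hx⟩) (abA U ⟨y, hy⟩)
    rw [hq, hq, hz'] at this
    exact this

end

section

variable {F : Type} [Group F]

theorem oo_conj (t s : F) : oo t * (oo s - 1) = (oo (t * s * t⁻¹) - 1) * oo t := by
  rw [mul_sub, sub_mul, ← oo_mul, ← oo_mul]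
  simp

theorem conj_oo (t s : F) : (oo s - 1) * oo t = oo t * (oo (t⁻¹ * s * t) - 1) := by
  rw [mul_sub, sub_mul, ← oo_mul, ← oo_mul]
  simp [mul_assoc]

/-- quadratic functions on a free subgroup with prescribed bilinear part -/
theorem exists_quad (S : Subgroup F) [IsFreeGroup S] (b : F → F → QZ) (hb : BiOn S S b) :
    ∃ φ : F → QZ, ∀ x ∈ S, ∀ y ∈ S, φ (x * y) = φ x + φ y + b x y := by
  obtain ⟨D, hD1, hD2⟩ := exists_cocycle S
    (fun k c => ∃ s ∈ S, ∃ s' ∈ S, k = (oo s - 1) * oo s' ∧ c = b s)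
    (by rintro k c ⟨s, hs, s', hs', rfl, rfl⟩; exact (hb.2 s hs).one)
    (by
      rintro k c ⟨s, hs, s', hs', rfl, rfl⟩ t ht
      refine ⟨b s, ⟨s, hs, s' * t, S.mul_mem hs' ht, ?_, rfl⟩, fun t' ht' => hb.2 s hs t ht t' ht'⟩
      rw [mul_assoc, ← oo_mul])
    (by
      intro v hv
      refine ⟨Lx (fun f => b f v), ?_⟩
      rintro k c ⟨s, hs, s', hs', rfl, rfl⟩
      have hbb : b (s * s') v = b s v + b s' v := hb.1 v hv s hs s' hs'
      rw [sub_mul, one_mul, ← oo_mul, map_sub, Lx_oo, Lx_oo, hbb]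
      abel)
  obtain ⟨Ψ, hΨ⟩ := exists_Psi S D hD1
  refine ⟨fun x => Ψ (oo x) - Ψ 1, fun x hx y hy => ?_⟩
  have h1 := hΨ y hy (oo x)
  have h2 := hΨ y hy 1
  have h3 := hD2 y hy ((oo x - 1) * oo 1) (b x) ⟨x, hx, 1, S.one_mem, rfl, rfl⟩
  rw [oo_one, mul_one, map_sub] at h3
  rw [mul_sub, mul_one, ← oo_mul, map_sub] at h1
  rw [one_mul, map_sub] at h2
  rw [← h1, ← h2] at h3
  simp only
  rw [← h3]
  abel

theorem exists_quad_ext (S : Subgroup F) [IsFreeGroup S] (b : F → F → QZ) (hb : BiOn S S b)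
    (e : F → QZ) (he : HomOn ⁅S, S⁆ e)
    (hbe : ∀ x ∈ S, ∀ y ∈ S, b x y - b y x = e ⁅x, y⁆) :
    ∃ φ : F → QZ, (∀ x ∈ S, ∀ y ∈ S, φ (x * y) = φ x + φ y + b x y) ∧ ∀ x ∈ ⁅S, S⁆, φ x = e x := by
  obtain ⟨φ, hφ⟩ := exists_quad S b hb
  have hle : ⁅S, S⁆ ≤ S := Subgroup.commutator_le_self S
  refine ⟨φ, hφ, fun x hx => ?_⟩
  have hom : HomOn ⁅S, S⁆ φ := by
    intro x hx y hy
    rw [hφ x (hle hx) y (hle hy), (hb.1 y (hle hy)).zero_commutator hx, add_zero]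
  refine hom.eq_commutator he le_rfl (fun p hp q hq => ?_) hx
  have hpq : ⁅p, q⁆ ∈ ⁅S, S⁆ := Subgroup.commutator_mem_commutator hp hq
  have h1 := hφ ⁅p, q⁆ (hle hpq) (q * p) (S.mul_mem hq hp)
  rw [(hb.1 _ (S.mul_mem hq hp)).zero_commutator hpq, hφ q hq p hp] at h1
  have h2 : ⁅p, q⁆ * (q * p) = p * q := by rw [commutatorElement_def]; group
  rw [h2, hφ p hp q hq] at h1
  rw [← hbe p hp q hq]
  have : φ ⁅p, q⁆ = (φ ⁅p, q⁆ + (φ q + φ p + b q p) + 0) - (φ q + φ p + b q p) := by abel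
  rw [this, ← h1]
  abel

/-- expansion of a quadratic function -/
theorem quad_diff2 {S : Subgroup F} {φ : F → QZ} {b : F → F → QZ} (hb : BiOn S S b)
    (hφ : ∀ x ∈ S, ∀ y ∈ S, φ (x * y) = φ x + φ y + b x y) {x y z : F} (hx : x ∈ S) (hy : y ∈ S)
    (hz : z ∈ S) : φ (x * y * z) - φ (x * z) - φ (y * z) + φ z = b x y := by
  have hbb : b (x * y) z = b x z + b y z := hb.1 z hz x hx y hy
  rw [hφ _ (S.mul_mem hx hy) _ hz, hφ x hx y hy, hφ x hx z hz, hφ y hy z hz, hbb]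
  abel

/-- the dual form of the hypothesis -/
def HypA (S T : Subgroup F) (a : F) : Prop :=
  ∀ Ψ : Du F,
    (∀ u ∈ S ⊓ T, ∀ s ∈ S, ∀ s' ∈ S, ∀ t ∈ T, ∀ f,
      Ψ ((oo u - 1) * (oo s - 1) * (oo s' - 1) * oo f * (oo t - 1)) = 0) →
    (∀ u ∈ S ⊓ T, ∀ s ∈ S, ∀ s' ∈ S, ∀ t ∈ T, ∀ f,
      Ψ ((oo t - 1) * (oo s - 1) * (oo s' - 1) * oo f * (oo u - 1)) = 0) →
    Ψ (oo a) = Ψ 1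

/-- the retraction-like endomorphism -/
structure RhoData (S T : Subgroup F) (ρ : F →* F) : Prop where
  memT : ∀ f, ρ f ∈ T
  memS : ∀ f, f * (ρ f)⁻¹ ∈ S

theorem exists_rho [IsFreeGroup F] (S T : Subgroup F) [S.Normal]
    (hST : S ⊔ T = ⊤) : ∃ ρ : F →* F, RhoData S T ρ := by
  have h : ∀ x : F, ∃ t ∈ T, x * t⁻¹ ∈ S := by
    intro x
    have hx : x ∈ S ⊔ T := by rw [hST]; trivial
    rw [← SetLike.mem_coe, Subgroup.normal_mul, Set.mem_mul] at hx
    obtain ⟨s, hs, t, ht, rfl⟩ := hx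
    exact ⟨t, ht, by simpa using hs⟩
  choose τ hτ1 hτ2 using h
  let ρ : F →* F := IsFreeGroup.lift (fun i => τ (IsFreeGroup.of i))
  refine ⟨ρ, ?_, ?_⟩
  · intro f
    have : (⊤ : Subgroup F) ≤ T.comap ρ := by
      rw [← free_closure, Subgroup.closure_le]
      rintro _ ⟨i, rfl⟩
      change ρ _ ∈ T
      simp only [ρ, IsFreeGroup.lift_of]
      exact hτ1 _
    exact this (Subgroup.mem_top f)
  · intro f
    let E : Subgroup F :=
      { carrier := {f | f * (ρ f)⁻¹ ∈ S}
        one_mem' := by simp [S.one_mem]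
        mul_mem' := by
          intro x y hx hy
          have h1 : x * (y * (ρ y)⁻¹) * x⁻¹ ∈ S := ‹S.Normal›.conj_mem _ hy x
          have : x * y * (ρ (x * y))⁻¹ = x * (y * (ρ y)⁻¹) * x⁻¹ * (x * (ρ x)⁻¹) := by
            rw [map_mul]; group
          change x * y * (ρ (x * y))⁻¹ ∈ S
          rw [this]
          exact S.mul_mem h1 hx
        inv_mem' := by
          intro x hx
          change x⁻¹ * (ρ x⁻¹)⁻¹ ∈ S
          have h1 : x⁻¹ * (x * (ρ x)⁻¹)⁻¹ * x⁻¹⁻¹ ∈ S := ‹S.Normal›.conj_mem _ (S.inv_mem hx) x⁻¹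
          have : x⁻¹ * (ρ x⁻¹)⁻¹ = x⁻¹ * (x * (ρ x)⁻¹)⁻¹ * x⁻¹⁻¹ := by
            rw [map_inv]; group
          rw [this]
          exact h1 }
    have : (⊤ : Subgroup F) ≤ E := by
      rw [← free_closure, Subgroup.closure_le]
      rintro _ ⟨i, rfl⟩
      change _ * (ρ _)⁻¹ ∈ S
      simp only [ρ, IsFreeGroup.lift_of]
      exact hτ2 _
    exact this (Subgroup.mem_top f)

namespace RhoData

variable {S T : Subgroup F} {ρ : F →* F}

theorem memU (h : RhoData S T ρ) {s : F} (hs : s ∈ S) : ρ s ∈ S ⊓ T := by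
  refine ⟨?_, h.memT s⟩
  have h1 := h.memS s
  rw [Subgroup.mul_mem_cancel_left S hs] at h1
  simpa using h1

theorem wU (h : RhoData S T ρ) {t : F} (ht : t ∈ T) : t * (ρ t)⁻¹ ∈ S ⊓ T :=
  ⟨h.memS t, T.mul_mem ht (T.inv_mem (h.memT t))⟩

theorem w_mul (t t' : F) : t * t' * (ρ (t * t'))⁻¹ =
    t * (ρ t)⁻¹ * (ρ t * (t' * (ρ t')⁻¹) * (ρ t)⁻¹) := by
  rw [map_mul]; group

theorem map_comm (h : RhoData S T ρ) {x : F} (hx : x ∈ ⁅S, S⁆) : ρ x ∈ ⁅S ⊓ T, S ⊓ T⁆ := by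
  have h1 : ρ x ∈ (⁅S, S⁆).map ρ := ⟨x, hx, rfl⟩
  rw [Subgroup.map_commutator] at h1
  have h2 : S.map ρ ≤ S ⊓ T := by
    rintro _ ⟨s, hs, rfl⟩
    exact h.memU hs
  exact Subgroup.commutator_mono h2 h2 h1

theorem map_comm3 (h : RhoData S T ρ) {x : F} (hx : x ∈ ⁅⁅S, S⁆, S⁆) :
    ρ x ∈ ⁅⁅S ⊓ T, S ⊓ T⁆, S ⊓ T⁆ := by
  have h1 : ρ x ∈ (⁅⁅S, S⁆, S⁆).map ρ := ⟨x, hx, rfl⟩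
  rw [Subgroup.map_commutator] at h1
  refine Subgroup.commutator_mono ?_ ?_ h1
  · rintro _ ⟨s, hs, rfl⟩
    exact h.map_comm hs
  · rintro _ ⟨s, hs, rfl⟩
    exact h.memU hs

end RhoData

/-- Step 0: `a` lies in `S ⊓ T` -/
theorem HypA.memU {S T : Subgroup F} [S.Normal] [T.Normal] {a : F} (h : HypA S T a) :
    a ∈ S ⊓ T := by
  classical
  by_contra ha
  obtain ⟨c, hc⟩ : ∃ c : QZ, c ≠ 0 := ⟨((1 / 2 : ℚ) : QZ), by
    intro h
    rw [AddCircle.coe_eq_zero_iff] at h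
    obtain ⟨n, hn⟩ := h
    simp only [zsmul_eq_mul, mul_one] at hn
    have h2 : ((2 * n : ℤ) : ℚ) = (1 : ℤ) := by push_cast; rw [hn]; norm_num
    have h3 := Int.cast_injective h2
    lia⟩
  let g : F → QZ := fun f => if f ∈ S ⊓ T then c else 0
  have hg1 : ∀ f, ∀ u ∈ S ⊓ T, g (f * u) = g f := by
    intro f u hu
    simp only [g, Subgroup.mul_mem_cancel_right (S ⊓ T) hu]
  have hg2 : ∀ f, ∀ u ∈ S ⊓ T, g (u * f) = g f := by
    intro f u hu
    simp only [g, Subgroup.mul_mem_cancel_left (S ⊓ T) hu]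
  have k1 : ∀ u ∈ S ⊓ T, ∀ x, Lx g ((oo u - 1) * x) = 0 := by
    intro u hu
    apply du_ext_zero
    intro f
    rw [sub_mul, one_mul, ← oo_mul, map_sub, Lx_oo, Lx_oo, hg2 _ _ hu, sub_self]
  have k2 : ∀ u ∈ S ⊓ T, ∀ x, Lx g (x * (oo u - 1)) = 0 := by
    intro u hu x
    have : (Lx g).comp (LinearMap.mulRight ℤ (oo u - 1)) = 0 := by
      apply du_ext
      intro f
      simp only [LinearMap.comp_apply, LinearMap.mulRight_apply, LinearMap.zero_apply]
      rw [mul_sub, mul_one, ← oo_mul, map_sub, Lx_oo, Lx_oo, hg1 _ _ hu, sub_self]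
    exact congrArg (fun φ => φ x) this
  have := h (Lx g) (fun u hu s _ s' _ t _ f => by
      rw [mul_assoc, mul_assoc, mul_assoc]; exact k1 u hu _)
    (fun u hu s _ s' _ t _ f => k2 u hu _)
  rw [Lx_oo, Lx_one] at this
  simp only [g, if_neg ha, if_pos (S ⊓ T).one_mem] at this
  exact hc this.symm

/-- the hypothesis for cocycles -/
theorem HypA.cocycle {S T : Subgroup F} {a : F} (h : HypA S T a) (ha : a ∈ T) (D : F → Du F)
    (hD : ∀ t ∈ T, ∀ t' ∈ T, ∀ x, D (t * t') x = D t x + D t' (x * oo t))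
    (h1 : ∀ u ∈ S ⊓ T, ∀ s ∈ S, ∀ s' ∈ S, ∀ t ∈ T, ∀ f,
      D t ((oo u - 1) * (oo s - 1) * (oo s' - 1) * oo f) = 0)
    (h2 : ∀ t ∈ T, ∀ s ∈ S, ∀ s' ∈ S, ∀ u ∈ S ⊓ T, ∀ f,
      D u ((oo t - 1) * (oo s - 1) * (oo s' - 1) * oo f) = 0) :
    D a 1 = 0 := by
  obtain ⟨Ψ, hΨ⟩ := exists_Psi T D hD
  have := h Ψ (fun u hu s hs s' hs' t ht f => by rw [hΨ t ht]; exact h1 u hu s hs s' hs' t ht f)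
    (fun u hu s hs s' hs' t ht f => by rw [hΨ u hu.2]; exact h2 t ht s hs s' hs' u hu f)
  rw [← hΨ a ha, one_mul, map_sub, this, sub_self]

/-- the hypothesis for `ρ a` -/
def HypB (U T : Subgroup F) (b : F) : Prop :=
  ∀ Ψ : Du F,
    (∀ u ∈ U, ∀ v ∈ U, ∀ w ∈ U, ∀ t ∈ T, ∀ f ∈ T,
      Ψ ((oo u - 1) * (oo v - 1) * (oo w - 1) * oo f * (oo t - 1)) = 0) →
    (∀ u ∈ U, ∀ v ∈ U, ∀ w ∈ U, ∀ t ∈ T, ∀ f ∈ T,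
      Ψ ((oo t - 1) * (oo u - 1) * (oo v - 1) * oo f * (oo w - 1)) = 0) →
    Ψ (oo b) = Ψ 1

theorem HypA.hypB {S T : Subgroup F} {a : F} (h : HypA S T a) {ρ : F →* F} (hρ : RhoData S T ρ) :
    HypB (S ⊓ T) T (ρ a) := by
  intro Ψ h1 h2
  let R : MonoidAlgebra ℤ F →+* MonoidAlgebra ℤ F := MonoidAlgebra.mapDomainRingHom ℤ ρ
  have hR : ∀ f, R (oo f) = oo (ρ f) := by
    intro f
    simp [R, oo, MonoidAlgebra.of_apply]
  have := h (Ψ.comp R.toIntAlgHom.toLinearMap) (fun u hu s hs s' hs' t ht f => by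
      simp only [LinearMap.comp_apply, AlgHom.toLinearMap_apply, RingHom.toIntAlgHom_apply,
        map_mul, map_sub, map_one, hR]
      exact h1 _ (hρ.memU hu.1) _ (hρ.memU hs) _ (hρ.memU hs') _ (hρ.memT t) _ (hρ.memT f))
    (fun u hu s hs s' hs' t ht f => by
      simp only [LinearMap.comp_apply, AlgHom.toLinearMap_apply, RingHom.toIntAlgHom_apply,
        map_mul, map_sub, map_one, hR]
      exact h2 _ (hρ.memU hs) _ (hρ.memU hs') _ (hρ.memU hu.1) _ (hρ.memT t) _ (hρ.memT f))
  simp only [LinearMap.comp_apply, AlgHom.toLinearMap_apply, RingHom.toIntAlgHom_apply,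
        map_one, hR] at this
  exact this

theorem ring_conj_aux {A : Type} [Ring A] {t f u v w u' v' w' w2 : A} (h1 : t * u = u' * t)
    (h2 : t * v = v' * t) (h3 : f * w = w' * f) (h4 : t * w' = w2 * t) :
    (t - 1) * u * v * f * w = u' * v' * w2 * (t * f) - u * v * w' * f := by
  have e : t * u * v * f * w = u' * v' * w2 * (t * f) := by
    rw [mul_assoc _ f, h3, h1, mul_assoc u' t v, h2, ← mul_assoc u', ← mul_assoc _ w', mul_assoc _ t w', h4]
    simp only [mul_assoc]
  rw [← e]
  simp only [sub_mul, one_mul]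
  congr 1
  rw [mul_assoc _ f, h3, ← mul_assoc]

/-- functionals killing the cube of the ideal of `U` -/
theorem HypB.of_cubic {U T : Subgroup F} [U.Normal] {b : F} (h : HypB U T b) (g : F → QZ)
    (c : F → F → F → QZ)
    (hc : ∀ u ∈ U, ∀ v ∈ U, ∀ w ∈ U, ∀ t ∈ T, c (t * u * t⁻¹) (t * v * t⁻¹) (t * w * t⁻¹) = c u v w)
    (hg : ∀ u ∈ U, ∀ v ∈ U, ∀ w ∈ U, ∀ f ∈ T,
      Lx g ((oo u - 1) * (oo v - 1) * (oo w - 1) * oo f) = c u v w) : g b = g 1 := by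
  have hn : ∀ u ∈ U, ∀ t, t * u * t⁻¹ ∈ U := fun u hu t => ‹U.Normal›.conj_mem u hu t
  have := h (Lx g) (fun u hu v hv w hw t ht f hf => by
      rw [mul_sub, mul_one, map_sub, mul_assoc _ (oo f), ← oo_mul, hg u hu v hv w hw _ (T.mul_mem hf ht),
        hg u hu v hv w hw _ hf, sub_self])
    (fun u hu v hv w hw t ht f hf => by
      have e : (oo t - 1) * (oo u - 1) * (oo v - 1) * oo f * (oo w - 1) =
        (oo (t * u * t⁻¹) - 1) * (oo (t * v * t⁻¹) - 1) * (oo (t * (f * w * f⁻¹) * t⁻¹) - 1) * oo (t * f)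
        - (oo u - 1) * (oo v - 1) * (oo (f * w * f⁻¹) - 1) * oo f := by
        rw [oo_mul t f]
        exact ring_conj_aux (oo_conj t u) (oo_conj t v) (oo_conj f w) (oo_conj t (f * w * f⁻¹))
      rw [e, map_sub, hg _ (hn u hu t) _ (hn v hv t) _ (hn _ (hn w hw f) t) _ (T.mul_mem ht hf),
        hg _ hu _ hv _ (hn w hw f) _ hf, hc _ hu _ hv _ (hn w hw f) _ ht, sub_self])
  rw [Lx_oo, Lx_one] at this
  exact this

end

section

variable {F : Type} [Group F]

/-- a character of `(N ⊓ T) / ⁅N, T⁆` with `N = ⁅⁅S, S⁆, S⁆` -/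
structure ChiData (S T : Subgroup F) (χ : F → QZ) : Prop where
  hom : HomOn (⁅⁅S, S⁆, S⁆ ⊓ T) χ
  zero : ∀ x ∈ ⁅⁅⁅S, S⁆, S⁆, T⁆, χ x = 0

namespace ChiData

variable {S T : Subgroup F} [S.Normal] [T.Normal] {χ : F → QZ}

theorem conj (h : ChiData S T χ) {n t : F} (hn : n ∈ ⁅⁅S, S⁆, S⁆ ⊓ T) (ht : t ∈ T) :
    χ (t * n * t⁻¹) = χ n := by
  have h1 : ⁅t, n⁆ ∈ ⁅⁅⁅S, S⁆, S⁆, T⁆ := by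
    rw [Subgroup.commutator_comm]
    exact Subgroup.commutator_mem_commutator ht hn.1
  have h2 : ⁅⁅⁅S, S⁆, S⁆, T⁆ ≤ ⁅⁅S, S⁆, S⁆ ⊓ T :=
    le_inf (Subgroup.commutator_le_left _ _) (Subgroup.commutator_le_right _ _)
  have e : t * n * t⁻¹ = ⁅t, n⁆ * n := by rw [commutatorElement_def]; group
  rw [e, h.hom _ (h2 h1) _ hn, h.zero _ h1, zero_add]

theorem mem_NT {x y : F} (hx : x ∈ ⁅S, S⁆ ⊓ T) (hy : y ∈ S ⊓ T) : ⁅x, y⁆ ∈ ⁅⁅S, S⁆, S⁆ ⊓ T :=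
  ⟨Subgroup.commutator_mem_commutator hx.1 hy.1,
    Subgroup.commutator_le_left T ⊤ (Subgroup.commutator_mem_commutator hx.2 (Subgroup.mem_top y))⟩

theorem mem_U2 {x y : F} (hx : x ∈ S ⊓ T) (hy : y ∈ S ⊓ T) : ⁅x, y⁆ ∈ ⁅S, S⁆ ⊓ T :=
  ⟨Subgroup.commutator_mem_commutator hx.1 hy.1,
    Subgroup.commutator_le_left T ⊤ (Subgroup.commutator_mem_commutator hx.2 (Subgroup.mem_top y))⟩

theorem U2_le : ⁅S, S⁆ ⊓ T ≤ S ⊓ T :=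
  inf_le_inf_right T (Subgroup.commutator_le_self S)

theorem NT_le : ⁅⁅S, S⁆, S⁆ ⊓ T ≤ ⁅S, S⁆ ⊓ T :=
  inf_le_inf_right T (Subgroup.commutator_le_left _ _)

theorem U'_le : ⁅S ⊓ T, S ⊓ T⁆ ≤ ⁅S, S⁆ ⊓ T :=
  le_inf (Subgroup.commutator_mono inf_le_left inf_le_left)
    ((Subgroup.commutator_le_self _).trans inf_le_right)

/-- the bracket pairing -/
theorem bi (h : ChiData S T χ) : BiOn (⁅S, S⁆ ⊓ T) (S ⊓ T) (fun x y => χ ⁅x, y⁆) := by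
  refine ⟨fun y hy x hx x' hx' => ?_, fun x hx y hy y' hy' => ?_⟩
  · have e : ⁅x * x', y⁆ = x * ⁅x', y⁆ * x⁻¹ * ⁅x, y⁆ := by
      simp only [commutatorElement_def]; group
    have hm : x * ⁅x', y⁆ * x⁻¹ ∈ ⁅⁅S, S⁆, S⁆ ⊓ T := Subgroup.Normal.conj_mem inferInstance _ (mem_NT hx' hy) x
    show χ ⁅x * x', y⁆ = χ ⁅x, y⁆ + χ ⁅x', y⁆
    rw [e, h.hom _ hm _ (mem_NT hx hy), h.conj (mem_NT hx' hy) hx.2, add_comm]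
  · have e : ⁅x, y * y'⁆ = ⁅x, y⁆ * (y * ⁅x, y'⁆ * y⁻¹) := by
      simp only [commutatorElement_def]; group
    have hm : y * ⁅x, y'⁆ * y⁻¹ ∈ ⁅⁅S, S⁆, S⁆ ⊓ T := Subgroup.Normal.conj_mem inferInstance _ (mem_NT hx hy') y
    show χ ⁅x, y * y'⁆ = χ ⁅x, y⁆ + χ ⁅x, y'⁆
    rw [e, h.hom _ (mem_NT hx hy) _ hm, h.conj (mem_NT hx hy') hy.2]

theorem B_mul (h : ChiData S T χ) {x x' y : F} (hx : x ∈ ⁅S, S⁆ ⊓ T) (hx' : x' ∈ ⁅S, S⁆ ⊓ T)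
    (hy : y ∈ S ⊓ T) : χ ⁅x * x', y⁆ = χ ⁅x, y⁆ + χ ⁅x', y⁆ := h.bi.1 y hy x hx x' hx'

theorem B_mul' (h : ChiData S T χ) {x y y' : F} (hx : x ∈ ⁅S, S⁆ ⊓ T) (hy : y ∈ S ⊓ T)
    (hy' : y' ∈ S ⊓ T) : χ ⁅x, y * y'⁆ = χ ⁅x, y⁆ + χ ⁅x, y'⁆ := h.bi.2 x hx y hy y' hy'

theorem B_N (h : ChiData S T χ) {x y : F} (hx : x ∈ ⁅⁅S, S⁆, S⁆) (hy : y ∈ T) : χ ⁅x, y⁆ = 0 :=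
  h.zero _ (Subgroup.commutator_mem_commutator hx hy)

theorem B_U' (h : ChiData S T χ) {x y : F} (hx : x ∈ ⁅S, S⁆ ⊓ T) (hy : y ∈ ⁅S ⊓ T, S ⊓ T⁆) :
    χ ⁅x, y⁆ = 0 := (h.bi.2 x hx).zero_commutator hy

theorem B_T (h : ChiData S T χ) {x y t : F} (hx : x ∈ ⁅S, S⁆ ⊓ T) (hy : y ∈ S ⊓ T) (ht : t ∈ T) :
    χ ⁅t * x * t⁻¹, t * y * t⁻¹⁆ = χ ⁅x, y⁆ := by
  have e : ⁅t * x * t⁻¹, t * y * t⁻¹⁆ = t * ⁅x, y⁆ * t⁻¹ := by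
    simp only [commutatorElement_def]; group
  rw [e, h.conj (mem_NT hx hy) ht]

theorem B_conj_left (h : ChiData S T χ) {x y p : F} (hx : x ∈ ⁅S, S⁆ ⊓ T) (hy : y ∈ S ⊓ T)
    (hp : p ∈ S ⊓ T) : χ ⁅p * x * p⁻¹, y⁆ = χ ⁅x, y⁆ := by
  have h1 : ⁅x, p⁆⁻¹ ∈ ⁅⁅S, S⁆, S⁆ ⊓ T := Subgroup.inv_mem _ (mem_NT hx hp)
  have e : p * x * p⁻¹ = ⁅x, p⁆⁻¹ * x := by simp only [commutatorElement_def]; group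
  rw [e, h.B_mul (NT_le h1) hx hy, h.B_N h1.1 hy.2, zero_add]

theorem B_conj_right (h : ChiData S T χ) {x y p : F} (hx : x ∈ ⁅S, S⁆ ⊓ T) (hy : y ∈ S ⊓ T)
    (hp : p ∈ S ⊓ T) : χ ⁅x, p * y * p⁻¹⁆ = χ ⁅x, y⁆ := (h.bi.2 x hx).conj hy hp

theorem B_swap (h : ChiData S T χ) {x y : F} (hx : x ∈ ⁅S, S⁆ ⊓ T) (hy : y ∈ S ⊓ T) :
    χ ⁅y, x⁆ = - χ ⁅x, y⁆ := by
  rw [← commutatorElement_inv, h.hom.inv (mem_NT hx hy)]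

theorem tri1 (h : ChiData S T χ) {q r : F} (hq : q ∈ S ⊓ T) (hr : r ∈ S ⊓ T) :
    HomOn (S ⊓ T) (fun p => χ ⁅⁅p, q⁆, r⁆) := by
  intro p hp p' hp'
  have e : ⁅p * p', q⁆ = p * ⁅p', q⁆ * p⁻¹ * ⁅p, q⁆ := by
    simp only [commutatorElement_def]; group
  have hm : p * ⁅p', q⁆ * p⁻¹ ∈ ⁅S, S⁆ ⊓ T := Subgroup.Normal.conj_mem inferInstance _ (mem_U2 hp' hq) p
  show χ ⁅⁅p * p', q⁆, r⁆ = χ ⁅⁅p, q⁆, r⁆ + χ ⁅⁅p', q⁆, r⁆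
  rw [e, h.B_mul hm (mem_U2 hp hq) hr, h.B_conj_left (mem_U2 hp' hq) hr hp, add_comm]

theorem tri_swap (h : ChiData S T χ) {p q r : F} (hp : p ∈ S ⊓ T) (hq : q ∈ S ⊓ T) (hr : r ∈ S ⊓ T) :
    χ ⁅⁅q, p⁆, r⁆ = - χ ⁅⁅p, q⁆, r⁆ := by
  rw [← commutatorElement_inv p q]
  exact (h.bi.1 r hr).inv (mem_U2 hp hq)

theorem tri2 (h : ChiData S T χ) {p r : F} (hp : p ∈ S ⊓ T) (hr : r ∈ S ⊓ T) :
    HomOn (S ⊓ T) (fun q => χ ⁅⁅p, q⁆, r⁆) := by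
  intro q hq q' hq'
  have := h.tri1 hp hr q hq q' hq'
  simp only at this ⊢
  rw [h.tri_swap (Subgroup.mul_mem _ hq hq') hp hr, this, h.tri_swap hp hq hr, h.tri_swap hp hq' hr]
  abel

theorem tri3 (h : ChiData S T χ) {p q : F} (hp : p ∈ S ⊓ T) (hq : q ∈ S ⊓ T) :
    HomOn (S ⊓ T) (fun r => χ ⁅⁅p, q⁆, r⁆) := h.bi.2 _ (mem_U2 hp hq)

theorem tri_self (h : ChiData S T χ) {p r : F} : χ ⁅⁅p, p⁆, r⁆ = 0 := by
  simp [h.hom.one]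

theorem tri_z1 (h : ChiData S T χ) {p q r : F} (hp : p ∈ ⁅S, S⁆) (hq : q ∈ S ⊓ T) (hr : r ∈ S ⊓ T) :
    χ ⁅⁅p, q⁆, r⁆ = 0 :=
  h.B_N (Subgroup.commutator_mem_commutator hp hq.1) hr.2

theorem tri_z2 (h : ChiData S T χ) {p q r : F} (hp : p ∈ S ⊓ T) (hq : q ∈ ⁅S, S⁆ ⊓ T) (hr : r ∈ S ⊓ T) :
    χ ⁅⁅p, q⁆, r⁆ = 0 := by
  rw [h.tri_swap (U2_le hq) hp hr, h.tri_z1 hq.1 hp hr, neg_zero]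

theorem tri_z3 (h : ChiData S T χ) {p q r : F} (hp : p ∈ S ⊓ T) (hq : q ∈ S ⊓ T) (hr : r ∈ ⁅S, S⁆ ⊓ T) :
    χ ⁅⁅p, q⁆, r⁆ = 0 := by
  rw [h.B_swap hr (U2_le (mem_U2 hp hq)), h.B_U' hr (Subgroup.commutator_mem_commutator hp hq), neg_zero]

theorem tri_T (h : ChiData S T χ) {p q r t : F} (hp : p ∈ S ⊓ T) (hq : q ∈ S ⊓ T) (hr : r ∈ S ⊓ T)
    (ht : t ∈ T) : χ ⁅⁅t * p * t⁻¹, t * q * t⁻¹⁆, t * r * t⁻¹⁆ = χ ⁅⁅p, q⁆, r⁆ := by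
  have e : ⁅t * p * t⁻¹, t * q * t⁻¹⁆ = t * ⁅p, q⁆ * t⁻¹ := by
    simp only [commutatorElement_def]; group
  rw [e, h.B_T (mem_U2 hp hq) hr ht]

theorem jacobi (h : ChiData S T χ) {x y z : F} (hx : x ∈ S ⊓ T) (hy : y ∈ S ⊓ T) (hz : z ∈ S ⊓ T) :
    χ ⁅⁅x, y⁆, z⁆ + χ ⁅⁅y, z⁆, x⁆ + χ ⁅⁅z, x⁆, y⁆ = 0 := by
  have hx' := Subgroup.inv_mem _ hx
  have hy' := Subgroup.inv_mem _ hy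
  have hz' := Subgroup.inv_mem _ hz
  have e : ⁅⁅x, y⁆, z⁆⁻¹ = ((x * z) * ⁅⁅z⁻¹, x⁻¹⁆, y⁆ * (x * z)⁻¹) *
      ((x * y) * ⁅⁅y⁻¹, z⁆, x⁻¹⁆ * (x * y)⁻¹) := by
    simp only [commutatorElement_def]; group
  have m1 := mem_NT (mem_U2 hz' hx') hy
  have m2 := mem_NT (mem_U2 hy' hz) hx'
  have h1 := congrArg χ e
  rw [h.hom.inv (mem_NT (mem_U2 hx hy) hz),
    h.hom _ (Subgroup.Normal.conj_mem inferInstance _ m1 _) _ (Subgroup.Normal.conj_mem inferInstance _ m2 _),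
    h.conj m1 (T.mul_mem hx.2 hz.2), h.conj m2 (T.mul_mem hx.2 hy.2)] at h1
  have a1 : χ ⁅⁅z⁻¹, x⁻¹⁆, y⁆ = - χ ⁅⁅z, x⁻¹⁆, y⁆ := (h.tri1 hx' hy).inv hz
  have a2 : χ ⁅⁅z, x⁻¹⁆, y⁆ = - χ ⁅⁅z, x⁆, y⁆ := (h.tri2 hz hy).inv hx
  have a3 : χ ⁅⁅y⁻¹, z⁆, x⁻¹⁆ = - χ ⁅⁅y⁻¹, z⁆, x⁆ := (h.tri3 hy' hz).inv hx
  have a4 : χ ⁅⁅y⁻¹, z⁆, x⁆ = - χ ⁅⁅y, z⁆, x⁆ := (h.tri1 hz hx).inv hy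
  rw [a1, a2, a3, a4, neg_neg, neg_neg] at h1
  rw [← neg_eq_zero, neg_add, neg_add, h1]
  abel

end ChiData

end

section

variable {F : Type} [Group F]

/-- cocycle property -/
def Cocyc (V : Subgroup F) (D : F → Du F) : Prop :=
  ∀ t ∈ V, ∀ t' ∈ V, ∀ x, D (t * t') x = D t x + D t' (x * oo t)

theorem Cocyc.mul_one {V : Subgroup F} {D : F → Du F} (h : Cocyc V D) {x y : F} (hx : x ∈ V)
    (hy : y ∈ V) : D (x * y) 1 = D x 1 + D y 1 + D y (oo x - 1) := by
  rw [h x hx y hy, one_mul, map_sub]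
  abel

theorem Cocyc.comm_one {V : Subgroup F} {D : F → Du F} (h : Cocyc V D) {x r : F} (hx : x ∈ V)
    (hr : r ∈ V) : D ⁅x, r⁆ 1 = D r (oo x - 1) - D x (oo r - 1) - D (r * x) (oo ⁅x, r⁆ - 1) := by
  have hc : ⁅x, r⁆ ∈ V := by
    rw [commutatorElement_def]
    exact V.mul_mem (V.mul_mem (V.mul_mem hx hr) (V.inv_mem hx)) (V.inv_mem hr)
  have e : ⁅x, r⁆ * (r * x) = x * r := by rw [commutatorElement_def]; group
  have h1 := h _ hc _ (V.mul_mem hr hx) 1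
  have h2 := h _ hx _ hr 1
  have h3 := h _ hr _ hx 1
  rw [e] at h1
  rw [h2, one_mul, one_mul] at h1
  rw [one_mul] at h3
  have h4 : D ⁅x, r⁆ 1 = D x 1 + D r (oo x) - D (r * x) (oo ⁅x, r⁆) := by
    rw [h1]; abel
  rw [h4, map_sub, map_sub, map_sub, h3]
  abel

theorem quad_homOn {S : Subgroup F} {φ : F → QZ} {b : F → F → QZ} (hb : BiOn S S b)
    (hφ : ∀ x ∈ S, ∀ y ∈ S, φ (x * y) = φ x + φ y + b x y) : HomOn ⁅S, S⁆ φ := by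
  have hle : ⁅S, S⁆ ≤ S := Subgroup.commutator_le_self S
  intro x hx y hy
  rw [hφ x (hle hx) y (hle hy), (hb.1 y (hle hy)).zero_commutator hx, add_zero]

theorem quad_comm {S : Subgroup F} {φ : F → QZ} {b : F → F → QZ} (hb : BiOn S S b)
    (hφ : ∀ x ∈ S, ∀ y ∈ S, φ (x * y) = φ x + φ y + b x y) {p q : F} (hp : p ∈ S) (hq : q ∈ S) :
    φ ⁅p, q⁆ = b p q - b q p := by
  have hle : ⁅S, S⁆ ≤ S := Subgroup.commutator_le_self S
  have hpq : ⁅p, q⁆ ∈ ⁅S, S⁆ := Subgroup.commutator_mem_commutator hp hq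
  have h1 := hφ ⁅p, q⁆ (hle hpq) (q * p) (S.mul_mem hq hp)
  rw [(hb.1 _ (S.mul_mem hq hp)).zero_commutator hpq, hφ q hq p hp] at h1
  have h2 : ⁅p, q⁆ * (q * p) = p * q := by rw [commutatorElement_def]; group
  rw [h2, hφ p hp q hq] at h1
  have : φ ⁅p, q⁆ = (φ ⁅p, q⁆ + (φ q + φ p + b q p) + 0) - (φ q + φ p + b q p) := by abel
  rw [this, ← h1]
  abel

/-- a character of the commutator subgroup gives an alternating form -/
theorem HomOn.comm_bi {A : Subgroup F} {e : F → QZ} (he : HomOn ⁅A, A⁆ e)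
    (he0 : ∀ x ∈ ⁅⁅A, A⁆, A⁆, e x = 0) : BiOn A A (fun x y => e ⁅x, y⁆) := by
  have hle : ⁅A, A⁆ ≤ A := Subgroup.commutator_le_self A
  have hle2 : ⁅⁅A, A⁆, A⁆ ≤ ⁅A, A⁆ := Subgroup.commutator_mono hle le_rfl
  have conj : ∀ x ∈ ⁅A, A⁆, ∀ p ∈ A, p * x * p⁻¹ ∈ ⁅A, A⁆ ∧ e (p * x * p⁻¹) = e x := by
    intro x hx p hp
    have h1 : ⁅x, p⁆⁻¹ ∈ ⁅⁅A, A⁆, A⁆ := Subgroup.inv_mem _ (Subgroup.commutator_mem_commutator hx hp)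
    have e1 : p * x * p⁻¹ = ⁅x, p⁆⁻¹ * x := by simp only [commutatorElement_def]; group
    rw [e1]
    exact ⟨Subgroup.mul_mem _ (hle2 h1) hx, by rw [he _ (hle2 h1) _ hx, he0 _ h1, zero_add]⟩
  have cm : ∀ {x y}, x ∈ A → y ∈ A → ⁅x, y⁆ ∈ ⁅A, A⁆ := fun hx hy =>
    Subgroup.commutator_mem_commutator hx hy
  refine ⟨fun y hy x hx x' hx' => ?_, fun x hx y hy y' hy' => ?_⟩
  · have e1 : ⁅x * x', y⁆ = x * ⁅x', y⁆ * x⁻¹ * ⁅x, y⁆ := by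
      simp only [commutatorElement_def]; group
    have hm := conj _ (cm hx' hy) x hx
    show e ⁅x * x', y⁆ = e ⁅x, y⁆ + e ⁅x', y⁆
    rw [e1, he _ hm.1 _ (cm hx hy), hm.2, add_comm]
  · have e1 : ⁅x, y * y'⁆ = ⁅x, y⁆ * (y * ⁅x, y'⁆ * y⁻¹) := by
      simp only [commutatorElement_def]; group
    have hm := conj _ (cm hx hy') y hy
    show e ⁅x, y * y'⁆ = e ⁅x, y⁆ + e ⁅x, y'⁆
    rw [e1, he _ (cm hx hy) _ hm.1, hm.2]

theorem Lx_2 (g : F → QZ) (u v f : F) :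
    Lx g ((oo u - 1) * (oo v - 1) * oo f) = g (u * v * f) - g (u * f) - g (v * f) + g f := by
  have e : (oo u - 1) * (oo v - 1) * oo f = oo (u * v * f) - oo (u * f) - oo (v * f) + oo f := by
    simp only [oo_mul, sub_mul, mul_sub, one_mul, mul_one]
    abel
  rw [e, map_add, map_sub, map_sub, Lx_oo, Lx_oo, Lx_oo, Lx_oo]

theorem Lx_1 (g : F → QZ) (u f : F) :
    Lx g ((oo u - 1) * oo f) = g (u * f) - g f := by
  rw [sub_mul, one_mul, map_sub, ← oo_mul, Lx_oo, Lx_oo]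

/-- functions vanishing on the square of the ideal -/
theorem HypB.of_quad {U T : Subgroup F} [U.Normal] {b : F} (h : HypB U T b) (hb : b ∈ U)
    (φ : F → QZ) (l : F → F → QZ) (hl : BiOn U U l)
    (hφ : ∀ x ∈ U, ∀ y ∈ U, φ (x * y) = φ x + φ y + l x y) : φ b = φ 1 := by
  classical
  have := h.of_cubic (fun f => if f ∈ U then φ f else 0) (fun _ _ _ => 0)
    (fun _ _ _ _ _ _ _ _ => rfl) (fun u hu v hv w hw f hf => by
      have key : ∀ f, Lx (fun f => if f ∈ U then φ f else 0) ((oo u - 1) * (oo v - 1) * oo f) =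
          if f ∈ U then l u v else 0 := by
        intro f
        rw [Lx_2]
        simp only [mul_assoc, Subgroup.mul_mem_cancel_left U hu, Subgroup.mul_mem_cancel_left U hv]
        by_cases hf : f ∈ U
        · simp only [if_pos hf, ← mul_assoc]
          exact quad_diff2 hl hφ hu hv hf
        · simp [if_neg hf]
      rw [mul_assoc _ (oo w - 1), sub_mul (oo w), one_mul, ← oo_mul, mul_sub, map_sub, key, key]
      simp only [Subgroup.mul_mem_cancel_left U hw, sub_self])
  simpa [hb, U.one_mem] using this

theorem HypB.mem_comm {U T : Subgroup F} [U.Normal] {b : F} (h : HypB U T b) (hb : b ∈ U) :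
    b ∈ ⁅U, U⁆ := by
  refine hom_sep _ U (Subgroup.commutator_le_self U) le_rfl b hb (fun η hη _ => ?_)
  rw [h.of_quad hb η (fun _ _ => 0) ⟨fun _ _ => HomOn.zero_on, fun _ _ => HomOn.zero_on⟩
    (fun x hx y hy => by rw [hη x hx y hy, add_zero]), hη.one]

theorem HypB.mem_comm3 {U T : Subgroup F} [U.Normal] [IsFreeGroup U] {b : F} (h : HypB U T b)
    (hb : b ∈ U) : b ∈ ⁅⁅U, U⁆, U⁆ := by
  have hle : ⁅U, U⁆ ≤ U := Subgroup.commutator_le_self U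
  refine hom_sep _ ⁅U, U⁆ (Subgroup.commutator_mono hle le_rfl) (Subgroup.commutator_mono le_rfl hle)
    b (h.mem_comm hb) (fun ξ hξ hξ0 => ?_)
  have hz := hξ.comm_bi hξ0
  obtain ⟨l, hl1, hl2, -⟩ := bi_ext U ⊥ bot_le (fun x y => ξ ⁅x, y⁆) (fun _ _ => 0) hz
    (fun s _ => by simp [hξ.one]) ⟨fun _ _ => HomOn.zero_on, fun _ _ => HomOn.zero_on⟩
    (fun _ _ _ _ _ => rfl) (fun _ _ _ _ _ => rfl)
    (fun x hx y hy => by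
      rw [Subgroup.mem_bot] at hx hy
      simp [hx, hy, hξ.one])
  obtain ⟨φ, hφ1, hφ2⟩ := exists_quad_ext U l hl1 ξ hξ hl2
  rw [← hφ2 b (h.mem_comm hb), h.of_quad hb φ l hl1 hφ1, hφ2 1 (Subgroup.one_mem _), hξ.one]

/-- the cubic functional -/
theorem HypB.three_chi {S T : Subgroup F} [S.Normal] [T.Normal] [IsFreeGroup (S ⊓ T : Subgroup F)]
    {χ : F → QZ} (hχ : ChiData S T χ) {b : F} (h : HypB (S ⊓ T) T b)
    (hb : b ∈ ⁅⁅S ⊓ T, S ⊓ T⁆, S ⊓ T⁆) : (3 : ℤ) • χ b = 0 := by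
  classical
  set U : Subgroup F := S ⊓ T with hU
  have nU : ∀ f, ∀ u ∈ U, f * u * f⁻¹ ∈ U := fun f u hu => Subgroup.Normal.conj_mem inferInstance u hu f
  have hUT : ∀ {u}, u ∈ U → u ∈ T := fun h => h.2
  have triconj : ∀ p ∈ U, ∀ q ∈ U, ∀ r ∈ U, ∀ v ∈ U, χ ⁅⁅p, q⁆, v * r * v⁻¹⁆ = χ ⁅⁅p, q⁆, r⁆ :=
    fun p hp q hq r hr v hv => (hχ.tri3 hp hq).conj hr hv
  obtain ⟨D, hD1, hD2⟩ := exists_cocycle U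
    (fun k c => ∃ p ∈ U, ∃ q ∈ U, ∃ f, k = (oo p - 1) * (oo q - 1) * oo f ∧
      c = fun r => if f ∈ T then χ ⁅⁅p, q⁆, f * r * f⁻¹⁆ else 0)
    (by
      rintro k c ⟨p, hp, q, hq, f, rfl, rfl⟩
      simp [hχ.hom.one])
    (by
      rintro k c ⟨p, hp, q, hq, f, rfl, rfl⟩ t ht
      refine ⟨_, ⟨p, hp, q, hq, f * t, by rw [mul_assoc, ← oo_mul], rfl⟩, fun t' ht' => ?_⟩
      simp only [Subgroup.mul_mem_cancel_right T (hUT ht)]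
      by_cases hf : f ∈ T
      · simp only [if_pos hf]
        have e1 : f * (t * t') * f⁻¹ = (f * t * f⁻¹) * (f * t' * f⁻¹) := by group
        have e2 : f * t * t' * (f * t)⁻¹ = (f * t * f⁻¹) * (f * t' * f⁻¹) * (f * t * f⁻¹)⁻¹ := by group
        have e3 : χ ⁅⁅p, q⁆, (f * t * f⁻¹) * (f * t' * f⁻¹)⁆ =
            χ ⁅⁅p, q⁆, f * t * f⁻¹⁆ + χ ⁅⁅p, q⁆, f * t' * f⁻¹⁆ :=
          hχ.tri3 hp hq _ (nU f t ht) _ (nU f t' ht')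
        rw [e1, e2, triconj p hp q hq _ (nU f t' ht') _ (nU f t ht), e3]
      · simp [if_neg hf])
    (by
      intro r hr
      obtain ⟨rep, hr1, hr2⟩ := exists_rep U
      have ex : ∀ k : F, ∃ φ : F → QZ, ∀ x ∈ U, ∀ y ∈ U,
          φ (x * y) = φ x + φ y + χ ⁅⁅x, y⁆, k * r * k⁻¹⁆ := by
        intro k
        have hk := nU k r hr
        exact exists_quad U (fun x y => χ ⁅⁅x, y⁆, k * r * k⁻¹⁆)
          ⟨fun y hy => hχ.tri1 hy hk, fun x hx => hχ.tri2 hx hk⟩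
      choose φ hφ using ex
      refine ⟨Lx (fun f => if f ∈ T then φ (rep f) (f * (rep f)⁻¹) else 0), ?_⟩
      rintro k c ⟨p, hp, q, hq, f, rfl, rfl⟩
      have rl : ∀ u ∈ U, ∀ f, rep (u * f) = rep f := by
        intro u hu f
        have e : u * f = f * (f⁻¹ * u * f⁻¹⁻¹) := by group
        rw [e, hr2 _ _ (nU f⁻¹ u hu)]
      have hx : f * (rep f)⁻¹ ∈ U := by
        have := nU (rep f) _ (hr1 f)
        simpa [mul_assoc] using this
      rw [Lx_2]
      simp only [mul_assoc, Subgroup.mul_mem_cancel_left T (hUT hp),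
        Subgroup.mul_mem_cancel_left T (hUT hq), rl p hp, rl q hq]
      by_cases hf : f ∈ T
      · simp only [if_pos hf]
        have hk := nU (rep f) r hr
        have := quad_diff2 (b := fun x y => χ ⁅⁅x, y⁆, rep f * r * (rep f)⁻¹⁆)
          ⟨fun y hy => hχ.tri1 hy hk, fun x hx => hχ.tri2 hx hk⟩ (hφ (rep f)) hp hq hx
        simp only [mul_assoc] at this
        rw [this]
        have e : f * (r * f⁻¹) = (f * (rep f)⁻¹) * (rep f * r * (rep f)⁻¹) * (f * (rep f)⁻¹)⁻¹ := by group
        rw [e, triconj p hp q hq _ hk _ hx, mul_assoc]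
      · simp [if_neg hf])
  have hD : Cocyc U D := hD1
  obtain ⟨Ψ, hΨ⟩ := exists_Psi U D hD1
  have hle : ⁅U, U⁆ ≤ U := Subgroup.commutator_le_self U
  have hle2 : ⁅⁅U, U⁆, U⁆ ≤ ⁅U, U⁆ := Subgroup.commutator_mono hle le_rfl
  have hU2 : ∀ {x}, x ∈ ⁅U, U⁆ → x ∈ ⁅S, S⁆ ⊓ T := fun hx => ChiData.U'_le hx
  have D2 : ∀ p ∈ U, ∀ q ∈ U, ∀ r ∈ U, D r ((oo p - 1) * (oo q - 1)) = χ ⁅⁅p, q⁆, r⁆ := by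
    intro p hp q hq r hr
    have := hD2 r hr _ _ ⟨p, hp, q, hq, 1, rfl, rfl⟩
    rw [oo_one, mul_one] at this
    rw [this]
    simp [T.one_mem]
  -- the value at `b`
  have v0 : D b 1 = 0 := by
    have hbU : b ∈ U := hle (hle2 hb)
    have := h.of_cubic (fun f => Ψ (oo f)) (fun u v w => χ ⁅⁅u, v⁆, w⁆)
      (fun u hu v hv w hw t ht => hχ.tri_T hu hv hw ht)
      (fun u hu v hv w hw f hf => by
        have e0 : Lx (fun f => Ψ (oo f)) = Ψ := du_ext (fun f => Lx_oo _ f)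
        have hw' : f⁻¹ * w * f ∈ U := by simpa using nU f⁻¹ w hw
        rw [e0, mul_assoc _ (oo w - 1), conj_oo, ← mul_assoc, hΨ _ hw',
          hD2 _ hw' _ _ ⟨u, hu, v, hv, f, rfl, rfl⟩, if_pos hf]
        congr 2
        group)
    rw [← hΨ b hbU, one_mul, map_sub, this, oo_one, sub_self]
  -- first slot
  have q1 : ∀ r ∈ U, ∀ x ∈ U, ∀ y ∈ U,
      D r (oo (x * y) - 1) = D r (oo x - 1) + D r (oo y - 1) + χ ⁅⁅x, y⁆, r⁆ := by
    intro r hr x hx y hy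
    rw [← D2 x hx y hy r hr, ← map_add, ← map_add]
    congr 1
    rw [oo_mul]
    noncomm_ring
  have b1 : ∀ r ∈ U, BiOn U U (fun x y => χ ⁅⁅x, y⁆, r⁆) := fun r hr =>
    ⟨fun y hy => hχ.tri1 hy hr, fun x hx => hχ.tri2 hx hr⟩
  have l1 : ∀ r ∈ U, HomOn ⁅U, U⁆ (fun x => D r (oo x - 1)) := fun r hr =>
    quad_homOn (φ := fun x => D r (oo x - 1)) (b1 r hr) (q1 r hr)
  have c1 : ∀ r ∈ U, ∀ x ∈ U, ∀ y ∈ U, D r (oo ⁅x, y⁆ - 1) = χ ⁅⁅x, y⁆, r⁆ - χ ⁅⁅y, x⁆, r⁆ :=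
    fun r hr x hx y hy => quad_comm (φ := fun x => D r (oo x - 1)) (b1 r hr) (q1 r hr) hx hy
  have z1 : ∀ r ∈ U, ∀ x ∈ ⁅⁅U, U⁆, U⁆, D r (oo x - 1) = 0 := by
    intro r hr x hx
    refine HomOn.eq_commutator (l1 r hr) HomOn.zero_on hle2 (fun x hx y hy => ?_) hx
    rw [c1 r hr x (hle hx) y hy, hχ.tri_z1 (hU2 hx).1 hy hr, hχ.tri_z2 hy (hU2 hx) hr, sub_zero]
  -- second slot
  have q2 : ∀ r ∈ U, ∀ x ∈ U, ∀ y ∈ U,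
      D (x * y) (oo r - 1) = D x (oo r - 1) + D y (oo r - 1) + χ ⁅⁅r, x⁆, y⁆ := by
    intro r hr x hx y hy
    rw [hD x hx y hy, ← D2 r hr x hx y hy, add_assoc, ← map_add]
    congr 2
    noncomm_ring
  have b2 : ∀ r ∈ U, BiOn U U (fun x y => χ ⁅⁅r, x⁆, y⁆) := fun r hr =>
    ⟨fun y hy => hχ.tri2 hr hy, fun x hx => hχ.tri3 hr hx⟩
  have l2 : ∀ r ∈ U, HomOn ⁅U, U⁆ (fun x => D x (oo r - 1)) := fun r hr =>
    quad_homOn (φ := fun x => D x (oo r - 1)) (b2 r hr) (q2 r hr)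
  have c2 : ∀ r ∈ U, ∀ x ∈ U, ∀ y ∈ U, D ⁅x, y⁆ (oo r - 1) = χ ⁅⁅r, x⁆, y⁆ - χ ⁅⁅r, y⁆, x⁆ :=
    fun r hr x hx y hy => quad_comm (φ := fun x => D x (oo r - 1)) (b2 r hr) (q2 r hr) hx hy
  have hE : HomOn ⁅⁅U, U⁆, U⁆ (fun y => D y 1) := by
    intro x hx y hy
    simp only
    rw [hD.mul_one (hle (hle2 hx)) (hle (hle2 hy)), z1 _ (hle (hle2 hy)) x hx, add_zero]
  have hχ3 : HomOn ⁅⁅U, U⁆, U⁆ (fun y => (3 : ℤ) • χ y) := by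
    refine HomOn.smul 3 (hχ.hom.mono (le_inf ?_ ?_))
    · exact Subgroup.commutator_mono (Subgroup.commutator_mono inf_le_left inf_le_left) inf_le_left
    · exact (hle2.trans hle).trans inf_le_right
  have fin : D b 1 = (3 : ℤ) • χ b := by
    refine HomOn.eq_commutator hE hχ3 le_rfl (fun x hx r hr => ?_) hb
    have hc : ⁅x, r⁆ ∈ ⁅⁅U, U⁆, U⁆ := Subgroup.commutator_mem_commutator hx hr
    rw [hD.comm_one (hle hx) hr, z1 _ (U.mul_mem hr (hle hx)) _ hc, sub_zero]
    refine HomOn.eq_commutator (A := ⁅U, U⁆) ((l1 r hr).sub (l2 r hr))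
      (HomOn.smul 3 ((hχ.bi.1 r hr).mono (fun x hx => hU2 hx))) le_rfl (fun p hp q hq => ?_) hx
    simp only
    rw [c1 r hr p hp q hq, c2 r hr p hp q hq, hχ.tri_swap hp hq hr, hχ.tri_swap (p := q) (q := r) hq hr hp]
    have J := hχ.jacobi hp hq hr
    have J' : χ ⁅⁅r, p⁆, q⁆ = - χ ⁅⁅p, q⁆, r⁆ - χ ⁅⁅q, r⁆, p⁆ := by
      rw [eq_sub_iff_add_eq, eq_neg_iff_add_eq_zero, ← J]; abel
    rw [J']
    abel
  rw [← fin, v0]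

end

section

variable {F : Type} [Group F]

theorem BiOn.mul_left {A B : Subgroup F} {b : F → F → QZ} (h : BiOn A B b) {x x' y : F} (hx : x ∈ A)
    (hx' : x' ∈ A) (hy : y ∈ B) : b (x * x') y = b x y + b x' y := h.1 y hy x hx x' hx'

theorem BiOn.mul_right {A B : Subgroup F} {b : F → F → QZ} (h : BiOn A B b) {x y y' : F} (hx : x ∈ A)
    (hy : y ∈ B) (hy' : y' ∈ B) : b x (y * y') = b x y + b x y' := h.2 x hx y hy y' hy'

theorem kill_t {S : Subgroup F} [S.Normal] (G : Du F)
    (hG : ∀ s ∈ S, ∀ f, G ((oo s - 1) * oo f) = 0) (t s : F) (hs : s ∈ S) (x : MonoidAlgebra ℤ F) :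
    G ((oo t - 1) * (oo s - 1) * x) = 0 := by
  have e : (oo t - 1) * (oo s - 1) * x = (oo (t * s * t⁻¹) - 1) * (oo t * x) - (oo s - 1) * x := by
    rw [sub_mul (oo t), oo_conj, one_mul, sub_mul, mul_assoc]
  rw [e, map_sub, du_ext_zero G _ (hG _ (Subgroup.Normal.conj_mem inferInstance s hs t)),
    du_ext_zero G _ (hG s hs), sub_zero]

theorem kill_t2 {S : Subgroup F} [S.Normal] (G : Du F)
    (hG : ∀ s ∈ S, ∀ s' ∈ S, ∀ f, G ((oo s - 1) * (oo s' - 1) * oo f) = 0) (t s s' : F) (hs : s ∈ S)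
    (hs' : s' ∈ S) (x : MonoidAlgebra ℤ F) :
    G ((oo t - 1) * (oo s - 1) * (oo s' - 1) * x) = 0 := by
  have e : (oo t - 1) * (oo s - 1) * (oo s' - 1) * x =
      (oo (t * s * t⁻¹) - 1) * (oo (t * s' * t⁻¹) - 1) * (oo t * x) - (oo s - 1) * (oo s' - 1) * x := by
    rw [sub_mul (oo t), oo_conj, one_mul, sub_mul, sub_mul, mul_assoc _ (oo t), oo_conj]
    simp only [mul_assoc]
  have n := fun s hs => Subgroup.Normal.conj_mem (H := S) inferInstance s hs t
  rw [e, map_sub, du_ext_zero G _ (hG _ (n s hs) _ (n s' hs')), du_ext_zero G _ (hG s hs s' hs'), sub_zero]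

variable {S T : Subgroup F} [S.Normal] [T.Normal] {ρ : F →* F}

/-- Step 2 -/
theorem HypA.mem_comm {a : F} (h : HypA S T a) (hρ : RhoData S T ρ) : a ∈ ⁅S ⊓ T, S ⊓ T⁆ := by
  have ha : a ∈ S ⊓ T := h.memU
  have nU : ∀ f, ∀ u ∈ S ⊓ T, f * u * f⁻¹ ∈ S ⊓ T := fun f u hu =>
    Subgroup.Normal.conj_mem inferInstance u hu f
  have hb : ρ a ∈ ⁅S ⊓ T, S ⊓ T⁆ := (h.hypB hρ).mem_comm (hρ.memU ha.1)
  have hw : a * (ρ a)⁻¹ ∈ ⁅S ⊓ T, S ⊓ T⁆ := by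
    refine hom_sep _ (S ⊓ T) (Subgroup.commutator_le_self _) le_rfl _ (hρ.wU ha.2) (fun η hη _ => ?_)
    let D : F → Du F := fun t => Lx (fun f => η (ρ f * (t * (ρ t)⁻¹) * (ρ f)⁻¹))
    have hk : ∀ t ∈ T, ∀ s ∈ S, ∀ f, D t ((oo s - 1) * oo f) = 0 := by
      intro t ht s hs f
      simp only [D]
      rw [Lx_1, sub_eq_zero]
      have e : ρ (s * f) * (t * (ρ t)⁻¹) * (ρ (s * f))⁻¹ =
          ρ s * (ρ f * (t * (ρ t)⁻¹) * (ρ f)⁻¹) * (ρ s)⁻¹ := by rw [map_mul]; group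
      rw [e, hη.conj (nU _ _ (hρ.wU ht)) (hρ.memU hs)]
    have hD : Cocyc T D := by
      intro t ht t' ht' x
      have : D (t * t') = D t + (D t').comp (LinearMap.mulRight ℤ (oo t)) := by
        refine du_ext (fun f => ?_)
        simp only [D, LinearMap.add_apply, LinearMap.comp_apply, LinearMap.mulRight_apply]
        rw [← oo_mul, Lx_oo, Lx_oo, Lx_oo, ← hη _ (nU _ _ (hρ.wU ht)) _ (nU _ _ (hρ.wU ht'))]
        congr 1
        rw [map_mul, map_mul]
        group
      rw [this]
      rfl
    have := h.cocycle ha.2 D hD (fun u hu s hs s' hs' t ht f => by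
        rw [mul_assoc, mul_assoc]
        exact du_ext_zero (D t) _ (hk t ht u hu.1) _)
      (fun t ht s hs s' hs' u hu f => by
        rw [mul_assoc]
        exact kill_t (D u) (hk u hu.2) t s hs _)
    simp only [D] at this
    rw [Lx_one] at this
    simpa using this
  have := Subgroup.mul_mem _ hw hb
  simpa using this

/-- Step 3 -/
theorem HypA.mem_H [IsFreeGroup S] [IsFreeGroup T] [IsFreeGroup (S ⊓ T : Subgroup F)] {a : F}
    (h : HypA S T a) (hρ : RhoData S T ρ) :
    a ∈ ⁅⁅S, S⁆ ⊓ T, ⁅S, S⁆ ⊓ T⁆ ⊔ ⁅⁅S ⊓ T, S ⊓ T⁆, S ⊓ T⁆ := by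
  classical
  have ha' : a ∈ ⁅S ⊓ T, S ⊓ T⁆ := h.mem_comm hρ
  have ha : a ∈ S ⊓ T := h.memU
  have hb : ρ a ∈ ⁅⁅S ⊓ T, S ⊓ T⁆, S ⊓ T⁆ := (h.hypB hρ).mem_comm3 (hρ.memU ha.1)
  have nU : ∀ f, ∀ u ∈ S ⊓ T, f * u * f⁻¹ ∈ S ⊓ T := fun f u hu =>
    Subgroup.Normal.conj_mem inferInstance u hu f
  set U : Subgroup F := S ⊓ T with hUdef
  have hle : ⁅U, U⁆ ≤ U := Subgroup.commutator_le_self U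
  have hUS : U ≤ S := inf_le_left
  have hUT : U ≤ T := inf_le_right
  have hU'2 : ⁅U, U⁆ ≤ ⁅S, S⁆ ⊓ T := ChiData.U'_le
  have hU2U : ⁅S, S⁆ ⊓ T ≤ U := ChiData.U2_le
  refine hom_sep _ ⁅U, U⁆ (sup_le (Subgroup.commutator_mono hU2U hU2U) (Subgroup.commutator_mono hle le_rfl))
    ((Subgroup.commutator_mono hU'2 hU'2).trans le_sup_left) a ha' (fun ξ hξ hξ0 => ?_)
  have hz := hξ.comm_bi (fun x hx => hξ0 x (le_sup_right (a := ⁅⁅S, S⁆ ⊓ T, ⁅S, S⁆ ⊓ T⁆) hx))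
  obtain ⟨l, hl1, hl2, hl3⟩ := bi_I4 S U hUS (fun x y => ξ ⁅x, y⁆) hz (fun u _ => by simp [hξ.one])
    (fun u hu v hv hu' hv' => hξ0 _ (le_sup_left (b := ⁅⁅U, U⁆, U⁆)
      (Subgroup.commutator_mem_commutator ⟨hu', hu.2⟩ ⟨hv', hv.2⟩)))
  let z : F → F → QZ := fun x y => ξ ⁅x, y⁆
  have hz : BiOn U U z := hz
  have hl3 : ∀ u ∈ U, ∀ v ∈ U, l u v - l v u = z u v := hl3
  have hρU : ∀ {u}, u ∈ U → ρ u ∈ U := fun hu => hρ.memU (hUS hu)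
  have hwU : ∀ {u}, u ∈ T → u * (ρ u)⁻¹ ∈ U := fun hu => hρ.wU hu
  let c : F → F → QZ := fun p w => l (p * (ρ p)⁻¹) w + z (ρ p) w
  have hc : BiOn U U c := by
    refine ⟨fun w hw p hp p' hp' => ?_, fun p hp w hw w' hw' => ?_⟩
    · simp only [c]
      have e : l (ρ p * (p' * (ρ p')⁻¹) * (ρ p)⁻¹) w = l (p' * (ρ p')⁻¹) w :=
        (hl1.1 w hw).conj (hwU (hUT hp')) (hρU hp)
      rw [RhoData.w_mul, hl1.mul_left (hwU (hUT hp)) (nU _ _ (hwU (hUT hp'))) hw, e, map_mul,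
        hz.mul_left (hρU hp) (hρU hp') hw]
      abel
    · simp only [c]
      rw [hl1.mul_right (hwU (hUT hp)) hw hw', hz.mul_right (hρU hp) hw hw']
      abel
  have hc0 : ∀ p ∈ U, p ∈ ⁅S, S⁆ → ∀ w ∈ U, c p w = 0 := by
    intro p hp hp' w hw
    simp only [c]
    have h1 : ρ p ∈ ⁅U, U⁆ := hρ.map_comm hp'
    have h2 : p * (ρ p)⁻¹ ∈ ⁅S, S⁆ := Subgroup.mul_mem _ hp' (Subgroup.inv_mem _ (hU'2 h1).1)
    rw [hl2 _ (hwU (hUT hp)) _ hw h2, (hz.1 w hw).zero_commutator h1, add_zero]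
  obtain ⟨D, hD1, hD2⟩ := exists_cocycle T
    (fun k c' => (∃ s ∈ S, ∃ s' ∈ S, ∃ f, k = (oo s - 1) * (oo s' - 1) * oo f ∧ c' = fun _ => 0) ∨
      (∃ p ∈ U, ∃ f, k = (oo p - 1) * oo f ∧ c' = fun t => c p (ρ f * (t * (ρ t)⁻¹) * (ρ f)⁻¹)))
    (by
      rintro k c' (⟨s, hs, s', hs', f, rfl, rfl⟩ | ⟨p, hp, f, rfl, rfl⟩)
      · rfl
      · simp [(hc.2 p hp).one])
    (by
      rintro k c' (⟨s, hs, s', hs', f, rfl, rfl⟩ | ⟨p, hp, f, rfl, rfl⟩) t ht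
      · refine ⟨fun _ => 0, Or.inl ⟨s, hs, s', hs', f * t, by rw [mul_assoc, ← oo_mul], rfl⟩, ?_⟩
        intros
        simp
      · refine ⟨_, Or.inr ⟨p, hp, f * t, by rw [mul_assoc, ← oo_mul], rfl⟩, fun t' ht' => ?_⟩
        simp only
        rw [← hc.mul_right hp (nU _ _ (hwU ht)) (nU _ _ (hwU ht'))]
        congr 1
        rw [map_mul, map_mul]
        group)
    (by
      intro t ht
      have hw := hwU ht
      obtain ⟨rep, hr1, hr2⟩ := exists_rep S
      have ex : ∀ k : F, ∃ φ : F → QZ, HomOn S φ ∧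
          (∀ x ∈ U, φ x = c x (ρ k * (t * (ρ t)⁻¹) * (ρ k)⁻¹)) ∧ ∀ x ∈ ⁅S, S⁆, φ x = 0 := by
        intro k
        have hk := nU (ρ k) _ hw
        exact hom_ext_on U ⁅S, S⁆ S hUS (Subgroup.commutator_le_self S) le_rfl _ (hc.1 _ hk)
          (fun x hx hx' => hc0 x hx hx' _ hk)
      choose φ hφ1 hφ2 hφ3 using ex
      have rl : ∀ u ∈ S, ∀ f, rep (u * f) = rep f := by
        intro u hu f
        have e : u * f = f * (f⁻¹ * u * f⁻¹⁻¹) := by group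
        rw [e, hr2 _ _ (Subgroup.Normal.conj_mem inferInstance u hu f⁻¹)]
      have hx : ∀ f, f * (rep f)⁻¹ ∈ S := by
        intro f
        have := Subgroup.Normal.conj_mem (H := S) inferInstance _ (hr1 f) (rep f)
        simpa [mul_assoc] using this
      refine ⟨Lx (fun f => φ (rep f) (f * (rep f)⁻¹)), ?_⟩
      have key : ∀ s ∈ S, ∀ f, φ (rep (s * f)) (s * f * (rep (s * f))⁻¹) =
          φ (rep f) s + φ (rep f) (f * (rep f)⁻¹) := by
        intro s hs f
        rw [rl s hs, mul_assoc, hφ1 _ _ hs _ (hx f)]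
      rintro k c' (⟨s, hs, s', hs', f, rfl, rfl⟩ | ⟨p, hp, f, rfl, rfl⟩)
      · rw [Lx_2, mul_assoc, key s hs, key s' hs', key s hs, rl s' hs']
        show _ = (0 : QZ)
        abel
      · rw [Lx_1, key p (hUS hp), add_sub_cancel_right, hφ2 _ p hp]
        have hm : ρ (f * (rep f)⁻¹) ∈ U := hρ.memU (hx f)
        have := (hc.2 p hp).conj (nU (ρ (rep f)) _ hw) hm
        rw [← this]
        congr 1
        rw [map_mul, map_inv]
        group)
  have hD : Cocyc T D := hD1
  have hk : ∀ t ∈ T, ∀ s ∈ S, ∀ s' ∈ S, ∀ f, D t ((oo s - 1) * (oo s' - 1) * oo f) = 0 :=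
    fun t ht s hs s' hs' f => hD2 t ht _ _ (Or.inl ⟨s, hs, s', hs', f, rfl, rfl⟩)
  have hkc : ∀ t ∈ T, ∀ p ∈ U, D t (oo p - 1) = c p (t * (ρ t)⁻¹) := by
    intro t ht p hp
    have := hD2 t ht _ _ (Or.inr ⟨p, hp, 1, rfl, rfl⟩)
    rw [oo_one, mul_one] at this
    rw [this]
    simp
  have v0 := h.cocycle ha.2 D hD (fun u hu s hs s' hs' t ht f => by
      rw [mul_assoc]
      exact du_ext_zero (D t) _ (hk t ht u hu.1 s hs) _)
    (fun t ht s hs s' hs' u hu f => kill_t2 (D u) (hk u hu.2) t s s' hs hs' _)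
  have hE : HomOn ⁅U, U⁆ (fun y => D y 1) := by
    intro x hx y hy
    simp only
    have hyU := hle hy
    rw [hD.mul_one (hUT (hle hx)) (hUT hyU), hkc _ (hUT hyU) _ (hle hx),
      hc0 _ (hle hx) (hU'2 hx).1 _ (hwU (hUT hyU)), add_zero]
  have hξρ : HomOn ⁅U, U⁆ (fun x => ξ x - ξ (ρ x)) := by
    refine hξ.sub (hξ.comp_hom ρ (fun x hx => hρ.map_comm (hU'2 hx).1))
  have fin : D a 1 = ξ a - ξ (ρ a) := by
    refine HomOn.eq_commutator hE hξρ le_rfl (fun u hu v hv => ?_) ha'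
    have hcm : ⁅u, v⁆ ∈ ⁅U, U⁆ := Subgroup.commutator_mem_commutator hu hv
    have hvu := hUT (U.mul_mem hv hu)
    rw [hD.comm_one (hUT hu) (hUT hv), hkc _ (hUT hv) _ hu, hkc _ (hUT hu) _ hv, hkc _ hvu _ (hle hcm),
      hc0 _ (hle hcm) (hU'2 hcm).1 _ (hwU hvu), sub_zero, map_commutatorElement]
    change c u (v * (ρ v)⁻¹) - c v (u * (ρ u)⁻¹) = z u v - z (ρ u) (ρ v)
    have wu := hwU (hUT hu)
    have wv := hwU (hUT hv)
    have pu := hρU hu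
    have pv := hρU hv
    have eu : z u v = z (u * (ρ u)⁻¹ * ρ u) (v * (ρ v)⁻¹ * ρ v) := by simp
    have zs : z (ρ v) (u * (ρ u)⁻¹) = - z (u * (ρ u)⁻¹) (ρ v) := by
      simp only [z]
      rw [← commutatorElement_inv, hξ.inv (Subgroup.commutator_mem_commutator wu pv)]
    rw [eu, hz.mul_left wu pu (U.mul_mem wv pv), hz.mul_right wu wv pv, hz.mul_right pu wv pv]
    simp only [c]
    rw [zs, ← hl3 _ wu _ wv]
    abel
  have hξb : ξ (ρ a) = 0 := hξ0 _ (le_sup_right (a := ⁅⁅S, S⁆ ⊓ T, ⁅S, S⁆ ⊓ T⁆) hb)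
  rw [v0, hξb, sub_zero] at fin
  exact fin.symm

end

section

variable {F : Type} [Group F]

/-- the quartic correction term -/
noncomputable def psi (χ : F → QZ) (p P q Q w : F) : QZ :=
  χ ⁅⁅p, w⁆, q⁆ - (2 : ℤ) • χ ⁅⁅q, w⁆, p⁆ - χ ⁅⁅p, w⁆, Q⁆ - χ ⁅⁅Q, w⁆, p⁆
    - χ ⁅⁅P, w⁆, q⁆ - χ ⁅⁅q, w⁆, P⁆ + χ ⁅⁅P, w⁆, Q⁆ - (2 : ℤ) • χ ⁅⁅Q, w⁆, P⁆

/-- indistinguishable by characters of `U` -/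
def HRel (U : Subgroup F) (x y : F) : Prop := x ∈ U ∧ y ∈ U ∧ ∀ h : F → QZ, HomOn U h → h x = h y

theorem HRel.refl {U : Subgroup F} {x : F} (hx : x ∈ U) : HRel U x x := ⟨hx, hx, fun _ _ => rfl⟩

theorem HRel.conj {U : Subgroup F} {x v : F} (hx : x ∈ U) (hv : v ∈ U) : HRel U (v * x * v⁻¹) x :=
  ⟨U.mul_mem (U.mul_mem hv hx) (U.inv_mem hv), hx, fun _ H => H.conj hx hv⟩

namespace ChiData

variable {S T : Subgroup F} [S.Normal] [T.Normal] {χ : F → QZ}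

theorem tri_rel (h : ChiData S T χ) {x y z x' y' z' : F} (hx : HRel (S ⊓ T) x x')
    (hy : HRel (S ⊓ T) y y') (hz : HRel (S ⊓ T) z z') : χ ⁅⁅x, y⁆, z⁆ = χ ⁅⁅x', y'⁆, z'⁆ := by
  have h1 : χ ⁅⁅x, y⁆, z⁆ = χ ⁅⁅x', y⁆, z⁆ := hx.2.2 _ (h.tri1 hy.1 hz.1)
  have h2 : χ ⁅⁅x', y⁆, z⁆ = χ ⁅⁅x', y'⁆, z⁆ := hy.2.2 _ (h.tri2 hx.2.1 hz.1)
  have h3 : χ ⁅⁅x', y'⁆, z⁆ = χ ⁅⁅x', y'⁆, z'⁆ := hz.2.2 _ (h.tri3 hx.2.1 hy.2.1)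
  rw [h1, h2, h3]

theorem psi_rel (h : ChiData S T χ) {p P q Q w p' P' q' Q' w' : F} (hp : HRel (S ⊓ T) p p')
    (hP : HRel (S ⊓ T) P P') (hq : HRel (S ⊓ T) q q') (hQ : HRel (S ⊓ T) Q Q')
    (hw : HRel (S ⊓ T) w w') : psi χ p P q Q w = psi χ p' P' q' Q' w' := by
  unfold psi
  rw [h.tri_rel hp hw hq, h.tri_rel hp hw hQ, h.tri_rel hP hw hq, h.tri_rel hP hw hQ,
    h.tri_rel hq hw hp, h.tri_rel hq hw hP, h.tri_rel hQ hw hp, h.tri_rel hQ hw hP]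

theorem psi_T (h : ChiData S T χ) {p P q Q w t : F} (hp : p ∈ S ⊓ T) (hP : P ∈ S ⊓ T)
    (hq : q ∈ S ⊓ T) (hQ : Q ∈ S ⊓ T) (hw : w ∈ S ⊓ T) (ht : t ∈ T) :
    psi χ (t * p * t⁻¹) (t * P * t⁻¹) (t * q * t⁻¹) (t * Q * t⁻¹) (t * w * t⁻¹) = psi χ p P q Q w := by
  unfold psi
  rw [h.tri_T hp hw hq ht, h.tri_T hp hw hQ ht, h.tri_T hP hw hq ht, h.tri_T hP hw hQ ht,
    h.tri_T hq hw hp ht, h.tri_T hq hw hP ht, h.tri_T hQ hw hp ht, h.tri_T hQ hw hP ht]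

variable {ρ : F →* F}

theorem psi_hom1 (h : ChiData S T χ) (hρ : ∀ u ∈ S ⊓ T, ρ u ∈ S ⊓ T) {q Q w : F}
    (hq : q ∈ S ⊓ T) (hQ : Q ∈ S ⊓ T) (hw : w ∈ S ⊓ T) :
    HomOn (S ⊓ T) (fun p => psi χ p (ρ p) q Q w) :=
  ((((((((h.tri1 hw hq).sub ((h.tri3 hq hw).smul 2)).sub (h.tri1 hw hQ)).sub (h.tri3 hQ hw)).sub ((h.tri1 hw hq).comp_hom ρ hρ)).sub ((h.tri3 hq hw).comp_hom ρ hρ)).add ((h.tri1 hw hQ).comp_hom ρ hρ)).sub (((h.tri3 hQ hw).smul 2).comp_hom ρ hρ))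

theorem psi_hom2 (h : ChiData S T χ) (hρ : ∀ u ∈ S ⊓ T, ρ u ∈ S ⊓ T) {p P w : F}
    (hp : p ∈ S ⊓ T) (hP : P ∈ S ⊓ T) (hw : w ∈ S ⊓ T) :
    HomOn (S ⊓ T) (fun q => psi χ p P q (ρ q) w) :=
  ((((((((h.tri3 hp hw).sub ((h.tri1 hw hp).smul 2)).sub ((h.tri3 hp hw).comp_hom ρ hρ)).sub ((h.tri1 hw hp).comp_hom ρ hρ)).sub (h.tri3 hP hw)).sub (h.tri1 hw hP)).add ((h.tri3 hP hw).comp_hom ρ hρ)).sub (((h.tri1 hw hP).smul 2).comp_hom ρ hρ))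

theorem psi_hom3 (h : ChiData S T χ) {p P q Q : F}
    (hp : p ∈ S ⊓ T) (hP : P ∈ S ⊓ T) (hq : q ∈ S ⊓ T) (hQ : Q ∈ S ⊓ T) :
    HomOn (S ⊓ T) (fun w => psi χ p P q Q w) :=
  ((((((((h.tri2 hp hq).sub ((h.tri2 hq hp).smul 2)).sub (h.tri2 hp hQ)).sub (h.tri2 hQ hp)).sub (h.tri2 hP hq)).sub (h.tri2 hq hP)).add (h.tri2 hP hQ)).sub ((h.tri2 hQ hP).smul 2))

theorem psi_z1 (h : ChiData S T χ) {p P q Q w : F} (hp : p ∈ ⁅S, S⁆ ⊓ T) (hP : P ∈ ⁅S, S⁆ ⊓ T)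
    (hq : q ∈ S ⊓ T) (hQ : Q ∈ S ⊓ T) (hw : w ∈ S ⊓ T) : psi χ p P q Q w = 0 := by
  unfold psi
  rw [h.tri_z1 hp.1 hw hq, h.tri_z1 hp.1 hw hQ, h.tri_z1 hP.1 hw hq, h.tri_z1 hP.1 hw hQ,
    h.tri_z3 hq hw hp, h.tri_z3 hq hw hP, h.tri_z3 hQ hw hp, h.tri_z3 hQ hw hP]
  simp

theorem psi_z2 (h : ChiData S T χ) {p P q Q w : F} (hq : q ∈ ⁅S, S⁆ ⊓ T) (hQ : Q ∈ ⁅S, S⁆ ⊓ T)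
    (hp : p ∈ S ⊓ T) (hP : P ∈ S ⊓ T) (hw : w ∈ S ⊓ T) : psi χ p P q Q w = 0 := by
  unfold psi
  rw [h.tri_z3 hp hw hq, h.tri_z3 hp hw hQ, h.tri_z3 hP hw hq, h.tri_z3 hP hw hQ,
    h.tri_z1 hq.1 hw hp, h.tri_z1 hq.1 hw hP, h.tri_z1 hQ.1 hw hp, h.tri_z1 hQ.1 hw hP]
  simp

/-- normal forms of triple brackets -/
theorem tri_nf (h : ChiData S T χ) {x y z : F} (hx : x ∈ S ⊓ T) (hy : y ∈ S ⊓ T) (hz : z ∈ S ⊓ T) :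
    χ ⁅⁅y, x⁆, z⁆ = - χ ⁅⁅x, y⁆, z⁆ ∧ χ ⁅⁅z, y⁆, x⁆ = - χ ⁅⁅y, z⁆, x⁆ ∧
      χ ⁅⁅z, x⁆, y⁆ = - χ ⁅⁅x, y⁆, z⁆ - χ ⁅⁅y, z⁆, x⁆ ∧
      χ ⁅⁅x, z⁆, y⁆ = χ ⁅⁅x, y⁆, z⁆ + χ ⁅⁅y, z⁆, x⁆ := by
  have J := h.jacobi hx hy hz
  have J' : χ ⁅⁅z, x⁆, y⁆ = - χ ⁅⁅x, y⁆, z⁆ - χ ⁅⁅y, z⁆, x⁆ := by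
    rw [eq_sub_iff_add_eq, eq_neg_iff_add_eq_zero, ← J]; abel
  refine ⟨h.tri_swap hx hy hz, h.tri_swap hy hz hx, J', ?_⟩
  rw [h.tri_swap hz hx hy, J']
  abel

theorem psi_alt (h : ChiData S T χ) {p P q Q w : F}
    (hp : p ∈ S ⊓ T) (hP : P ∈ S ⊓ T) (hq : q ∈ S ⊓ T) (hQ : Q ∈ S ⊓ T) (hw : w ∈ S ⊓ T) :
    psi χ p P q Q w - psi χ q Q p P w = (3 : ℤ) • χ ⁅⁅p, q⁆, w⁆ + (3 : ℤ) • χ ⁅⁅P, Q⁆, w⁆ := by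
  obtain ⟨a1, a2, a3, a4⟩ := h.tri_nf hp hq hw
  obtain ⟨b1, b2, b3, b4⟩ := h.tri_nf hP hq hw
  obtain ⟨c1, c2, c3, c4⟩ := h.tri_nf hp hQ hw
  obtain ⟨d1, d2, d3, d4⟩ := h.tri_nf hP hQ hw
  simp only [psi, a1, a2, a3, a4, b1, b2, b3, b4, c1, c2, c3, c4, d1, d2, d3, d4]
  abel

theorem psi_main (h : ChiData S T χ) {p P q Q r R : F}
    (hp : p ∈ S ⊓ T) (hP : P ∈ S ⊓ T) (hq : q ∈ S ⊓ T) (hQ : Q ∈ S ⊓ T)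
    (hr : r ∈ S ⊓ T) (hR : R ∈ S ⊓ T) :
    (3 : ℤ) • χ ⁅⁅p, q⁆, r * R⁻¹⁆ + (3 : ℤ) • χ ⁅⁅P, Q⁆, r * R⁻¹⁆
      - (psi χ r R p P (q * Q⁻¹) - psi χ r R q Q (p * P⁻¹)) =
      (6 : ℤ) • χ ⁅⁅p, q⁆, r⁆ - (6 : ℤ) • χ ⁅⁅P, Q⁆, R⁆ := by
  have e1 : psi χ r R p P (q * Q⁻¹) = psi χ r R p P q - psi χ r R p P Q := by
    have H := h.psi_hom3 hr hR hp hP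
    rw [sub_eq_add_neg, ← H.inv hQ]
    exact H _ hq _ (Subgroup.inv_mem _ hQ)
  have e2 : psi χ r R q Q (p * P⁻¹) = psi χ r R q Q p - psi χ r R q Q P := by
    have H := h.psi_hom3 hr hR hq hQ
    rw [sub_eq_add_neg, ← H.inv hP]
    exact H _ hp _ (Subgroup.inv_mem _ hP)
  have e3 : ∀ {x y}, x ∈ S ⊓ T → y ∈ S ⊓ T → χ ⁅⁅x, y⁆, r * R⁻¹⁆ = χ ⁅⁅x, y⁆, r⁆ - χ ⁅⁅x, y⁆, R⁆ := by
    intro x y hx hy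
    have H := h.tri3 hx hy
    rw [sub_eq_add_neg, ← H.inv hR]
    exact H _ hr _ (Subgroup.inv_mem _ hR)
  rw [e1, e2, e3 hp hq, e3 hP hQ]
  obtain ⟨a1, a2, a3, a4⟩ := h.tri_nf hp hq hr
  obtain ⟨b1, b2, b3, b4⟩ := h.tri_nf hP hq hr
  obtain ⟨c1, c2, c3, c4⟩ := h.tri_nf hp hQ hr
  obtain ⟨d1, d2, d3, d4⟩ := h.tri_nf hP hQ hr
  obtain ⟨a5, a6, a7, a8⟩ := h.tri_nf hp hq hR
  obtain ⟨b5, b6, b7, b8⟩ := h.tri_nf hP hq hR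
  obtain ⟨c5, c6, c7, c8⟩ := h.tri_nf hp hQ hR
  obtain ⟨d5, d6, d7, d8⟩ := h.tri_nf hP hQ hR
  simp only [psi, a1, a2, a3, a4, b1, b2, b3, b4, c1, c2, c3, c4, d1, d2, d3, d4,
    a5, a6, a7, a8, b5, b6, b7, b8, c5, c6, c7, c8, d5, d6, d7, d8]
  abel

end ChiData

end

section

variable {F : Type} [Group F]

variable {S T : Subgroup F} [S.Normal] [T.Normal] {ρ : F →* F} {χ : F → QZ}

/-- the pairing used in the last step -/
noncomputable def kap (χ : F → QZ) (ρ : F →* F) (u w : F) : QZ :=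
  (3 : ℤ) • χ ⁅u, w⁆ + (3 : ℤ) • χ ⁅ρ u, w⁆

theorem rho_conj_eq (ρ : F →* F) (t p : F) :
    ρ t * (t⁻¹ * p * t) * (ρ t)⁻¹ = (t * (ρ t)⁻¹)⁻¹ * p * ((t * (ρ t)⁻¹)⁻¹)⁻¹ := by group

theorem rho_conj_eq' (ρ : F →* F) (t p : F) :
    ρ t * ρ (t⁻¹ * p * t) * (ρ t)⁻¹ = ρ p := by
  rw [map_mul, map_mul, map_inv]; group

namespace ChiData

theorem kap_bi (h : ChiData S T χ) (hρ : RhoData S T ρ) :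
    BiOn (⁅S, S⁆ ⊓ T) (S ⊓ T) (kap χ ρ) := by
  have hm : ∀ x ∈ ⁅S, S⁆ ⊓ T, ρ x ∈ ⁅S, S⁆ ⊓ T := fun x hx => U'_le (hρ.map_comm hx.1)
  exact ⟨fun w hw => ((h.bi.1 w hw).smul 3).add (((h.bi.1 w hw).smul 3).comp_hom ρ hm),
    fun u hu => ((h.bi.2 u hu).smul 3).add ((h.bi.2 _ (hm u hu)).smul 3)⟩

theorem kap_N (h : ChiData S T χ) (hρ : RhoData S T ρ) {u w : F} (hu : u ∈ ⁅⁅S, S⁆, S⁆)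
    (hw : w ∈ S ⊓ T) : kap χ ρ u w = 0 := by
  have h1 : ρ u ∈ ⁅⁅S, S⁆, S⁆ :=
    Subgroup.commutator_mono (Subgroup.commutator_mono inf_le_left inf_le_left) inf_le_left
      (hρ.map_comm3 hu)
  simp [kap, h.B_N hu hw.2, h.B_N h1 hw.2]

theorem kap_act (h : ChiData S T χ) (hρ : RhoData S T ρ) {t u w : F} (ht : t ∈ T)
    (hu : u ∈ ⁅S, S⁆ ⊓ T) (hw : w ∈ S ⊓ T) :
    kap χ ρ u (ρ t * w * (ρ t)⁻¹) = kap χ ρ (t⁻¹ * u * t) w := by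
  have hv := Subgroup.inv_mem _ (hρ.wU ht)
  have hu' : t⁻¹ * u * t ∈ ⁅S, S⁆ ⊓ T := by
    have := Subgroup.Normal.conj_mem (H := ⁅S, S⁆ ⊓ T) inferInstance u hu t⁻¹
    simpa using this
  have hw' : ρ t * w * (ρ t)⁻¹ ∈ S ⊓ T := Subgroup.Normal.conj_mem inferInstance w hw _
  unfold kap
  rw [← h.B_T hu' hw (hρ.memT t), ← h.B_T (U'_le (hρ.map_comm hu'.1)) hw (hρ.memT t),
    rho_conj_eq', rho_conj_eq, h.B_conj_left hu hw' hv]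

theorem psi_act (h : ChiData S T χ) (hρ : RhoData S T ρ) {t p q w : F} (ht : t ∈ T)
    (hp : p ∈ S ⊓ T) (hq : q ∈ S ⊓ T) (hw : w ∈ S ⊓ T) :
    psi χ p (ρ p) q (ρ q) (ρ t * w * (ρ t)⁻¹) =
      psi χ (t⁻¹ * p * t) (ρ (t⁻¹ * p * t)) (t⁻¹ * q * t) (ρ (t⁻¹ * q * t)) w := by
  have hv := Subgroup.inv_mem _ (hρ.wU ht)
  have n : ∀ u ∈ S ⊓ T, t⁻¹ * u * t ∈ S ⊓ T := by
    intro u hu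
    have := Subgroup.Normal.conj_mem (H := S ⊓ T) inferInstance u hu t⁻¹
    simpa using this
  have m : ∀ u ∈ S ⊓ T, ρ u ∈ S ⊓ T := fun u hu => hρ.memU hu.1
  have hw' : ρ t * w * (ρ t)⁻¹ ∈ S ⊓ T := Subgroup.Normal.conj_mem inferInstance w hw _
  rw [← h.psi_T (n p hp) (m _ (n p hp)) (n q hq) (m _ (n q hq)) hw (hρ.memT t),
    rho_conj_eq', rho_conj_eq', rho_conj_eq, rho_conj_eq]
  exact (h.psi_rel (HRel.conj hp hv) (HRel.refl (m p hp)) (HRel.conj hq hv) (HRel.refl (m q hq))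
    (HRel.refl hw')).symm

/-- existence of the local functionals in the last step -/
theorem exists_local [IsFreeGroup S] (h : ChiData S T χ) (hρ : RhoData S T ρ) {w : F} (hw : w ∈ S ⊓ T) :
    ∃ g : Du F, (∀ t, ∀ s ∈ S, ∀ s' ∈ S, ∀ f, g ((oo t - 1) * (oo s - 1) * (oo s' - 1) * oo f) = 0) ∧
      (∀ u ∈ ⁅S, S⁆ ⊓ T, ∀ f, g ((oo u - 1) * oo f) = kap χ ρ (f⁻¹ * u * f) w) ∧
      (∀ p ∈ S ⊓ T, ∀ q ∈ S ⊓ T, ∀ f, g ((oo p - 1) * (oo q - 1) * oo f) =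
        psi χ (f⁻¹ * p * f) (ρ (f⁻¹ * p * f)) (f⁻¹ * q * f) (ρ (f⁻¹ * q * f)) w) := by
  have cj : ∀ (K : Subgroup F) [K.Normal], ∀ u ∈ K, ∀ f, f⁻¹ * u * f ∈ K := by
    intro K hK u hu f
    have := Subgroup.Normal.conj_mem hK u hu f⁻¹
    simpa using this
  have m : ∀ u ∈ S ⊓ T, ρ u ∈ S ⊓ T := fun u hu => hρ.memU hu.1
  have m2 : ∀ u ∈ ⁅S, S⁆, ρ u ∈ ⁅S, S⁆ ⊓ T := fun u hu => U'_le (hρ.map_comm hu)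
  have hSS : ⁅S, S⁆ ≤ S := Subgroup.commutator_le_self S
  obtain ⟨e, he, he1, he2⟩ := hom_ext_on (⁅S, S⁆ ⊓ T) ⁅⁅S, S⁆, S⁆ ⁅S, S⁆ inf_le_left
    (Subgroup.commutator_le_left _ _) (Subgroup.commutator_mono le_rfl hSS)
    (fun u => kap χ ρ u w) ((h.kap_bi hρ).1 w hw) (fun x _ hx => h.kap_N hρ hx hw)
  obtain ⟨b, hb, hb1, hb2⟩ := bi_ext S (S ⊓ T) inf_le_left (fun x y => e ⁅x, y⁆)
    (fun p q => psi χ p (ρ p) q (ρ q) w) (he.comm_bi he2) (fun s _ => by simp [he.one])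
    ⟨fun q hq => h.psi_hom1 m hq (m q hq) hw, fun p hp => h.psi_hom2 m hp (m p hp) hw⟩
    (fun x hx y hy hx' => h.psi_z1 ⟨hx', hx.2⟩ (m2 x hx') hy (m y hy) hw)
    (fun x hx y hy hy' => h.psi_z2 ⟨hy', hy.2⟩ (m2 y hy') hx (m x hx) hw)
    (fun x hx y hy => by
      rw [h.psi_alt hx (m x hx) hy (m y hy) hw, he1 _ (mem_U2 hx hy)]
      simp only [kap, map_commutatorElement])
  obtain ⟨φ, hφ, hφe⟩ := exists_quad_ext S b hb e he hb1
  obtain ⟨rep, hr1, hr2⟩ := exists_rep S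
  have key1 : ∀ x ∈ S, ∀ f, rep (x * f) = rep f ∧
      (rep f)⁻¹ * (x * f) = (rep f)⁻¹ * f * (f⁻¹ * x * f) := by
    intro x hx f
    have e : x * f = f * (f⁻¹ * x * f) := by group
    refine ⟨?_, by group⟩
    rw [e, hr2 _ _ (cj S x hx f)]
  have g1 : ∀ x ∈ S, ∀ f, φ ((rep (x * f))⁻¹ * (x * f)) =
      φ ((rep f)⁻¹ * f) + φ (f⁻¹ * x * f) + b ((rep f)⁻¹ * f) (f⁻¹ * x * f) := by
    intro x hx f
    obtain ⟨e1, e2⟩ := key1 x hx f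
    rw [e1, e2, hφ _ (hr1 f) _ (cj S x hx f)]
  have g2 : ∀ s ∈ S, ∀ s' ∈ S, ∀ f, Lx (fun f => φ ((rep f)⁻¹ * f)) ((oo s - 1) * (oo s' - 1) * oo f) =
      b (f⁻¹ * s * f) (f⁻¹ * s' * f) := by
    intro s hs s' hs' f
    have c1 := cj S s hs f
    have c2 := cj S s' hs' f
    have e : f⁻¹ * (s * s') * f = (f⁻¹ * s * f) * (f⁻¹ * s' * f) := by group
    rw [Lx_2, g1 _ (S.mul_mem hs hs'), g1 s hs, g1 s' hs', e, hφ _ c1 _ c2,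
      hb.mul_right (hr1 f) c1 c2]
    abel
  refine ⟨Lx (fun f => φ ((rep f)⁻¹ * f)), ?_, ?_, ?_⟩
  · intro t s hs s' hs' f
    have n := fun s hs => Subgroup.Normal.conj_mem (H := S) inferInstance s hs t
    have e : (oo t - 1) * (oo s - 1) * (oo s' - 1) * oo f =
        (oo (t * s * t⁻¹) - 1) * (oo (t * s' * t⁻¹) - 1) * oo (t * f) - (oo s - 1) * (oo s' - 1) * oo f := by
      rw [sub_mul (oo t), oo_conj, one_mul, sub_mul, sub_mul, mul_assoc _ (oo t), oo_conj, oo_mul t f]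
      simp only [mul_assoc]
    rw [e, map_sub, g2 _ (n s hs) _ (n s' hs'), g2 _ hs _ hs', sub_eq_zero]
    congr 1 <;> group
  · intro u hu f
    have c1 := cj (⁅S, S⁆ ⊓ T) u hu f
    rw [Lx_1, g1 u (hSS hu.1), hφe _ c1.1, he1 _ c1, (hb.2 _ (hr1 f)).zero_commutator c1.1]
    abel
  · intro p hp q hq f
    rw [g2 p hp.1 q hq.1, hb2 _ (cj _ p hp f) _ (cj _ q hq f)]

end ChiData

/-- Step 4 -/
theorem HypA.six_chi [IsFreeGroup S] [IsFreeGroup T] [IsFreeGroup (S ⊓ T : Subgroup F)] {a : F}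
    (h : HypA S T a) (hρ : RhoData S T ρ) (hχ : ChiData S T χ) : (6 : ℤ) • χ a = 0 := by
  have haH := h.mem_H hρ
  have ha : a ∈ S ⊓ T := h.memU
  have hB := h.hypB hρ
  have hb3 : ρ a ∈ ⁅⁅S ⊓ T, S ⊓ T⁆, S ⊓ T⁆ := hB.mem_comm3 (hρ.memU ha.1)
  have h3 := hB.three_chi hχ hb3
  have cj : ∀ (K : Subgroup F) [K.Normal], ∀ u ∈ K, ∀ f, f⁻¹ * u * f ∈ K := by
    intro K hK u hu f
    have := Subgroup.Normal.conj_mem hK u hu f⁻¹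
    simpa using this
  have nU : ∀ f, ∀ u ∈ S ⊓ T, f * u * f⁻¹ ∈ S ⊓ T := fun f u hu =>
    Subgroup.Normal.conj_mem inferInstance u hu f
  have m : ∀ u ∈ S ⊓ T, ρ u ∈ S ⊓ T := fun u hu => hρ.memU hu.1
  have hk := hχ.kap_bi hρ
  obtain ⟨D, hD1, hD2⟩ := exists_cocycle T
    (fun k c' =>
      (∃ t, ∃ s ∈ S, ∃ s' ∈ S, ∃ f, k = (oo t - 1) * (oo s - 1) * (oo s' - 1) * oo f ∧ c' = fun _ => 0) ∨
      (∃ u ∈ ⁅S, S⁆ ⊓ T, ∃ f, k = (oo u - 1) * oo f ∧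
        c' = fun t => kap χ ρ (f⁻¹ * u * f) (t * (ρ t)⁻¹)) ∨
      (∃ p ∈ S ⊓ T, ∃ q ∈ S ⊓ T, ∃ f, k = (oo p - 1) * (oo q - 1) * oo f ∧
        c' = fun t => psi χ (f⁻¹ * p * f) (ρ (f⁻¹ * p * f)) (f⁻¹ * q * f) (ρ (f⁻¹ * q * f))
          (t * (ρ t)⁻¹)))
    (by
      rintro k c' (⟨t, s, hs, s', hs', f, rfl, rfl⟩ | ⟨u, hu, f, rfl, rfl⟩ | ⟨p, hp, q, hq, f, rfl, rfl⟩)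
      · rfl
      · simp [(hk.2 _ (cj _ u hu f)).one]
      · have cp := cj _ p hp f
        have cq := cj _ q hq f
        simpa using (hχ.psi_hom3 cp (m _ cp) cq (m _ cq)).one)
    (by
      rintro k c' (⟨t, s, hs, s', hs', f, rfl, rfl⟩ | ⟨u, hu, f, rfl, rfl⟩ | ⟨p, hp, q, hq, f, rfl, rfl⟩) τ hτ
      · refine ⟨fun _ => 0, Or.inl ⟨t, s, hs, s', hs', f * τ, by rw [mul_assoc, ← oo_mul], rfl⟩, ?_⟩
        intros
        simp
      · refine ⟨_, Or.inr (Or.inl ⟨u, hu, f * τ, by rw [mul_assoc, ← oo_mul], rfl⟩), fun t' ht' => ?_⟩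
        have cu := cj _ u hu f
        have e : (f * τ)⁻¹ * u * (f * τ) = τ⁻¹ * (f⁻¹ * u * f) * τ := by group
        simp only
        rw [RhoData.w_mul, hk.mul_right cu (hρ.wU hτ) (nU _ _ (hρ.wU ht')),
          hχ.kap_act hρ hτ cu (hρ.wU ht'), e]
      · refine ⟨_, Or.inr (Or.inr ⟨p, hp, q, hq, f * τ, by rw [mul_assoc, ← oo_mul], rfl⟩),
          fun t' ht' => ?_⟩
        have cp := cj _ p hp f
        have cq := cj _ q hq f
        have e : ∀ u, (f * τ)⁻¹ * u * (f * τ) = τ⁻¹ * (f⁻¹ * u * f) * τ := by intro u; group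
        have H := hχ.psi_hom3 cp (m _ cp) cq (m _ cq) _ (hρ.wU hτ) _ (nU (ρ τ) _ (hρ.wU ht'))
        simp only at H ⊢
        rw [RhoData.w_mul, H, hχ.psi_act hρ hτ cp cq (hρ.wU ht'), e, e])
    (by
      intro t ht
      obtain ⟨g, h1, h2, h3⟩ := hχ.exists_local hρ (hρ.wU ht)
      refine ⟨g, ?_⟩
      rintro k c' (⟨t, s, hs, s', hs', f, rfl, rfl⟩ | ⟨u, hu, f, rfl, rfl⟩ | ⟨p, hp, q, hq, f, rfl, rfl⟩)
      · exact h1 t s hs s' hs' f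
      · exact h2 u hu f
      · exact h3 p hp q hq f)
  have hD : Cocyc T D := hD1
  have d1 : ∀ t ∈ T, ∀ x, ∀ s ∈ S, ∀ s' ∈ S, ∀ f, D t ((oo x - 1) * (oo s - 1) * (oo s' - 1) * oo f) = 0 :=
    fun t ht x s hs s' hs' f => hD2 t ht _ _ (Or.inl ⟨x, s, hs, s', hs', f, rfl, rfl⟩)
  have d2 : ∀ {t}, t ∈ T → ∀ {u}, u ∈ ⁅S, S⁆ ⊓ T → D t (oo u - 1) = kap χ ρ u (t * (ρ t)⁻¹) := by
    intro t ht u hu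
    have := hD2 t ht _ _ (Or.inr (Or.inl ⟨u, hu, 1, rfl, rfl⟩))
    rw [oo_one, mul_one] at this
    rw [this]
    simp
  have d3 : ∀ {t}, t ∈ T → ∀ {p}, p ∈ S ⊓ T → ∀ {q}, q ∈ S ⊓ T →
      D t ((oo p - 1) * (oo q - 1)) = psi χ p (ρ p) q (ρ q) (t * (ρ t)⁻¹) := by
    intro t ht p hp q hq
    have := hD2 t ht _ _ (Or.inr (Or.inr ⟨p, hp, q, hq, 1, rfl, rfl⟩))
    rw [oo_one, mul_one] at this
    rw [this]
    simp
  have v0 := h.cocycle ha.2 D hD (fun u hu s hs s' hs' t ht f => d1 t ht u s hs s' hs' f)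
    (fun t ht s hs s' hs' u hu f => d1 u hu.2 t s hs s' hs' f)
  have NT2 : ⁅⁅S, S⁆, S⁆ ⊓ T ≤ ⁅S, S⁆ ⊓ T := ChiData.NT_le
  have hE : HomOn (⁅⁅S, S⁆, S⁆ ⊓ T) (fun y => D y 1) := by
    intro x hx y hy
    simp only
    rw [hD.mul_one hx.2 hy.2, d2 hy.2 (NT2 hx), hχ.kap_N hρ hx.1 (hρ.wU hy.2), add_zero]
  have cm : ∀ {x r}, x ∈ ⁅S, S⁆ ⊓ T → r ∈ S ⊓ T →
      D ⁅x, r⁆ 1 = kap χ ρ x (r * (ρ r)⁻¹) - D x (oo r - 1) := by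
    intro x r hx hr
    have hc := ChiData.mem_NT hx hr
    have hrx := T.mul_mem hr.2 hx.2
    rw [hD.comm_one hx.2 hr.2, d2 hr.2 hx, d2 hrx (NT2 hc), hχ.kap_N hρ hc.1 (hρ.wU hrx), sub_zero]
  have U3N : ⁅⁅S ⊓ T, S ⊓ T⁆, S ⊓ T⁆ ≤ ⁅⁅S, S⁆, S⁆ ⊓ T :=
    le_inf (Subgroup.commutator_mono (Subgroup.commutator_mono inf_le_left inf_le_left) inf_le_left)
      ((Subgroup.commutator_le_right _ _).trans inf_le_right)
  have hG : HomOn (⁅⁅S, S⁆, S⁆ ⊓ T) (fun y => (6 : ℤ) • χ y - (6 : ℤ) • χ (ρ y)) :=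
    (hχ.hom.smul 6).sub ((hχ.hom.smul 6).comp_hom ρ (fun x hx => U3N (hρ.map_comm3 hx.1)))
  -- first family of generators
  have k2 : ∀ {x r}, x ∈ ⁅S, S⁆ ⊓ T → r ∈ ⁅S, S⁆ ⊓ T → kap χ ρ x (r * (ρ r)⁻¹) = (3 : ℤ) • χ ⁅x, r⁆ := by
    intro x r hx hr
    have hr' : ρ r ∈ ⁅S ⊓ T, S ⊓ T⁆ := hρ.map_comm hr.1
    have hx' : ρ x ∈ ⁅S ⊓ T, S ⊓ T⁆ := hρ.map_comm hx.1
    have hri := Subgroup.inv_mem _ hr'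
    have hrU := ChiData.U2_le hr
    have hriU := ChiData.U2_le (ChiData.U'_le hri)
    unfold kap
    rw [hχ.B_mul' hx hrU hriU, hχ.B_mul' (ChiData.U'_le hx') hrU hriU, hχ.B_U' hx hri,
      hχ.B_U' (ChiData.U'_le hx') hri, hχ.B_swap hr (m x (ChiData.U2_le hx)), hχ.B_U' hr hx']
    simp
  have gen1 : ∀ x ∈ ⁅S, S⁆ ⊓ T, ∀ r ∈ ⁅S, S⁆ ⊓ T,
      D ⁅x, r⁆ 1 = (6 : ℤ) • χ ⁅x, r⁆ - (6 : ℤ) • χ (ρ ⁅x, r⁆) := by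
    intro x hx r hr
    rw [cm hx (ChiData.U2_le hr), d2 hx.2 hr, k2 hx hr, k2 hr hx, hχ.B_swap hx (ChiData.U2_le hr),
      map_commutatorElement, hχ.B_U' (ChiData.U'_le (hρ.map_comm hx.1)) (hρ.map_comm hr.1)]
    module
  -- second family of generators
  have gen2 : ∀ x ∈ ⁅S ⊓ T, S ⊓ T⁆, ∀ r ∈ S ⊓ T,
      D ⁅x, r⁆ 1 = (6 : ℤ) • χ ⁅x, r⁆ - (6 : ℤ) • χ (ρ ⁅x, r⁆) := by
    intro x hx r hr
    have hle : ⁅S ⊓ T, S ⊓ T⁆ ≤ ⁅S, S⁆ ⊓ T := ChiData.U'_le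
    rw [cm (hle hx) hr, map_commutatorElement]
    have hφ : ∀ y ∈ S ⊓ T, ∀ z ∈ S ⊓ T, (fun y => D y (oo r - 1)) (y * z) =
        (fun y => D y (oo r - 1)) y + (fun y => D y (oo r - 1)) z +
          (fun y z => psi χ r (ρ r) y (ρ y) (z * (ρ z)⁻¹)) y z := by
      intro y hy z hz
      simp only
      have e : (oo r - 1) * oo y = (oo r - 1) + (oo r - 1) * (oo y - 1) := by
        rw [mul_sub (oo r - 1), mul_one]; abel
      rw [hD y hy.2 z hz.2, e, map_add, d3 hz.2 hr hy]
      abel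
    have hbi : BiOn (S ⊓ T) (S ⊓ T) (fun y z => psi χ r (ρ r) y (ρ y) (z * (ρ z)⁻¹)) := by
      refine ⟨fun z hz => hχ.psi_hom2 m hr (m r hr) (hρ.wU hz.2), fun y hy z hz z' hz' => ?_⟩
      have H := hχ.psi_hom3 hr (m r hr) hy (m y hy)
      have H1 := H _ (hρ.wU hz.2) _ (nU (ρ z) _ (hρ.wU hz'.2))
      have H2 := H.conj (hρ.wU hz'.2) (m z hz)
      simp only at H1 H2 ⊢
      rw [RhoData.w_mul, H1, H2]
    have hL : HomOn ⁅S ⊓ T, S ⊓ T⁆ (fun x => kap χ ρ x (r * (ρ r)⁻¹) - D x (oo r - 1)) :=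
      ((hk.1 _ (hρ.wU hr.2)).mono hle).sub (quad_homOn hbi hφ)
    have hR : HomOn ⁅S ⊓ T, S ⊓ T⁆ (fun x => (6 : ℤ) • χ ⁅x, r⁆ - (6 : ℤ) • χ ⁅ρ x, ρ r⁆) :=
      (((hχ.bi.1 r hr).mono hle).smul 6).sub
        (((hχ.bi.1 _ (m r hr)).smul 6).comp_hom ρ (fun x hx => hle (hρ.map_comm (hle hx).1)))
    refine HomOn.eq_commutator hL hR le_rfl (fun p hp q hq => ?_) hx
    have Q := quad_comm (φ := fun y => D y (oo r - 1)) hbi hφ hp hq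
    rw [Q]
    simp only [kap, map_commutatorElement]
    exact hχ.psi_main hp (m p hp) hq (m q hq) hr (m r hr)
  have fin : D a 1 = (6 : ℤ) • χ a - (6 : ℤ) • χ (ρ a) := by
    rw [Subgroup.commutator_def (⁅S, S⁆ ⊓ T), Subgroup.commutator_def ⁅S ⊓ T, S ⊓ T⁆,
      ← Subgroup.closure_union] at haH
    refine hE.eq_closure hG _ ?_ haH
    rintro _ (⟨x, hx, r, hr, rfl⟩ | ⟨x, hx, r, hr, rfl⟩)
    · exact ⟨ChiData.mem_NT hx (ChiData.U2_le hr), gen1 x hx r hr⟩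
    · exact ⟨ChiData.mem_NT (ChiData.U'_le hx) hr, gen2 x hx r hr⟩
  have e6 : (6 : ℤ) • χ (ρ a) = 0 := by
    have : (6 : ℤ) = 2 * 3 := by norm_num
    rw [this, mul_smul, h3, smul_zero]
  rw [v0, e6, sub_zero] at fin
  exact fin.symm

theorem HypA.pow_mem [IsFreeGroup S] [IsFreeGroup T] [IsFreeGroup (S ⊓ T : Subgroup F)] {a : F}
    (h : HypA S T a) (hρ : RhoData S T ρ) : a ^ 6 ∈ ⁅⁅⁅S, S⁆, S⁆, T⁆ := by
  have haH := h.mem_H hρ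
  have haN : a ∈ ⁅⁅S, S⁆, S⁆ ⊓ T := by
    refine ((sup_le ?_ ?_ : _ ≤ ⁅⁅S, S⁆, S⁆ ⊓ T)) haH
    · rw [Subgroup.commutator_le]
      intro x hx y hy
      exact ChiData.mem_NT hx (ChiData.U2_le hy)
    · rw [Subgroup.commutator_le]
      intro x hx y hy
      exact ChiData.mem_NT (ChiData.U'_le hx) hy
  refine hom_sep ⁅⁅⁅S, S⁆, S⁆, T⁆ (⁅⁅S, S⁆, S⁆ ⊓ T)
    (le_inf (Subgroup.commutator_le_left _ _) (Subgroup.commutator_le_right _ _))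
    (Subgroup.commutator_mono inf_le_left inf_le_right) _ (Subgroup.pow_mem _ haN 6) (fun χ h1 h2 => ?_)
  rw [h1.pow haN]
  have := h.six_chi hρ (χ := χ) ⟨h1, h2⟩
  exact_mod_cast this

end

section

variable {F : Type} [Group F]

theorem aug_mono {M N : Subgroup F} (h : M ≤ N) : aug M ≤ aug N := by
  refine Submodule.span_mono ?_
  rintro x ⟨n, hn, rfl⟩
  exact ⟨n, h hn, rfl⟩

theorem augI_mono {M N : Subgroup F} (h : M ≤ N) : augI M ≤ augI N :=
  mul_le_mul' (aug_mono h) le_rfl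

theorem top_top : (⊤ : Submodule ℤ (MonoidAlgebra ℤ F)) * ⊤ = ⊤ := by
  rw [eq_top_iff]
  intro x _
  rw [← one_mul x]
  exact Submodule.mul_mem_mul trivial trivial

theorem augI_mul_top (N : Subgroup F) : augI N * ⊤ = augI N := by
  unfold augI
  rw [mul_assoc, top_top]

theorem top_mul_aug (N : Subgroup F) [N.Normal] : ⊤ * aug N = aug N * ⊤ := by
  rw [← oo_span (F := F), aug, Submodule.span_mul_span, Submodule.span_mul_span]
  congr 1
  ext x
  simp only [Set.mem_mul]
  constructor
  · rintro ⟨_, ⟨f, rfl⟩, _, ⟨n, hn, rfl⟩, rfl⟩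
    refine ⟨_, ⟨f * n * f⁻¹, Subgroup.Normal.conj_mem inferInstance n hn f, rfl⟩, _, ⟨f, rfl⟩, ?_⟩
    exact (oo_conj f n).symm
  · rintro ⟨_, ⟨n, hn, rfl⟩, _, ⟨f, rfl⟩, rfl⟩
    refine ⟨_, ⟨f, rfl⟩, _, ⟨f⁻¹ * n * f, ?_, rfl⟩, ?_⟩
    · have := Subgroup.Normal.conj_mem (H := N) inferInstance n hn f⁻¹
      simpa using this
    · exact (conj_oo f n).symm

theorem four_le (A B C D : Subgroup F) [A.Normal] [B.Normal] [C.Normal] [D.Normal] (Ψ : Du F)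
    (h : ∀ u ∈ A, ∀ s ∈ B, ∀ s' ∈ C, ∀ t ∈ D, ∀ f,
      Ψ ((oo u - 1) * (oo s - 1) * (oo s' - 1) * oo f * (oo t - 1)) = 0) :
    augI A * augI B * augI C * augI D ≤ LinearMap.ker Ψ := by
  have step : ∀ (X : Submodule ℤ (MonoidAlgebra ℤ F)) (N : Subgroup F) [N.Normal],
      X * ⊤ * augI N = X * aug N * ⊤ := by
    intro X N hN
    rw [augI, ← top_mul_aug N, mul_assoc, ← mul_assoc ⊤ ⊤, top_top, top_mul_aug, mul_assoc]
  have e : augI A * augI B * augI C * augI D = aug A * aug B * aug C * ⊤ * aug D := by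
    rw [augI, step, step, step, mul_assoc _ (aug D), ← top_mul_aug, ← mul_assoc]
  rw [e, ← oo_span (F := F), aug, aug, aug, aug]
  simp only [Submodule.span_mul_span]
  rw [Submodule.span_le]
  rintro _ ⟨_, ⟨_, ⟨_, ⟨_, ⟨u, hu, rfl⟩, _, ⟨s, hs, rfl⟩, rfl⟩, _, ⟨s', hs', rfl⟩, rfl⟩, _, ⟨f, rfl⟩, rfl⟩,
    _, ⟨t, ht, rfl⟩, rfl⟩
  exact h u hu s hs s' hs' t ht f


theorem hypA_of (R S T : Subgroup F) [R.Normal] [S.Normal] [T.Normal] (hRS : R ≤ S) (hRT : R ≤ T)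
    (a : F) (ha : (MonoidAlgebra.of ℤ F a) - 1 ∈
      augI R * augI S * augI S * augI T + augI T * augI S * augI S * augI R) : HypA S T a := by
  intro Ψ h1 h2
  have hR : R ≤ S ⊓ T := le_inf hRS hRT
  have hle : augI R * augI S * augI S * augI T + augI T * augI S * augI S * augI R ≤
      LinearMap.ker Ψ := by
    rw [Submodule.add_eq_sup]
    refine sup_le (four_le R S S T Ψ ?_) (four_le T S S R Ψ ?_)
    · intro u hu s hs s' hs' t ht f
      exact h1 u (hR hu) s hs s' hs' t ht f
    · intro t ht s hs s' hs' u hu f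
      exact h2 u (hR hu) s hs s' hs' t ht f
  have := hle ha
  rw [LinearMap.mem_ker, map_sub, sub_eq_zero] at this
  exact this

/-- restriction of the support to a subgroup -/
theorem exists_pr (K : Subgroup F) : ∃ pr : MonoidAlgebra ℤ F →ₗ[ℤ] MonoidAlgebra ℤ K,
    (∀ f : K, pr (oo (f : F)) = oo f) ∧ (∀ f : F, f ∉ K → pr (oo f) = 0) ∧
    (∀ (k : K) x, pr (oo (k : F) * x) = oo k * pr x) ∧ (∀ (k : K) x, pr (x * oo (k : F)) = pr x * oo k) := by
  classical
  let g : F → MonoidAlgebra ℤ K := fun f => if h : f ∈ K then oo ⟨f, h⟩ else 0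
  have g1 : ∀ f : K, g f = oo f := by
    intro f
    simp only [g, SetLike.coe_mem, dif_pos]
  have g0 : ∀ f : F, f ∉ K → g f = 0 := by
    intro f hf
    simp only [g, hf, dif_neg, not_false_eq_true]
  refine ⟨Lx g, fun f => by rw [Lx_oo, g1], fun f hf => by rw [Lx_oo, g0 f hf], fun k x => ?_, fun k x => ?_⟩
  · have : (Lx g).comp (LinearMap.mulLeft ℤ (oo (k : F))) = (LinearMap.mulLeft ℤ (oo k)).comp (Lx g) := by
      refine du_ext (fun f => ?_)
      simp only [LinearMap.comp_apply, LinearMap.mulLeft_apply]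
      rw [← oo_mul, Lx_oo, Lx_oo]
      by_cases hf : f ∈ K
      · lift f to K using hf
        rw [g1 f, ← oo_mul, ← g1 (k * f)]
        rfl
      · rw [g0 f hf, mul_zero, g0]
        rwa [Subgroup.mul_mem_cancel_left _ k.2]
    exact congrArg (fun φ => φ x) this
  · have : (Lx g).comp (LinearMap.mulRight ℤ (oo (k : F))) = (LinearMap.mulRight ℤ (oo k)).comp (Lx g) := by
      refine du_ext (fun f => ?_)
      simp only [LinearMap.comp_apply, LinearMap.mulRight_apply]
      rw [← oo_mul, Lx_oo, Lx_oo]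
      by_cases hf : f ∈ K
      · lift f to K using hf
        rw [g1 f, ← oo_mul, ← g1 (f * k)]
        rfl
      · rw [g0 f hf, zero_mul, g0]
        rwa [Subgroup.mul_mem_cancel_right _ k.2]
    exact congrArg (fun φ => φ x) this

theorem HypA.restrict {S T K : Subgroup F} (hS : S ≤ K) (hT : T ≤ K) {a : K} (h : HypA S T (a : F)) :
    HypA (S.subgroupOf K) (T.subgroupOf K) a := by
  intro Ψ h1 h2
  obtain ⟨pr, p1, p0, pl, pR⟩ := exists_pr K
  have q1 : pr 1 = 1 := by
    have := p1 1
    rwa [oo_one, Subgroup.coe_one, oo_one] at this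
  have ql : ∀ (k : K) x, pr ((oo (k : F) - 1) * x) = (oo k - 1) * pr x := by
    intro k x
    rw [sub_mul, sub_mul, map_sub, pl, one_mul, one_mul]
  have qr : ∀ (k : K) x, pr (x * (oo (k : F) - 1)) = pr x * (oo k - 1) := by
    intro k x
    rw [mul_sub, mul_sub, map_sub, pR, mul_one, mul_one]
  have := h (Ψ.comp pr) (fun u hu s hs s' hs' t ht f => by
      lift u to K using hS hu.1
      lift s to K using hS hs
      lift s' to K using hS hs'
      lift t to K using hT ht
      rw [LinearMap.comp_apply, qr, mul_assoc, mul_assoc, ql, ql, ql]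
      by_cases hf : f ∈ K
      · lift f to K using hf
        rw [p1, ← mul_assoc, ← mul_assoc]
        exact h1 u hu s hs s' hs' t ht f
      · rw [p0 f hf]
        simp)
    (fun u hu s hs s' hs' t ht f => by
      lift u to K using hS hu.1
      lift s to K using hS hs
      lift s' to K using hS hs'
      lift t to K using hT ht
      rw [LinearMap.comp_apply, qr, mul_assoc, mul_assoc, ql, ql, ql]
      by_cases hf : f ∈ K
      · lift f to K using hf
        rw [p1, ← mul_assoc, ← mul_assoc]
        exact h2 u hu s hs s' hs' t ht f
      · rw [p0 f hf]
        simp)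
  rwa [LinearMap.comp_apply, LinearMap.comp_apply, p1, q1] at this

theorem HypA.pow_six [IsFreeGroup F] {S T : Subgroup F} [S.Normal] [T.Normal] {a : F}
    (h : HypA S T a) : a ^ 6 ∈ ⁅⁅⁅S, S⁆, S⁆, T⁆ := by
  have ha := h.memU
  have hS : S ≤ S ⊔ T := le_sup_left
  have hT : T ≤ S ⊔ T := le_sup_right
  set K := S ⊔ T with hK
  lift a to K using hS ha.1
  have h' := h.restrict hS hT
  have hST : S.subgroupOf K ⊔ T.subgroupOf K = ⊤ := by
    rw [← Subgroup.subgroupOf_sup hS hT, ← hK, Subgroup.subgroupOf_self]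
  obtain ⟨ρ, hρ⟩ := exists_rho (S.subgroupOf K) (T.subgroupOf K) hST
  have := Subgroup.mem_map_of_mem K.subtype (h'.pow_mem hρ)
  simpa only [Subgroup.map_commutator, Subgroup.map_subgroupOf_eq_of_le hS,
    Subgroup.map_subgroupOf_eq_of_le hT, map_pow, Subgroup.coe_subtype] using this

theorem square_mem {X : Submodule ℤ (MonoidAlgebra ℤ F)} (hX : X * ⊤ ≤ X) {a : F}
    (ha : (MonoidAlgebra.of ℤ F a) - 1 ∈ X) : (MonoidAlgebra.of ℤ F (a ^ 2)) - 1 ∈ X := by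
  have e : (MonoidAlgebra.of ℤ F (a ^ 2)) - 1 =
      ((MonoidAlgebra.of ℤ F a) - 1) * ((MonoidAlgebra.of ℤ F a) + 1) := by
    rw [map_pow]
    noncomm_ring
  rw [e]
  exact hX (Submodule.mul_mem_mul ha trivial)

end

end Helpers

/-- Theorem 5.5: if `R ⊆ S`, `R ⊆ T` and `a ∈ D(F, 𝐫𝐬𝐬𝐭 + 𝐭𝐬𝐬𝐫)`, then
`a² ∈ D(F, 𝐫𝐬𝐬𝐬 + 𝐬𝐬𝐬𝐫 + 𝐭𝐬𝐬𝐬 + 𝐬𝐬𝐬𝐭 + Δ([S,S])𝐬)` and `a⁶ ∈ [S,S,S,RT]`. -/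
theorem four_fold_statement (F : Type) [Group F] [IsFreeGroup F]
    (R S T : Subgroup F) [R.Normal] [S.Normal] [T.Normal]
    (hRS : R ≤ S) (hRT : R ≤ T) (a : F)
    (ha : (MonoidAlgebra.of ℤ F a) - 1 ∈
      augI R * augI S * augI S * augI T + augI T * augI S * augI S * augI R) :
    ((MonoidAlgebra.of ℤ F (a ^ 2)) - 1 ∈
      augI R * augI S * augI S * augI S + augI S * augI S * augI S * augI R +
        augI T * augI S * augI S * augI S + augI S * augI S * augI S * augI T +
          aug ⁅S, S⁆ * augI S) ∧
      a ^ 6 ∈ ⁅⁅⁅S, S⁆, S⁆, R ⊔ T⁆ := by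
  refine ⟨?_, ?_⟩
  · have hm := augI_mono hRS
    have h1 : augI R * augI S * augI S * augI T + augI T * augI S * augI S * augI R ≤
        augI S * augI S * augI S * augI T + augI T * augI S * augI S * augI S := by
      simp only [Submodule.add_eq_sup]
      exact sup_le_sup
        (mul_le_mul' (mul_le_mul' (mul_le_mul' hm le_rfl) le_rfl) le_rfl)
        (mul_le_mul' le_rfl hm)
    have h2 : (augI S * augI S * augI S * augI T + augI T * augI S * augI S * augI S) * ⊤ ≤
        augI S * augI S * augI S * augI T + augI T * augI S * augI S * augI S := by
      rw [Submodule.add_eq_sup, Submodule.sup_mul, mul_assoc _ (augI T), mul_assoc _ (augI S) ⊤,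
        augI_mul_top, augI_mul_top]
    have h3 := square_mem h2 (h1 ha)
    have h4 : augI S * augI S * augI S * augI T + augI T * augI S * augI S * augI S ≤
        augI R * augI S * augI S * augI S + augI S * augI S * augI S * augI R +
        augI T * augI S * augI S * augI S + augI S * augI S * augI S * augI T +
          aug ⁅S, S⁆ * augI S := by
      simp only [Submodule.add_eq_sup]
      exact sup_le (le_sup_of_le_left le_sup_right)
        (le_sup_of_le_left (le_sup_of_le_left le_sup_right))
    exact h4 h3
  · rw [sup_eq_right.mpr hRT]
    exact (hypA_of R S T hRS hRT a ha).pow_six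
end

section
/- Let F be a free group and R a normal subgroup of F, with 𝐫 and 𝐟 the two-sided ideals of ℤ[F] generated by the augmentation ideals of R and F. If a ∈ D(F, 𝐫𝐫𝐫𝐟 + 𝐟𝐫𝐫𝐫 + Δ([R,R])𝐫), where Δ([R,R])𝐫 denotes the additive span of products (c−1)·α with c ∈ [R,R] and α ∈ 𝐫, then a³ ∈ [R, R, R, F] = [[[R,R],R],F]. -/
section
structure KExt (R M : Type) where
  m : M
  r : R

theorem cocycle_split {R M : Type} [Group R] [IsFreeGroup R] [AddCommGroup M] (k : R → R → M)
    (h1 : ∀ r, k 1 r = 0)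
    (hc : ∀ r s t, k r s + k (r * s) t = k s t + k r (s * t)) :
    ∃ b : R → M, ∀ r s, b (r * s) = b r + b s + k r s := by
  let : Mul (KExt R M) := ⟨fun x y => ⟨x.m + y.m + k x.r y.r, x.r * y.r⟩⟩
  let : One (KExt R M) := ⟨⟨0, 1⟩⟩
  let : Inv (KExt R M) := ⟨fun x => ⟨- x.m - k x.r⁻¹ x.r, x.r⁻¹⟩⟩
  have mul_def : ∀ x y : KExt R M, x * y = ⟨x.m + y.m + k x.r y.r, x.r * y.r⟩ := fun _ _ => rfl
  have one_def : (1 : KExt R M) = ⟨0, 1⟩ := rfl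
  have inv_def : ∀ x : KExt R M, x⁻¹ = ⟨- x.m - k x.r⁻¹ x.r, x.r⁻¹⟩ := fun _ => rfl
  let : Group (KExt R M) := Group.ofLeftAxioms
    (by
      intro x y z
      simp only [mul_def, mul_assoc, KExt.mk.injEq, and_true]
      have := hc x.r y.r z.r
      rw [← sub_eq_zero] at this ⊢
      rw [← this]; abel)
    (by intro x; simp [mul_def, one_def, h1])
    (by intro x; simp [mul_def, one_def, inv_def]; abel)
  let p : KExt R M →* R := { toFun := KExt.r, map_one' := rfl, map_mul' := fun _ _ => rfl }
  let s : R →* KExt R M := IsFreeGroup.lift (fun x => ⟨0, IsFreeGroup.of x⟩)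
  have hps : p.comp s = MonoidHom.id R := by
    apply IsFreeGroup.ext_hom
    intro x
    simp [s, p]
  have hps' : ∀ r, (s r).r = r := fun r => DFunLike.congr_fun hps r
  refine ⟨fun r => (s r).m, fun r t => ?_⟩
  have : (s (r * t)).m = (s r).m + (s t).m + k (s r).r (s t).r := by rw [map_mul]; rfl
  simp only [this, hps']
end

section
variable {F : Type} [Group F]

/-- linear extension of a function on the group -/
noncomputable def linExt {L : Type} [AddCommGroup L] (c : F → L) : MonoidAlgebra ℤ F →ₗ[ℤ] L :=
  (Finsupp.linearCombination ℤ c) ∘ₗ (MonoidAlgebra.coeffLinearEquiv ℤ).toLinearMap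

theorem linExt_of {L : Type} [AddCommGroup L] (c : F → L) (f : F) :
    linExt c (MonoidAlgebra.of ℤ F f) = c f := by
  simp [linExt]
end

section
variable {F : Type} [Group F]

theorem augI_eq (N : Subgroup F) :
    augI N = Submodule.span ℤ {x | ∃ r ∈ N, ∃ f : F, x = (MonoidAlgebra.of ℤ F r - 1) *
      MonoidAlgebra.of ℤ F f} := by
  have htop : (⊤ : Submodule ℤ (MonoidAlgebra ℤ F)) =
      Submodule.span ℤ (Set.range (MonoidAlgebra.of ℤ F)) := by
    symm
    rw [eq_top_iff]
    intro x _
    induction x using MonoidAlgebra.induction_on with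
    | of g => exact Submodule.subset_span ⟨g, rfl⟩
    | add x y hx hy => exact add_mem (hx trivial) (hy trivial)
    | smul r x hx => exact Submodule.smul_mem _ _ (hx trivial)
  rw [augI, aug, htop, Submodule.span_mul_span]
  congr 1
  ext x
  constructor
  · rintro ⟨_, ⟨r, hr, rfl⟩, _, ⟨f, rfl⟩, rfl⟩
    exact ⟨r, hr, f, rfl⟩
  · rintro ⟨r, hr, f, rfl⟩
    exact ⟨_, ⟨r, hr, rfl⟩, _, ⟨f, rfl⟩, rfl⟩

theorem mul_augI (S : Set (MonoidAlgebra ℤ F)) (N : Subgroup F) :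
    Submodule.span ℤ S * augI N ≤ Submodule.span ℤ {x | ∃ s ∈ S, ∃ r ∈ N, ∃ f : F,
      x = s * ((MonoidAlgebra.of ℤ F r - 1) * MonoidAlgebra.of ℤ F f)} := by
  rw [augI_eq, Submodule.span_mul_span]
  apply Submodule.span_mono
  rintro _ ⟨s, hs, _, ⟨r, hr, f, rfl⟩, rfl⟩
  exact ⟨s, hs, r, hr, f, rfl⟩

theorem of_mul_delta (f r : F) : MonoidAlgebra.of ℤ F f * (MonoidAlgebra.of ℤ F r - 1) =
    (MonoidAlgebra.of ℤ F (f * r * f⁻¹) - 1) * MonoidAlgebra.of ℤ F f := by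
  simp only [mul_sub, sub_mul, ← map_mul, mul_one, one_mul, inv_mul_cancel_right]

def E2 (R : Subgroup F) : Set (MonoidAlgebra ℤ F) := {x | ∃ r ∈ R, ∃ s ∈ R, ∃ f : F,
  x = (MonoidAlgebra.of ℤ F r - 1) * (MonoidAlgebra.of ℤ F s - 1) * MonoidAlgebra.of ℤ F f}

def E3 (R : Subgroup F) : Set (MonoidAlgebra ℤ F) :=
  {x | ∃ q ∈ R, ∃ r ∈ R, ∃ s ∈ R, ∃ f : F,
  x = (MonoidAlgebra.of ℤ F q - 1) * (MonoidAlgebra.of ℤ F r - 1) *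
    (MonoidAlgebra.of ℤ F s - 1) * MonoidAlgebra.of ℤ F f}

theorem pow2_le (R : Subgroup F) [hR : R.Normal] :
    augI R * augI R ≤ Submodule.span ℤ (E2 R) := by
  refine (mul_le_mul' (augI_eq R).le le_rfl).trans ((mul_augI _ R).trans
    (Submodule.span_mono ?_))
  rintro _ ⟨_, ⟨r, hr, f, rfl⟩, s, hs, g, rfl⟩
  refine ⟨r, hr, f * s * f⁻¹, hR.conj_mem s hs f, f * g, ?_⟩
  have := of_mul_delta f s
  rw [map_mul _ f g, ← mul_assoc, mul_assoc _ _ (MonoidAlgebra.of ℤ F s - 1), this]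
  noncomm_ring

theorem pow3_le (R : Subgroup F) [hR : R.Normal] :
    augI R * augI R * augI R ≤ Submodule.span ℤ (E3 R) := by
  refine (mul_le_mul' (pow2_le R) le_rfl).trans ((mul_augI _ R).trans
    (Submodule.span_mono ?_))
  rintro _ ⟨_, ⟨q, hq, r, hr, f, rfl⟩, s, hs, g, rfl⟩
  refine ⟨q, hq, r, hr, f * s * f⁻¹, hR.conj_mem s hs f, f * g, ?_⟩
  have := of_mul_delta f s
  rw [map_mul _ f g, ← mul_assoc, mul_assoc _ _ (MonoidAlgebra.of ℤ F s - 1), this]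
  noncomm_ring

/-- second and third differences of a function on the group -/
def t2 {L : Type} [AddCommGroup L] (c : F → L) (r s f : F) : L :=
  c (r * s * f) - c (r * f) - c (s * f) + c f

theorem linExt_t2 {L : Type} [AddCommGroup L] (c : F → L) (r s f : F) :
    linExt c ((MonoidAlgebra.of ℤ F r - 1) * (MonoidAlgebra.of ℤ F s - 1) *
      MonoidAlgebra.of ℤ F f) = t2 c r s f := by
  simp only [mul_sub, sub_mul, ← map_mul, mul_one, one_mul, map_sub, linExt_of, t2]
  abel

def t3 {L : Type} [AddCommGroup L] (c : F → L) (q r s f : F) : L :=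
  t2 c (q * r) s f - t2 c q s f - t2 c r s f

theorem linExt_t3 {L : Type} [AddCommGroup L] (c : F → L) (q r s f : F) :
    linExt c ((MonoidAlgebra.of ℤ F q - 1) * (MonoidAlgebra.of ℤ F r - 1) *
      (MonoidAlgebra.of ℤ F s - 1) * MonoidAlgebra.of ℤ F f) = t3 c q r s f := by
  rw [t3, ← linExt_t2, ← linExt_t2, ← linExt_t2, ← map_sub, ← map_sub, map_mul (MonoidAlgebra.of ℤ F) q r]
  congr 1
  noncomm_ring

theorem J_kill (R : Subgroup F) [hR : R.Normal] {L : Type} [AddCommGroup L] (c : F → L)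
    (h1 : ∀ q ∈ R, ∀ r ∈ R, ∀ s ∈ R, ∀ f g, t3 c q r s f = t3 c q r s g)
    (h2 : ∀ q ∈ R, ∀ r ∈ R, ∀ s ∈ R, ∀ f g,
      t3 c (g * q * g⁻¹) (g * r * g⁻¹) (g * s * g⁻¹) f = t3 c q r s f)
    (h3 : ∀ u ∈ ⁅R, R⁆, ∀ r ∈ R, ∀ f, t2 c u r f = 0) (a : F)
    (ha : (MonoidAlgebra.of ℤ F a) - 1 ∈
      augI R * augI R * augI R * augI (⊤ : Subgroup F) +
        augI (⊤ : Subgroup F) * augI R * augI R * augI R +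
          aug ⁅R, R⁆ * augI R) : c a = c 1 := by
  suffices h : augI R * augI R * augI R * augI (⊤ : Subgroup F) +
        augI (⊤ : Subgroup F) * augI R * augI R * augI R +
          aug ⁅R, R⁆ * augI R ≤ LinearMap.ker (linExt c) by
    have := h ha
    rw [LinearMap.mem_ker, ← map_one (MonoidAlgebra.of ℤ F), map_sub, linExt_of, linExt_of] at this
    exact sub_eq_zero.mp this
  rw [Submodule.add_eq_sup, Submodule.add_eq_sup]
  refine sup_le (sup_le ?_ ?_) ?_
  · refine (mul_le_mul' (pow3_le R) le_rfl).trans ((mul_augI _ _).trans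
      (Submodule.span_le.mpr ?_))
    rintro _ ⟨_, ⟨q, hq, r, hr, s, hs, f, rfl⟩, g, -, h, rfl⟩
    rw [SetLike.mem_coe, LinearMap.mem_ker, sub_mul (MonoidAlgebra.of ℤ F g), one_mul,
      mul_sub _ (_ * _) (MonoidAlgebra.of ℤ F h), map_sub, ← map_mul,
      mul_assoc _ (MonoidAlgebra.of ℤ F f), mul_assoc _ (MonoidAlgebra.of ℤ F f), ← map_mul,
      ← map_mul, linExt_t3, linExt_t3, sub_eq_zero]
    exact h1 q hq r hr s hs _ _
  · have : augI (⊤ : Subgroup F) * augI R * augI R * augI R ≤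
        augI (⊤ : Subgroup F) * Submodule.span ℤ (E3 R) := by
      rw [mul_assoc, mul_assoc, ← mul_assoc (augI R)]
      exact mul_le_mul' le_rfl (pow3_le R)
    refine this.trans ?_
    rw [augI_eq, Submodule.span_mul_span, Submodule.span_le]
    rintro _ ⟨_, ⟨g, -, h, rfl⟩, _, ⟨q, hq, r, hr, s, hs, f, rfl⟩, rfl⟩
    have key : ∀ g : F, linExt c (MonoidAlgebra.of ℤ F g * ((MonoidAlgebra.of ℤ F q - 1) *
        (MonoidAlgebra.of ℤ F r - 1) *
        (MonoidAlgebra.of ℤ F s - 1) * MonoidAlgebra.of ℤ F f)) = t3 c q r s 1 := by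
      intro g
      have e : MonoidAlgebra.of ℤ F g * ((MonoidAlgebra.of ℤ F q - 1) *
        (MonoidAlgebra.of ℤ F r - 1) *
        (MonoidAlgebra.of ℤ F s - 1) * MonoidAlgebra.of ℤ F f) =
        (MonoidAlgebra.of ℤ F (g * q * g⁻¹) - 1) * (MonoidAlgebra.of ℤ F (g * r * g⁻¹) - 1) *
        (MonoidAlgebra.of ℤ F (g * s * g⁻¹) - 1) * MonoidAlgebra.of ℤ F (g * f) := by
        simp only [← mul_assoc]
        rw [of_mul_delta, mul_assoc _ (MonoidAlgebra.of ℤ F g), of_mul_delta, ← mul_assoc,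
          mul_assoc _ (MonoidAlgebra.of ℤ F g), of_mul_delta, map_mul _ g f]
        simp only [mul_assoc]
      rw [e, linExt_t3, h2 q hq r hr s hs]
      exact h1 q hq r hr s hs _ _
    rw [SetLike.mem_coe, LinearMap.mem_ker]
    simp only []
    rw [sub_mul, one_mul, sub_mul, map_sub, ← map_mul, key, key, sub_self]
  · rw [aug]
    refine (mul_augI _ _).trans (Submodule.span_le.mpr ?_)
    rintro _ ⟨_, ⟨u, hu, rfl⟩, r, hr, f, rfl⟩
    rw [SetLike.mem_coe, LinearMap.mem_ker, ← mul_assoc, linExt_t2]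
    exact h3 u hu r hr f

theorem exists_tau (R : Subgroup F) :
    ∃ τ : F → R, ∀ (r : R) (f : F), τ (r * f) = r * τ f := by
  let t : F → F := fun f => (Quotient.mk (QuotientGroup.rightRel R) f).out
  have ht : ∀ f, f * (t f)⁻¹ ∈ R := fun f => by
    have := Quotient.exact (Quotient.out_eq (Quotient.mk (QuotientGroup.rightRel R) f))
    exact QuotientGroup.rightRel_apply.mp this
  refine ⟨fun f => ⟨f * (t f)⁻¹, ht f⟩, fun r f => ?_⟩
  have e : t (r * f) = t f := by
    simp only [t]
    congr 1
    apply Quotient.sound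
    apply QuotientGroup.rightRel_apply.mpr
    simp
  ext
  simp [e, mul_assoc]
end

section
open scoped commutatorElement

theorem kills_comm {S L : Type} [Group S] [AddCommGroup L] (f : S → L)
    (hf : ∀ x y, f (x * y) = f x + f y) (u : S) (hu : u ∈ ⁅(⊤ : Subgroup S), (⊤ : Subgroup S)⁆) : f u = 0 := by
  let g : S →* Multiplicative L := MonoidHom.mk' (fun x => Multiplicative.ofAdd (f x))
    (fun x y => by rw [hf]; rfl)
  have := Abelianization.commutator_subset_ker g hu
  exact this

theorem comm_induction {S : Type} [Group S] (A B : Subgroup S) (p : S → Prop)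
    (hg : ∀ a ∈ A, ∀ b ∈ B, p ⁅a, b⁆) (h1 : p 1)
    (hm : ∀ x ∈ ⁅A, B⁆, ∀ y ∈ ⁅A, B⁆, p x → p y → p (x * y))
    (hi : ∀ x ∈ ⁅A, B⁆, p x → p x⁻¹)
    (u : S) (hu : u ∈ ⁅A, B⁆) : p u := by
  rw [Subgroup.commutator_def] at hu hm hi
  induction hu using Subgroup.closure_induction with
  | mem x hx => obtain ⟨a, ha, b, hb, rfl⟩ := hx; exact hg a ha b hb
  | one => exact h1
  | mul x y hx hy h h' => exact hm x hx y hy h h'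
  | inv x hx h => exact hi x hx h

instance centerCommGroup (H : Type) [Group H] : CommGroup (Subgroup.center H) :=
  { (inferInstance : Group (Subgroup.center H)) with
    mul_comm := fun a b => Subtype.ext ((Subgroup.mem_center_iff.mp b.2) a.1) }

/-- values in an additive copy of the centre -/
def vv {H : Type} [Group H] (x : Additive (Subgroup.center H)) : H := ((Additive.toMul x : _) : H)

section vvl
variable {H : Type} [Group H]
theorem vv_add (x y : Additive (Subgroup.center H)) : vv (x + y) = vv x * vv y := rfl
theorem vv_zero : vv (0 : Additive (Subgroup.center H)) = 1 := rfl
theorem vv_neg (x : Additive (Subgroup.center H)) : vv (-x) = (vv x)⁻¹ := rfl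
theorem vv_inj (x y : Additive (Subgroup.center H)) (h : vv x = vv y) : x = y :=
  Additive.toMul.injective (Subtype.ext h)
theorem vv_comm (x : Additive (Subgroup.center H)) (h : H) : vv x * h = h * vv x :=
  ((Subgroup.mem_center_iff.mp (Additive.toMul x).2) h).symm
def mkv (x : H) (h : x ∈ Subgroup.center H) : Additive (Subgroup.center H) := Additive.ofMul ⟨x, h⟩
theorem vv_mkv (x : H) (h : x ∈ Subgroup.center H) : vv (mkv x h) = x := rfl

/-- commutator identities -/
theorem comm_mul_left (x y z : H) (h : ⁅y, z⁆ ∈ Subgroup.center H) :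
    ⁅x * y, z⁆ = ⁅x, z⁆ * ⁅y, z⁆ := by
  have h' := Subgroup.mem_center_iff.mp h
  have : ⁅x * y, z⁆ = x * ⁅y, z⁆ * x⁻¹ * ⁅x, z⁆ := by simp only [commutatorElement_def]; group
  rw [this, h' x, mul_inv_cancel_right, h' ⁅x, z⁆]

theorem comm_mul_right (x y z : H) (h : ⁅x, z⁆ ∈ Subgroup.center H) :
    ⁅x, y * z⁆ = ⁅x, y⁆ * ⁅x, z⁆ := by
  have h' := Subgroup.mem_center_iff.mp h
  have : ⁅x, y * z⁆ = ⁅x, y⁆ * (y * ⁅x, z⁆ * y⁻¹) := by simp only [commutatorElement_def]; group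
  rw [this, h' y, mul_inv_cancel_right]

theorem comm_central_left (x y z : H) (h : x ∈ Subgroup.center H) :
    ⁅x * y, z⁆ = ⁅y, z⁆ := by
  have h' := Subgroup.mem_center_iff.mp h
  have : ⁅x * y, z⁆ = x * ⁅y, z⁆ * (z * x⁻¹ * z⁻¹) := by simp only [commutatorElement_def]; group
  rw [this, ← h', (Subgroup.mem_center_iff.mp (inv_mem h)) z]
  group
end vvl

theorem level2_core (S H : Type) [Group S] [IsFreeGroup S] [Group H] (π : S →* H)
    (hcen : ∀ x y, ⁅π x, π y⁆ ∈ Subgroup.center H) :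
    ∃ (b : S → Additive (Subgroup.center H)) (B : S → S → Additive (Subgroup.center H)),
      (∀ x y, b (x * y) = b x + b y + B x y) ∧
      (∀ x y z, B (x * y) z = B x z + B y z) ∧ (∀ x y z, B x (y * z) = B x y + B x z) ∧
      ∀ u ∈ ⁅(⊤ : Subgroup S), (⊤ : Subgroup S)⁆, vv (b u) = π u := by
  classical
  let C : S →* S →* Subgroup.center H := MonoidHom.mk'
    (fun x => MonoidHom.mk' (fun y => ⟨⁅π x, π y⁆, hcen x y⟩) (by
      intro y z
      ext
      simp only [map_mul, Subgroup.coe_mul]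
      exact comm_mul_right _ _ _ (hcen _ _))) (by
      intro x y
      ext z
      simp only [map_mul, MonoidHom.mul_apply, Subgroup.coe_mul, MonoidHom.mk'_apply]
      exact comm_mul_left _ _ _ (hcen _ _))
  have hC : ∀ x y, (C x y : H) = ⁅π x, π y⁆ := fun _ _ => rfl
  have hCs : ∀ x y, C y x = (C x y)⁻¹ := by
    intro x y
    ext
    simp only [hC, Subgroup.coe_inv, commutatorElement_inv]
  obtain ⟨lo⟩ : Nonempty (LinearOrder (IsFreeGroup.Generators S)) :=
    ⟨IsWellOrder.linearOrder WellOrderingRel⟩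
  let B : S →* S →* Subgroup.center H := IsFreeGroup.lift (fun x => IsFreeGroup.lift (fun y =>
    if x < y then C (IsFreeGroup.of x) (IsFreeGroup.of y) else 1))
  have hB : B * (B.flip)⁻¹ = C := by
    apply IsFreeGroup.ext_hom
    intro x
    apply IsFreeGroup.ext_hom
    intro y
    simp only [MonoidHom.mul_apply, MonoidHom.inv_apply, MonoidHom.flip_apply, B,
      IsFreeGroup.lift_of]
    rcases lt_trichotomy x y with h | h | h
    · simp [h, h.not_gt]
    · subst h
      simp only [lt_irrefl, if_false]
      ext
      simp [hC]
    · simp only [h, h.not_gt, if_true, if_false, one_mul]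
      rw [hCs, inv_inv]
  have hB' : ∀ x y, B x y = C x y * B y x := by
    intro x y
    have : B x y * (B y x)⁻¹ = C x y := by rw [← hB]; rfl
    rw [← this, inv_mul_cancel_right]
  let Z := Additive (Subgroup.center H)
  let B' : S → S → Z := fun x y => Additive.ofMul (B x y)
  have hB1 : ∀ x y z, B' (x * y) z = B' x z + B' y z := by
    intro x y z; simp only [B', map_mul, MonoidHom.mul_apply]; rfl
  have hB2 : ∀ x y z, B' x (y * z) = B' x y + B' x z := by
    intro x y z; simp only [B', map_mul]; rfl
  have hBs : ∀ x y, B' x y = mkv _ (hcen x y) + B' y x := by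
    intro x y
    simp only [B']
    rw [hB']; rfl
  obtain ⟨b, hb⟩ := cocycle_split B' (by intro r; simp [B']) (by
    intro r s t; rw [hB1, hB2]; abel)
  refine ⟨b, B', hb, hB1, hB2, ?_⟩
  have hk0 : ∀ u ∈ ⁅(⊤ : Subgroup S), (⊤ : Subgroup S)⁆, ∀ y, B' u y = 0 := fun u hu y =>
    kills_comm (fun x => B' x y) (fun x z => hB1 x z y) u hu
  have hb1 : b 1 = 0 := by
    have := hb 1 1
    rw [hk0 1 (one_mem _)] at this
    simpa using this
  · apply comm_induction
    · intro x _ y _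
      have hc : ⁅x, y⁆ ∈ ⁅(⊤ : Subgroup S), (⊤ : Subgroup S)⁆ :=
        Subgroup.commutator_mem_commutator trivial trivial
      have e : x * y = ⁅x, y⁆ * (y * x) := by simp only [commutatorElement_def]; group
      have e1 := hb x y
      rw [e, hb, hb y x, hk0 _ hc, hBs x y] at e1
      have e2 : b ⁅x, y⁆ = mkv _ (hcen x y) := by
        rw [← sub_eq_zero] at e1 ⊢
        rw [← e1]; abel
      rw [e2, vv_mkv, map_commutatorElement]
    · rw [hb1, map_one]; rfl
    · intro x hx y hy h h'
      rw [hb, hk0 x hx, add_zero, vv_add, h, h', map_mul]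
    · intro x hx h
      have := hb x x⁻¹
      rw [mul_inv_cancel, hb1, hk0 x hx, add_zero] at this
      rw [← neg_eq_of_add_eq_zero_right this.symm, vv_neg, h, map_inv]

theorem level2 (S : Type) [Group S] [IsFreeGroup S] :
    ∃ (L : Type) (_ : AddCommGroup L) (b : S → L) (B : S → S → L),
      (∀ x y, b (x * y) = b x + b y + B x y) ∧
      (∀ x y z, B (x * y) z = B x z + B y z) ∧ (∀ x y z, B x (y * z) = B x y + B x z) ∧
      ∀ u ∈ ⁅(⊤ : Subgroup S), (⊤ : Subgroup S)⁆, b u = 0 →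
        u ∈ ⁅⁅(⊤ : Subgroup S), (⊤ : Subgroup S)⁆, (⊤ : Subgroup S)⁆ := by
  have hk : ∀ x, QuotientGroup.mk' ⁅⁅(⊤ : Subgroup S), (⊤ : Subgroup S)⁆, (⊤ : Subgroup S)⁆ x = 1 ↔
    x ∈ ⁅⁅(⊤ : Subgroup S), (⊤ : Subgroup S)⁆, (⊤ : Subgroup S)⁆ :=
      fun x => QuotientGroup.eq_one_iff x
  obtain ⟨b, B, h1, h2, h3, h4⟩ := level2_core S
    (S ⧸ ⁅⁅(⊤ : Subgroup S), (⊤ : Subgroup S)⁆, (⊤ : Subgroup S)⁆) (QuotientGroup.mk' _) (by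
    intro x y
    rw [Subgroup.mem_center_iff]
    intro g
    obtain ⟨z, rfl⟩ := QuotientGroup.mk'_surjective _ g
    symm
    rw [← commutatorElement_eq_one_iff_mul_comm, ← map_commutatorElement, ← map_commutatorElement,
      hk]
    exact Subgroup.commutator_mem_commutator
      (Subgroup.commutator_mem_commutator trivial trivial) trivial)
  refine ⟨_, inferInstance, b, B, h1, h2, h3, ?_⟩
  intro u hu h0
  have := h4 u hu
  rw [h0, vv_zero] at this
  exact (hk u).mp this.symm

theorem level3 {S L : Type} [Group S] [IsFreeGroup S] [AddCommGroup L] (T : S → S → S → L)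
    (h1 : ∀ x y z w, T (x * y) z w = T x z w + T y z w)
    (h2 : ∀ x y z w, T x (y * z) w = T x y w + T x z w)
    (h3 : ∀ x y z w, T x y (z * w) = T x y z + T x y w)
    (hs : ∀ x y z, T x y z = T y x z) :
    ∃ (c : S → L) (k : S → S → L), (∀ x y, c (x * y) = c x + c y + k x y) ∧
      (∀ x y z, k (x * y) z = k x z + k y z + T x y z) ∧
      (∀ u ∈ ⁅(⊤ : Subgroup S), (⊤ : Subgroup S)⁆, ∀ z, k u z = 0) ∧
      (∀ x y z, k z ⁅x, y⁆ = T z x y - T z y x) ∧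
      (∀ u ∈ ⁅(⊤ : Subgroup S), (⊤ : Subgroup S)⁆, ∀ z v, k z (u * v) = k z u + k z v) := by
  have k1 : ∀ u ∈ ⁅(⊤ : Subgroup S), (⊤ : Subgroup S)⁆, ∀ y z, T u y z = 0 := fun u hu y z =>
    kills_comm (fun x => T x y z) (fun x w => h1 x w y z) u hu
  have k2 : ∀ u ∈ ⁅(⊤ : Subgroup S), (⊤ : Subgroup S)⁆, ∀ y z, T y u z = 0 := fun u hu y z =>
    kills_comm (fun x => T y x z) (fun x w => h2 y x w z) u hu
  let K : S → S → (Additive S →+ L) := fun r s =>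
    AddMonoidHom.mk' (fun x => T r s x.toMul) (fun x y => h3 r s x.toMul y.toMul)
  let K' : S → S → (Additive S →+ L) := fun r s =>
    AddMonoidHom.mk' (fun x => T x.toMul r s) (fun x y => h1 x.toMul y.toMul r s)
  have hK : ∀ r s x, K r s x = T r s x.toMul := fun _ _ _ => rfl
  have hK' : ∀ r s x, K' r s x = T x.toMul r s := fun _ _ _ => rfl
  obtain ⟨b, hb⟩ := cocycle_split K
    (by intro r; refine AddMonoidHom.ext fun x => ?_; rw [hK, k1 1 (one_mem _)]; rfl)
    (by intro r s t; refine AddMonoidHom.ext fun x => ?_; simp only [AddMonoidHom.add_apply, hK, h1, h2]; abel)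
  obtain ⟨b', hb'⟩ := cocycle_split K'
    (by intro r; refine AddMonoidHom.ext fun x => ?_; rw [hK', k2 1 (one_mem _)]; rfl)
    (by intro r s t; refine AddMonoidHom.ext fun x => ?_; simp only [AddMonoidHom.add_apply, hK', h3, h2]; abel)
  let β : S → S → L := fun r s => b r (Additive.ofMul s)
  let β' : S → S → L := fun r s => b' r (Additive.ofMul s)
  have e1 : ∀ r s x, β (r * s) x = β r x + β s x + T r s x := by
    intro r s x; simp only [β, hb]; rfl
  have e1' : ∀ r s x, β' (r * s) x = β' r x + β' s x + T x r s := by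
    intro r s x; simp only [β', hb']; rfl
  have e2 : ∀ r s x, β r (s * x) = β r s + β r x := by
    intro r s x; simp only [β, ofMul_mul, map_add]
  have e2' : ∀ r s x, β' r (s * x) = β' r s + β' r x := by
    intro r s x; simp only [β', ofMul_mul, map_add]
  have z2 : ∀ u ∈ ⁅(⊤ : Subgroup S), (⊤ : Subgroup S)⁆, ∀ z, β z u = 0 := fun u hu z =>
    kills_comm (fun x => β z x) (fun x w => e2 z x w) u hu
  have z2' : ∀ u ∈ ⁅(⊤ : Subgroup S), (⊤ : Subgroup S)⁆, ∀ z, β' z u = 0 := fun u hu z =>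
    kills_comm (fun x => β' z x) (fun x w => e2' z x w) u hu
  have hβ1 : ∀ z, β 1 z = 0 := by
    intro z
    have := e1 1 1 z
    rw [k1 1 (one_mem _)] at this
    simpa using this
  have z1 : ∀ u ∈ ⁅(⊤ : Subgroup S), (⊤ : Subgroup S)⁆, ∀ z, β u z = 0 := by
    intro u hu z
    revert u
    apply comm_induction
    · intro x _ y _
      have hc : ⁅x, y⁆ ∈ ⁅(⊤ : Subgroup S), (⊤ : Subgroup S)⁆ :=
        Subgroup.commutator_mem_commutator trivial trivial
      have e : x * y = ⁅x, y⁆ * (y * x) := by simp only [commutatorElement_def]; group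
      have q := e1 x y z
      rw [e, e1, e1 y x, k1 _ hc, hs x y z] at q
      rw [← sub_eq_zero] at q
      rw [← q]; abel
    · exact hβ1 z
    · intro x hx y hy h h'
      rw [e1, h, h', k1 x hx]; simp
    · intro x hx h
      have := e1 x x⁻¹ z
      rw [mul_inv_cancel, hβ1, k1 x hx, h] at this
      simpa using this.symm
  let k : S → S → L := fun r s => β r s + β' s r
  obtain ⟨c, hc⟩ := cocycle_split k
    (by intro r; simp only [k]; rw [z1 1 (one_mem _), z2' 1 (one_mem _), add_zero])
    (by intro r s t; simp only [k, e1, e1', e2, e2']; abel)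
  refine ⟨c, k, hc, ?_, ?_, ?_, ?_⟩
  · intro x y z; simp only [k, e1, e2']; abel
  · intro u hu z; simp only [k]; rw [z1 u hu, z2' u hu, add_zero]
  · intro x y z
    have hc : ⁅x, y⁆ ∈ ⁅(⊤ : Subgroup S), (⊤ : Subgroup S)⁆ :=
      Subgroup.commutator_mem_commutator trivial trivial
    simp only [k]
    rw [z2 _ hc, zero_add]
    have e : x * y = ⁅x, y⁆ * (y * x) := by simp only [commutatorElement_def]; group
    have q := e1' x y z
    rw [e, e1', e1' y x, k2 _ hc] at q
    rw [← sub_eq_zero] at q ⊢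
    rw [← q]; abel
  · intro u hu z v
    simp only [k]
    rw [e1', e2, k2 u hu]; abel
end

section
open scoped commutatorElement

theorem level3_core {F H : Type} [Group F] [Group H] (R : Subgroup F) [IsFreeGroup R]
    (π : F →* H)
    (hcen : ∀ u ∈ ⁅(⊤ : Subgroup R), (⊤ : Subgroup R)⁆, ∀ z : R,
      ⁅π u, π z⁆ ∈ Subgroup.center H) :
    ∃ (c : R → Additive (Subgroup.center H)) (k : R → R → Additive (Subgroup.center H))
      (T : R → R → R → Additive (Subgroup.center H)),
      (∀ x y, c (x * y) = c x + c y + k x y) ∧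
      (∀ x y z, k (x * y) z = k x z + k y z + T x y z) ∧
      (∀ x y z w, T (x * y) z w = T x z w + T y z w) ∧
      (∀ u ∈ ⁅(⊤ : Subgroup R), (⊤ : Subgroup R)⁆, ∀ z, k u z = 0) ∧
      (∀ (g : F) (x y z x' y' z' : R), (x' : F) = g * x * g⁻¹ → (y' : F) = g * y * g⁻¹ →
        (z' : F) = g * z * g⁻¹ → T x' y' z' = T x y z) ∧
      (∀ a ∈ ⁅⁅(⊤ : Subgroup R), (⊤ : Subgroup R)⁆, (⊤ : Subgroup R)⁆,
        vv (c a) = (π a) ^ 3) := by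
  have hco : ∀ x y : R, ⁅x, y⁆ ∈ ⁅(⊤ : Subgroup R), (⊤ : Subgroup R)⁆ := fun x y =>
    Subgroup.commutator_mem_commutator trivial trivial
  have hc3 : ∀ x y z : R, ⁅⁅π x, π y⁆, π z⁆ ∈ Subgroup.center H := by
    intro x y z
    have := hcen _ (hco x y) z
    have e : (⁅x, y⁆ : R) = (⁅(x : F), (y : F)⁆ : F) := rfl
    rwa [e, map_commutatorElement] at this
  let C : R → R → R → Additive (Subgroup.center H) := fun x y z => mkv _ (hc3 x y z)
  have hC : ∀ x y z, vv (C x y z) = ⁅⁅π x, π y⁆, π z⁆ := fun _ _ _ => rfl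
  have C3 : ∀ x y z w, C x y (z * w) = C x y z + C x y w := by
    intro x y z w
    apply vv_inj
    rw [vv_add, hC, hC, hC, Subgroup.coe_mul, map_mul]
    exact comm_mul_right _ _ _ (hc3 _ _ _)
  have C1 : ∀ x y z w, C (x * y) z w = C x z w + C y z w := by
    intro x y z w
    rw [add_comm]
    apply vv_inj
    rw [vv_add, hC, hC, hC, Subgroup.coe_mul, map_mul]
    have e : ⁅π x * π y, π z⁆ = ⁅⁅π y, π z⁆, π x⁆⁻¹ * (⁅π y, π z⁆ * ⁅π x, π z⁆) := by
      simp only [commutatorElement_def]; group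
    rw [e, comm_central_left _ _ _ (inv_mem (hc3 y z x)), comm_mul_left _ _ _ (hc3 x z w)]
  have Ca : ∀ x y z, C y x z = - C x y z := by
    intro x y z
    rw [eq_neg_iff_add_eq_zero]
    apply vv_inj
    rw [vv_add, hC, hC, ← comm_mul_left _ _ _ (hc3 x y z), ← commutatorElement_inv (π x) (π y),
      inv_mul_cancel, vv_zero, commutatorElement_one_left]
  have C2 : ∀ x y z w, C x (y * z) w = C x y w + C x z w := by
    intro x y z w
    rw [Ca, C1, Ca x y, Ca x z]; abel
  have Cone : ∀ x y, C 1 x y = 0 := fun x y =>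
    kills_comm (fun w => C w x y) (fun a b => C1 a b x y) 1 (one_mem _)
  have Cinv : ∀ x y z, C x⁻¹ y z = - C x y z := by
    intro x y z
    have := C1 x⁻¹ x y z
    rw [inv_mul_cancel, Cone] at this
    exact eq_neg_of_add_eq_zero_left this.symm
  have CJ : ∀ x y z, C x y z + C y z x + C z x y = 0 := by
    intro x y z
    have hw : ∀ a b c : H, b * ⁅⁅b⁻¹, a⁆, c⁆ * b⁻¹ * (c * ⁅⁅c⁻¹, b⁆, a⁆ * c⁻¹) *
        (a * ⁅⁅a⁻¹, c⁆, b⁆ * a⁻¹) = 1 := by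
      intro a b c; simp only [commutatorElement_def]; group
    have hh : ∀ x y z : R, π y * ⁅⁅(π y)⁻¹, π x⁆, π z⁆ * (π y)⁻¹ = vv (C x y z) := by
      intro x y z
      have : ⁅⁅(π y)⁻¹, π x⁆, π z⁆ = vv (C x y z) := by
        rw [Ca, ← Cinv, hC]; simp
      rw [this, ← vv_comm, mul_inv_cancel_right]
    have := hw (π x) (π y) (π z)
    rw [hh x y z, hh y z x, hh z x y] at this
    exact vv_inj _ _ this
  let T : R → R → R → Additive (Subgroup.center H) := fun x y z => C z y x + C z x y
  obtain ⟨c, k, hc, hk1, hk0, hkc, hk2⟩ := level3 T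
    (by intro x y z w; simp only [T, C2, C3]; abel)
    (by intro x y z w; simp only [T, C2, C3]; abel)
    (by intro x y z w; simp only [T, C1]; abel)
    (by intro x y z; simp only [T]; abel)
  refine ⟨c, k, T, hc, hk1, ?_, hk0, ?_, ?_⟩
  · intro x y z w; simp only [T, C2, C3]; abel
  · intro g x y z x' y' z' hx hy hz
    have key : ∀ x y z x' y' z' : R, (x' : F) = g * x * g⁻¹ → (y' : F) = g * y * g⁻¹ →
        (z' : F) = g * z * g⁻¹ → C x' y' z' = C x y z := by
      intro x y z x' y' z' hx hy hz
      apply vv_inj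
      have : vv (C x' y' z') = π g * vv (C x y z) * (π g)⁻¹ := by
        rw [hC, hC, hx, hy, hz]
        simp only [map_mul, map_inv, commutatorElement_def]; group
      rw [this, ← vv_comm, mul_inv_cancel_right]
    simp only [T]
    rw [key _ _ _ _ _ _ hz hy hx, key _ _ _ _ _ _ hz hx hy]
  · have kz1 : ∀ z, k z 1 = 0 := by
      intro z
      have := hk2 1 (one_mem _) z 1
      simpa using this
    have step1 : ∀ u ∈ ⁅(⊤ : Subgroup R), (⊤ : Subgroup R)⁆, ∀ z : R,
        vv (- k z u) = ⁅π u, π z⁆ ^ 3 := by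
      apply comm_induction
      · intro x _ y _ z
        have : - k z ⁅x, y⁆ = C x y z + C x y z + C x y z := by
          rw [hkc]
          simp only [T]
          have j := CJ x y z
          rw [Ca x y z, Ca z x y]
          rw [← sub_eq_zero]
          have : C y z x = - (C x y z) - C z x y := by
            rw [← sub_eq_zero, ← j]; abel
          rw [this]; abel
        rw [this, vv_add, vv_add, hC]
        have e : (⁅x, y⁆ : R) = (⁅(x : F), (y : F)⁆ : F) := rfl
        rw [e, map_commutatorElement, pow_three']
      · intro z; rw [kz1]; simp [vv_zero]
      · intro x hx y hy h h' z
        rw [hk2 x hx, neg_add, vv_add, h, h', Subgroup.coe_mul, map_mul,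
          comm_mul_left _ _ _ (hcen y hy z), Commute.mul_pow]
        exact Subgroup.mem_center_iff.mp (hcen y hy z) _
      · intro x hx h z
        have e := hk2 x hx z x⁻¹
        rw [mul_inv_cancel, kz1] at e
        have e1 : k z x⁻¹ = - k z x := eq_neg_of_add_eq_zero_right e.symm
        have e2 : ⁅π (x⁻¹ : R), π z⁆ = ⁅π x, π z⁆⁻¹ := by
          have := comm_mul_left (π (x⁻¹ : R)) (π x) (π z) (hcen x hx z)
          rw [← map_mul, ← Subgroup.coe_mul, inv_mul_cancel, Subgroup.coe_one, map_one,
            commutatorElement_one_left] at this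
          exact eq_inv_of_mul_eq_one_left this.symm
        rw [e1, vv_neg, h, e2, inv_pow]
    have hle : ⁅⁅(⊤ : Subgroup R), (⊤ : Subgroup R)⁆, (⊤ : Subgroup R)⁆ ≤
        ⁅(⊤ : Subgroup R), (⊤ : Subgroup R)⁆ := Subgroup.commutator_mono le_top le_rfl
    have hc1 : c 1 = 0 := by
      have := hc 1 1
      rw [kz1] at this
      simpa using this
    apply comm_induction
    · intro u hu z _
      have e : u * z = ⁅u, z⁆ * (z * u) := by simp only [commutatorElement_def]; group
      have q := hc u z
      rw [e, hc, hc z u, hk0 _ (hco u z), hk0 _ hu] at q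
      have : c ⁅u, z⁆ = - k z u := by
        rw [← sub_eq_zero] at q ⊢
        rw [← q]; abel
      rw [this, step1 u hu]
      have e : (⁅u, z⁆ : R) = (⁅(u : F), (z : F)⁆ : F) := rfl
      rw [e, map_commutatorElement]
    · rw [hc1]; simp [vv_zero]
    · intro x hx y hy h h'
      rw [hc, hk0 x (hle hx), add_zero, vv_add, h, h', Subgroup.coe_mul, map_mul, Commute.mul_pow]
      -- π y is central
      have hz : ∀ y ∈ ⁅⁅(⊤ : Subgroup R), (⊤ : Subgroup R)⁆, (⊤ : Subgroup R)⁆,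
          π y ∈ Subgroup.center H := by
        apply comm_induction
        · intro u hu z _
          have e : (⁅u, z⁆ : R) = (⁅(u : F), (z : F)⁆ : F) := rfl
          rw [e, map_commutatorElement]
          exact hcen u hu z
        · simp [one_mem]
        · intro x _ y _ h h'
          rw [Subgroup.coe_mul, map_mul]; exact mul_mem h h'
        · intro x _ h
          rw [Subgroup.coe_inv, map_inv]; exact inv_mem h
      exact Subgroup.mem_center_iff.mp (hz y hy) _
    · intro x hx h
      have := hc x x⁻¹
      rw [mul_inv_cancel, hc1, hk0 x (hle hx), add_zero] at this
      rw [← neg_eq_of_add_eq_zero_right this.symm, vv_neg, h, Subgroup.coe_inv, map_inv, inv_pow]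

theorem map_comm2 {F : Type} [Group F] (R : Subgroup F) :
    Subgroup.map R.subtype ⁅(⊤ : Subgroup R), (⊤ : Subgroup R)⁆ = ⁅R, R⁆ := by
  rw [Subgroup.map_commutator, ← MonoidHom.range_eq_map, Subgroup.range_subtype]

theorem map_comm3 {F : Type} [Group F] (R : Subgroup F) :
    Subgroup.map R.subtype ⁅⁅(⊤ : Subgroup R), (⊤ : Subgroup R)⁆, (⊤ : Subgroup R)⁆ =
      ⁅⁅R, R⁆, R⁆ := by
  rw [Subgroup.map_commutator, map_comm2, ← MonoidHom.range_eq_map, Subgroup.range_subtype]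

theorem main_aux {F : Type} [Group F] (R : Subgroup F) [hR : R.Normal] [IsFreeGroup R]
    (a : F)
    (ha : (MonoidAlgebra.of ℤ F a) - 1 ∈
      augI R * augI R * augI R * augI (⊤ : Subgroup F) +
        augI (⊤ : Subgroup F) * augI R * augI R * augI R +
          aug ⁅R, R⁆ * augI R) :
    a ^ 3 ∈ ⁅⁅⁅R, R⁆, R⁆, (⊤ : Subgroup F)⁆ := by
  classical
  have hRR : ⁅R, R⁆ ≤ R := Subgroup.commutator_le_left R R
  obtain ⟨τ, hτ⟩ := exists_tau R
  have lift2 : ∀ u : R, (u : F) ∈ ⁅R, R⁆ → u ∈ ⁅(⊤ : Subgroup R), (⊤ : Subgroup R)⁆ := by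
    intro u hu
    rw [← map_comm2] at hu
    obtain ⟨v, hv, hvu⟩ := hu
    rwa [← Subtype.ext hvu]
  -- generic vanishing for functions with zero second difference
  have gen : ∀ {L : Type} [AddCommGroup L] (c : F → L),
      (∀ r ∈ R, ∀ s ∈ R, ∀ f, t2 c r s f = 0) → c a = c 1 := by
    intro L _ c h
    have h3 : ∀ q ∈ R, ∀ r ∈ R, ∀ s ∈ R, ∀ f, t3 c q r s f = 0 := by
      intro q hq r hr s hs f
      rw [t3, h _ (mul_mem hq hr) s hs, h q hq s hs, h r hr s hs]; simp
    refine J_kill R c ?_ ?_ ?_ a ha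
    · intro q hq r hr s hs f g
      rw [h3 q hq r hr s hs, h3 q hq r hr s hs]
    · intro q hq r hr s hs f g
      rw [h3 q hq r hr s hs, h3 _ (hR.conj_mem q hq g) _ (hR.conj_mem r hr g) _
        (hR.conj_mem s hs g)]
    · intro u hu r hr f
      exact h u (hRR hu) r hr f
  -- step 0 : a lies in R
  have haR : a ∈ R := by
    have := gen (fun f => if f ∈ R then (1 : ℤ) else 0) (by
      intro r hr s hs f
      simp only [t2, Subgroup.mul_mem_cancel_left R hr, Subgroup.mul_mem_cancel_left R hs,
        mul_assoc]
      ring)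
    simp only [one_mem, if_true] at this
    by_contra h
    simp [h] at this
  -- step 1 : a lies in [R,R]
  have haRR : (⟨a, haR⟩ : R) ∈ ⁅(⊤ : Subgroup R), (⊤ : Subgroup R)⁆ := by
    have := gen (fun f => Additive.ofMul (Abelianization.of (τ f))) (by
      intro r hr s hs f
      have e1 := hτ ⟨r, hr⟩ f
      have e2 := hτ ⟨s, hs⟩ f
      have e3 := hτ ⟨r, hr⟩ (s * f)
      simp only at e1 e2 e3
      simp only [t2, mul_assoc, e1, e2, e3, map_mul, ofMul_mul]
      abel)
    have e := hτ ⟨a, haR⟩ 1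
    simp only [mul_one] at e
    simp only [e, map_mul, ofMul_mul] at this
    have h0 : Abelianization.of (⟨a, haR⟩ : R) = 1 := by
      have := add_eq_right.mp this
      exact this
    rw [← MonoidHom.mem_ker, Abelianization.ker_of] at h0
    exact h0
  -- step 2 : a lies in the third term
  have haR3 : (⟨a, haR⟩ : R) ∈ ⁅⁅(⊤ : Subgroup R), (⊤ : Subgroup R)⁆, (⊤ : Subgroup R)⁆ := by
    obtain ⟨L, _, b, B, hb, hB1, hB2, hfin⟩ := level2 R
    have k1 : ∀ u ∈ ⁅(⊤ : Subgroup R), (⊤ : Subgroup R)⁆, ∀ y, B u y = 0 := fun u hu y =>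
      kills_comm (fun x => B x y) (fun x w => hB1 x w y) u hu
    have ht2 : ∀ (r s : R) (f : F), t2 (fun f => b (τ f)) r s f = B r s := by
      intro r s f
      simp only [t2, mul_assoc, hτ, hb, hB2]
      abel
    have ht3 : ∀ (q r s : R) (f : F), t3 (fun f => b (τ f)) q r s f = 0 := by
      intro q r s f
      rw [t3, ← Subgroup.coe_mul, ht2, ht2, ht2, hB1]; abel
    have := J_kill R (fun f => b (τ f))
      (by
        intro q hq r hr s hs f g
        rw [ht3 ⟨q, hq⟩ ⟨r, hr⟩ ⟨s, hs⟩, ht3 ⟨q, hq⟩ ⟨r, hr⟩ ⟨s, hs⟩])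
      (by
        intro q hq r hr s hs f g
        rw [ht3 ⟨q, hq⟩ ⟨r, hr⟩ ⟨s, hs⟩, ht3 ⟨_, hR.conj_mem q hq g⟩ ⟨_, hR.conj_mem r hr g⟩
          ⟨_, hR.conj_mem s hs g⟩])
      (by
        intro u hu r hr f
        rw [ht2 ⟨u, hRR hu⟩ ⟨r, hr⟩, k1 _ (lift2 _ hu)])
      a ha
    have e := hτ ⟨a, haR⟩ 1
    simp only [mul_one] at e
    simp only [e, hb, k1 _ haRR, add_zero] at this
    exact hfin _ haRR (add_eq_right.mp this)
  -- step 3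
  have hker : ∀ x, QuotientGroup.mk' ⁅⁅⁅R, R⁆, R⁆, (⊤ : Subgroup F)⁆ x = 1 ↔
      x ∈ ⁅⁅⁅R, R⁆, R⁆, (⊤ : Subgroup F)⁆ := fun x => QuotientGroup.eq_one_iff x
  obtain ⟨c, k, T, hc, hk, hT1, hk0, hTc, hfin⟩ := level3_core R
    (QuotientGroup.mk' ⁅⁅⁅R, R⁆, R⁆, (⊤ : Subgroup F)⁆) (by
      intro u hu z
      rw [Subgroup.mem_center_iff]
      intro g
      obtain ⟨w, rfl⟩ := QuotientGroup.mk'_surjective _ g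
      symm
      rw [← commutatorElement_eq_one_iff_mul_comm, ← map_commutatorElement,
        ← map_commutatorElement, hker]
      refine Subgroup.commutator_mem_commutator (Subgroup.commutator_mem_commutator ?_ z.2) trivial
      rw [← map_comm2]
      exact ⟨u, hu, rfl⟩)
  have k1 : ∀ u ∈ ⁅(⊤ : Subgroup R), (⊤ : Subgroup R)⁆, ∀ y z, T u y z = 0 := fun u hu y z =>
    kills_comm (fun x => T x y z) (fun x w => hT1 x w y z) u hu
  have ht2 : ∀ (r s : R) (f : F), t2 (fun f => c (τ f)) r s f = k r s + T r s (τ f) := by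
    intro r s f
    have e : τ (r * s * f) = r * s * τ f := by rw [← Subgroup.coe_mul, hτ]
    simp only [t2, hτ, e]
    rw [hc (r * s), hc r (τ f), hc s (τ f), hc r s, hk]
    abel
  have ht3 : ∀ (q r s : R) (f : F), t3 (fun f => c (τ f)) q r s f = T q r s := by
    intro q r s f
    rw [t3, ← Subgroup.coe_mul, ht2, ht2, ht2, hT1, hk]; abel
  have := J_kill R (fun f => c (τ f))
    (by
      intro q hq r hr s hs f g
      rw [ht3 ⟨q, hq⟩ ⟨r, hr⟩ ⟨s, hs⟩, ht3 ⟨q, hq⟩ ⟨r, hr⟩ ⟨s, hs⟩])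
    (by
      intro q hq r hr s hs f g
      rw [ht3 ⟨q, hq⟩ ⟨r, hr⟩ ⟨s, hs⟩, ht3 ⟨_, hR.conj_mem q hq g⟩ ⟨_, hR.conj_mem r hr g⟩
        ⟨_, hR.conj_mem s hs g⟩]
      exact hTc g _ _ _ _ _ _ rfl rfl rfl)
    (by
      intro u hu r hr f
      rw [ht2 ⟨u, hRR hu⟩ ⟨r, hr⟩, k1 _ (lift2 _ hu), hk0 _ (lift2 _ hu), add_zero])
    a ha
  have e := hτ ⟨a, haR⟩ 1
  simp only [mul_one] at e
  simp only [e, hc, hk0 _ haRR, add_zero] at this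
  have h0 := add_eq_right.mp this
  have h1 := hfin _ haR3
  rw [h0, vv_zero] at h1
  rw [← hker, map_pow]
  exact h1.symm
end

/-- (5.4) in the paper: if `a ∈ D(F, 𝐫𝐫𝐫𝐟 + 𝐟𝐫𝐫𝐫 + Δ([R,R])𝐫)`,
then `a³ ∈ [R,R,R,F]`. -/
theorem cube_statement (F : Type) [Group F] [IsFreeGroup F]
    (R : Subgroup F) [R.Normal] (a : F)
    (ha : (MonoidAlgebra.of ℤ F a) - 1 ∈
      augI R * augI R * augI R * augI (⊤ : Subgroup F) +
        augI (⊤ : Subgroup F) * augI R * augI R * augI R +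
          aug ⁅R, R⁆ * augI R) :
    a ^ 3 ∈ ⁅⁅⁅R, R⁆, R⁆, (⊤ : Subgroup F)⁆ := by
  have : IsFreeGroup R := subgroupIsFreeOfIsFree R
  exact main_aux R a ha
end
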